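/- Let l = l(k) be a sequence of positive integers with l → ∞ and l = o(k^{1/2}). Then, as k → ∞, C(k,l) ~ k^{k-2}·k^{3l/2}·(e/(12l))^{l/2}·(3/√π)·l^{1/2}. -/

import Mathlib

open Filter Topology Real

/-- `connGraphCount k l` is the number of connected labeled graphs on `k` vertices
with `k - 1 + l` edges (i.e. complexity `l`). -/
noncomputable def connGraphCount (k l : ℕ) : ℕ :=
  Set.ncard {G : SimpleGraph (Fin k) | G.Connected ∧ G.edgeSet.ncard = k - 1 + l}

namespace CAsymp

/-- the area-type recursion -/
def It {R : Type*} [CommSemiring R] (q : R) : ℕ → ℕ → R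
  | 0, u => if u = 0 then 1 else 0
  | n + 1, u => if u ≤ n then
      ∑ c ∈ Finset.range (u + 1), (u.choose c : R) * q ^ (n - u) * It q n (u - c) else 0

/-- all vertices reachable from `A` -/
def Cov {V : Type} (G : SimpleGraph V) (A : Finset V) : Prop :=
  ∀ v, ∃ a ∈ A, G.Reachable a v

open Classical in
/-- weighted count of graphs with all vertices reachable from `A` -/
noncomputable def HH {R : Type*} [CommSemiring R] (w : R) (V : Type) [Fintype V]
    (A : Finset V) : R :=
  ∑ᶠ G : SimpleGraph V, if Cov G A then w ^ G.edgeSet.ncard else 0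

/-- extend a graph by a vertex -/
def extG {V : Type} (G : SimpleGraph V) (N : Finset V) : SimpleGraph (Option V) where
  Adj x y := match x, y with
    | none, none => False
    | none, some y => y ∈ N
    | some x, none => x ∈ N
    | some x, some y => G.Adj x y
  symm := ⟨by
    intro x y h
    cases x <;> cases y <;> simp_all [G.adj_comm]⟩
  loopless := ⟨by
    intro x h
    cases x <;> simp_all⟩

open Classical in
/-- decomposition of graphs on `Option V` -/
noncomputable def extEquiv (V : Type) [Fintype V] :
    SimpleGraph V × Finset V ≃ SimpleGraph (Option V) where
  toFun p := extG p.1 p.2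
  invFun G := (G.comap some, Finset.univ.filter fun x => G.Adj none (some x))
  left_inv := by
    rintro ⟨G, N⟩
    ext x y
    · simp [extG]
    · exact ⟨fun h => (Finset.mem_filter.1 h).2, fun h => Finset.mem_filter.2 ⟨Finset.mem_univ _, h⟩⟩
  right_inv := by
    intro G
    ext x y
    cases x <;> cases y <;> simp [extG, G.adj_comm]

lemma extG_card {V : Type} [Fintype V] (G : SimpleGraph V) (N : Finset V) :
    (extG G N).edgeSet.ncard = G.edgeSet.ncard + N.card := by
  have h : (extG G N).edgeSet = (Sym2.map some '' G.edgeSet) ∪ ((fun x => s(none, some x)) '' (N : Set V)) := by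
    ext e
    induction e using Sym2.ind with
    | _ x y =>
      simp only [SimpleGraph.mem_edgeSet, Set.mem_union, Set.mem_image]
      constructor
      · intro h
        cases x with
        | none => cases y with
          | none => simp [extG] at h
          | some y => right; exact ⟨y, h, rfl⟩
        | some x => cases y with
          | none => right; exact ⟨x, h, Sym2.eq_swap⟩
          | some y => left; exact ⟨s(x,y), h, rfl⟩
      · rintro (⟨e, he, h2⟩ | ⟨z, hz, h2⟩)
        · induction e using Sym2.ind with
          | _ a b =>
            rw [Sym2.map_mk] at h2
            rw [← SimpleGraph.mem_edgeSet, ← h2]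
            exact he
        · rw [← SimpleGraph.mem_edgeSet, ← h2]
          exact hz
  rw [h, Set.ncard_union_eq, Set.ncard_image_of_injective, Set.ncard_image_of_injective, Set.ncard_coe_finset]
  · intro x y hxy
    simpa using hxy
  · exact Sym2.map.injective (Option.some_injective V)
  · rw [Set.disjoint_left]
    rintro e ⟨e', he, rfl⟩ ⟨z, hz, h2⟩
    have : (none : Option V) ∈ Sym2.map some e' := by rw [← h2]; simp
    simp at this

lemma extG_cov {V : Type} [Fintype V] [DecidableEq V] (G : SimpleGraph V) (N : Finset V) (A' : Finset V) :
    Cov (extG G N) (Finset.insertNone A') ↔ Cov G (A' ∪ N) := by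
  constructor
  · intro h v
    obtain ⟨a, ha, hr⟩ := h (some v)
    have key : ∀ y, (extG G N).Reachable a y → ∀ v, y = some v → ∃ a ∈ A' ∪ N, G.Reachable a v := by
      intro y hy
      rw [SimpleGraph.reachable_iff_reflTransGen] at hy
      induction hy with
      | refl =>
        intro v hv
        subst hv
        exact ⟨v, by simp at ha; simp [ha], SimpleGraph.Reachable.refl _⟩
      | @tail b c hb hbc ih =>
        intro v hv
        subst hv
        cases b with
        | none => exact ⟨v, by simp [extG] at hbc; simp [hbc], SimpleGraph.Reachable.refl _⟩
        | some b =>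
          obtain ⟨a', ha', hr'⟩ := ih b rfl
          exact ⟨a', ha', hr'.trans (SimpleGraph.Adj.reachable hbc)⟩
    exact key _ hr v rfl
  · intro h v
    have hmap : ∀ x y, G.Reachable x y → (extG G N).Reachable (some x) (some y) := by
      intro x y hxy
      exact hxy.map (⟨some, fun {a b} hab => hab⟩ : G →g extG G N)
    cases v with
    | none => exact ⟨none, by simp, SimpleGraph.Reachable.refl _⟩
    | some v =>
      obtain ⟨a, ha, hr⟩ := h v
      rcases Finset.mem_union.1 ha with ha | ha
      · exact ⟨some a, by simpa using ha, hmap _ _ hr⟩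
      · refine ⟨none, by simp, SimpleGraph.Reachable.trans (SimpleGraph.Adj.reachable (v := some a) ?_) (hmap _ _ hr)⟩
        exact ha

lemma HH_equiv {R : Type*} [CommSemiring R] (w : R) {V V' : Type} [Fintype V] [Fintype V']
    (e : V ≃ V') (A : Finset V) :
    HH w V A = HH w V' (A.map e.toEmbedding) := by
  classical
  unfold HH
  rw [← finsum_comp_equiv e.simpleGraph]
  refine finsum_congr fun G => ?_
  have iso : G ≃g e.simpleGraph G := ⟨e, by intro a b; simp [Equiv.simpleGraph]⟩
  have h1 : Cov G A ↔ Cov (e.simpleGraph G) (A.map e.toEmbedding) := by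
    have hr : ∀ a b, (e.simpleGraph G).Reachable (e a) (e b) ↔ G.Reachable a b := by
      intro a b
      exact SimpleGraph.Iso.reachable_iff (φ := (⟨e, by intro a b; simp [Equiv.simpleGraph]⟩ : G ≃g e.simpleGraph G))
    constructor
    · intro h v
      obtain ⟨a, ha, hh⟩ := h (e.symm v)
      refine ⟨e a, by simpa using ha, ?_⟩
      rw [← e.apply_symm_apply v, hr]; exact hh
    · intro h v
      obtain ⟨a, ha, hh⟩ := h (e v)
      obtain ⟨b, hb, rfl⟩ := Finset.mem_map.1 ha
      exact ⟨b, hb, (hr _ _).1 hh⟩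
  have h2 : G.edgeSet.ncard = (e.simpleGraph G).edgeSet.ncard :=
    Set.ncard_congr' iso.mapEdgeSet
  simp only [h1, h2]

lemma HH_option {R : Type*} [CommSemiring R] (w : R) (V : Type) [Fintype V] [DecidableEq V] (A' : Finset V) :
    HH w (Option V) (Finset.insertNone A') = ∑ N : Finset V, w ^ N.card * HH w V (A' ∪ N) := by
  classical
  unfold HH
  rw [← finsum_comp_equiv (extEquiv V)]
  trans (∑ᶠ p : SimpleGraph V × Finset V, if Cov p.1 (A' ∪ p.2) then w ^ (p.1.edgeSet.ncard + p.2.card) else 0)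
  rotate_left
  · rw [finsum_eq_sum_of_fintype, Fintype.sum_prod_type_right]
    refine Finset.sum_congr rfl fun N _ => ?_
    rw [finsum_eq_sum_of_fintype, Finset.mul_sum]
    refine Finset.sum_congr rfl fun G _ => ?_
    split_ifs
    · ring
    · simp
  · refine finsum_congr ?_
    rintro ⟨G, N⟩
    have h2 := extG_cov G N A'
    simp only [extEquiv, Equiv.coe_fn_mk, extG_card]
    by_cases h : Cov G (A' ∪ N)
    · rw [if_pos h, if_pos]
      exact h2.2 h
    · rw [if_neg h, if_neg]
      intro h3; exact h (h2.1 h3)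

lemma sum_finset_split {R : Type*} [CommSemiring R] {V : Type} [Fintype V] [DecidableEq V] (A : Finset V)
    (f g : ℕ → R) :
    ∑ N : Finset V, f (N ∩ A).card * g (N ∩ Aᶜ).card =
      (∑ i ∈ Finset.range (A.card + 1), A.card.choose i • f i) *
      (∑ i ∈ Finset.range (Aᶜ.card + 1), Aᶜ.card.choose i • g i) := by
  rw [← Finset.sum_powerset_apply_card, ← Finset.sum_powerset_apply_card, Finset.sum_mul_sum, ← Finset.sum_product']
  refine Finset.sum_bij' (fun N _ => (N ∩ A, N ∩ Aᶜ)) (fun p _ => p.1 ∪ p.2) ?_ ?_ ?_ ?_ ?_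
  · intro N _
    simp [Finset.inter_subset_right]
  · intros; simp
  · intro N _
    simp only
    rw [← Finset.inter_union_distrib_left]; simp
  · rintro ⟨N1, N2⟩ h
    simp only [Finset.mem_product, Finset.mem_powerset] at h
    have h3 : ∀ x ∈ N2, x ∉ A := fun x hx => by simpa using h.2 hx
    ext x
    · simp only [Finset.mem_inter, Finset.mem_union]
      have := h3 x
      have := @h.1 x
      tauto
    · simp only [Finset.mem_inter, Finset.mem_union, Finset.mem_compl]
      have := h3 x
      have := @h.1 x
      tauto
  · intros; rfl

lemma HH_eq {R : Type*} [CommSemiring R] (w : R) (n : ℕ) : ∀ (V : Type) [Fintype V] [DecidableEq V],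
    Fintype.card V = n → ∀ A : Finset V, HH w V A = w ^ (Aᶜ.card) * It (1 + w) n Aᶜ.card := by
  classical
  induction n with
  | zero =>
    intro V _ _ hV A
    have : IsEmpty V := Fintype.card_eq_zero_iff.1 hV
    have hA : Aᶜ.card = 0 := by rw [Finset.eq_empty_of_isEmpty Aᶜ]; simp
    rw [hA]
    unfold HH
    have hc : ∀ G : SimpleGraph V, Cov G A := fun G v => isEmptyElim v
    have he : ∀ G : SimpleGraph V, G.edgeSet.ncard = 0 := by
      intro G
      rw [Set.ncard_eq_zero]
      exact Set.eq_empty_of_isEmpty _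
    rw [finsum_eq_sum_of_fintype]
    simp [hc, he, It]
  | succ n ih =>
    intro V _ _ hV A
    rcases A.eq_empty_or_nonempty with rfl | ⟨v, hv⟩
    · have : (∅ : Finset V)ᶜ.card = n + 1 := by simp [hV]
      rw [this]
      have hne : Nonempty V := Fintype.card_pos_iff.1 (by omega)
      simp [HH, It, Cov]
    · let V' := {x // x ≠ v}
      obtain ⟨e, hes, hen⟩ : ∃ e : V ≃ Option V', (∀ x, e.symm (some x) = x) ∧ e v = none :=
        ⟨(Equiv.optionSubtypeNe v).symm, fun x => by rw [Equiv.symm_symm]; exact Equiv.optionSubtypeNe_some v x,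
          Equiv.optionSubtypeNe_symm_self v⟩
      have hV' : Fintype.card V' = n := by
        have := Fintype.card_congr e
        rw [Fintype.card_option] at this
        omega
      set A' : Finset V' := Finset.univ.filter (fun x => (x : V) ∈ A) with hA'
      have hAA : A.map e.toEmbedding = Finset.insertNone A' := by
        ext x
        cases x with
        | none =>
          simp only [Finset.mem_map, Finset.none_mem_insertNone, iff_true]
          exact ⟨v, hv, hen⟩
        | some x =>
          simp only [Finset.mem_map, Finset.some_mem_insertNone]
          constructor
          · rintro ⟨a, ha, h⟩
            have : a = x := by
              have h' : e a = some x := h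
              rw [← e.eq_symm_apply] at h'
              rw [h', hes]
            simp [hA', ← this, ha]
          · intro h
            refine ⟨x, by simpa [hA'] using h, ?_⟩
            show e x = some x
            rw [← e.eq_symm_apply, hes]
      have hcard : A'ᶜ.card = Aᶜ.card := by
        have h1 : (A.map e.toEmbedding).card = A.card := Finset.card_map _
        rw [hAA, Finset.card_insertNone] at h1
        rw [Finset.card_compl, Finset.card_compl, hV', hV]; omega
      rw [HH_equiv w e A, hAA, HH_option]
      have hle : A'ᶜ.card ≤ n := by rw [← hV']; exact Finset.card_le_univ _
      have hAc : A'.card = n - A'ᶜ.card := by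
        rw [Finset.card_compl, hV']
        have : A'.card ≤ n := by rw [← hV']; exact Finset.card_le_univ _
        omega
      have step : ∀ N : Finset V', w ^ N.card * HH w V' (A' ∪ N) =
          w ^ (N ∩ A').card * (w ^ A'ᶜ.card * It (1 + w) n (A'ᶜ.card - (N ∩ A'ᶜ).card)) := by
        intro N
        rw [ih V' hV']
        have h1 : (A' ∪ N)ᶜ.card = A'ᶜ.card - (N ∩ A'ᶜ).card := by
          rw [Finset.compl_union, Finset.inter_comm N, ← Finset.card_sdiff_of_subset Finset.inter_subset_left]
          congr 1
          ext x; simp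
        have h2 : N.card = (N ∩ A').card + (N ∩ A'ᶜ).card := by
          rw [← Finset.card_union_of_disjoint, ← Finset.inter_union_distrib_left]
          · simp
          · exact Finset.disjoint_left.2 (by intro x; simp; tauto)
        have h3 : (N ∩ A'ᶜ).card ≤ A'ᶜ.card := Finset.card_le_card Finset.inter_subset_right
        rw [h1]
        calc w ^ N.card * (w ^ (A'ᶜ.card - (N ∩ A'ᶜ).card) * It (1 + w) n (A'ᶜ.card - (N ∩ A'ᶜ).card))
            = w ^ (N.card + (A'ᶜ.card - (N ∩ A'ᶜ).card)) * It (1 + w) n (A'ᶜ.card - (N ∩ A'ᶜ).card) := by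
              rw [pow_add]; ring
          _ = w ^ ((N ∩ A').card + A'ᶜ.card) * It (1 + w) n (A'ᶜ.card - (N ∩ A'ᶜ).card) := by
              congr 2; omega
          _ = _ := by rw [pow_add]; ring
      rw [Finset.sum_congr rfl (fun N _ => step N),
        sum_finset_split A' (fun i => w ^ i) (fun i => w ^ A'ᶜ.card * It (1 + w) n (A'ᶜ.card - i)), ← hcard]
      have hb : ∑ i ∈ Finset.range (A'.card + 1), A'.card.choose i • w ^ i = (1 + w) ^ (n - A'ᶜ.card) := by
        rw [← hAc, add_comm 1 w, add_pow]
        refine Finset.sum_congr rfl fun i _ => ?_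
        simp [mul_comm]
      rw [hb, It, if_pos hle, Finset.mul_sum, Finset.mul_sum]
      refine Finset.sum_congr rfl fun i _ => ?_
      rw [nsmul_eq_mul]; ring

lemma conn_iff_cov (k : ℕ) (G : SimpleGraph (Fin (k + 1))) : G.Connected ↔ Cov G {0} := by
  constructor
  · intro h v
    exact ⟨0, by simp, h.preconnected 0 v⟩
  · intro h
    have h0 : ∀ v, G.Reachable 0 v := fun v => by simpa using h v
    exact ⟨fun a b => (h0 a).symm.trans (h0 b)⟩

open Classical in
lemma conn_sum {R : Type*} [CommSemiring R] (w : R) (k : ℕ) :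
    ∑ᶠ G : SimpleGraph (Fin (k + 1)), (if G.Connected then w ^ G.edgeSet.ncard else 0) =
      w ^ k * It (1 + w) (k + 1) k := by
  have h := HH_eq w (k + 1) (Fin (k + 1)) (by simp) {0}
  have hc : ({0} : Finset (Fin (k + 1)))ᶜ.card = k := by
    rw [Finset.card_compl]; simp
  rw [hc] at h
  rw [← h]
  unfold HH
  refine finsum_congr fun G => ?_
  simp only [conn_iff_cov k G]

/-- generating polynomial identity -/
lemma It_eq_sum {K : Type*} [Field K] (w : K) (hw : w ≠ 0) (k : ℕ) (M' : ℕ) (hM' : Fintype.card (Sym2 (Fin (k + 1))) + 1 ≤ M') :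
    It (1 + w) (k + 1) k = ∑ l ∈ Finset.range M', (connGraphCount (k + 1) l : K) * w ^ l := by
  classical
  have h := conn_sum w k
  rw [finsum_eq_sum_of_fintype] at h
  have hle : ∀ G : SimpleGraph (Fin (k + 1)), G.Connected → k ≤ G.edgeSet.ncard := by
    intro G hG
    have := hG.card_vert_le_card_edgeSet_add_one
    rw [Nat.card_eq_fintype_card, Fintype.card_fin, Nat.card_coe_set_eq] at this
    omega
  have hub : ∀ G : SimpleGraph (Fin (k + 1)), G.edgeSet.ncard < M' := by
    intro G
    have : G.edgeSet.ncard ≤ Fintype.card (Sym2 (Fin (k + 1))) := by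
      rw [← Nat.card_eq_fintype_card, ← Set.ncard_univ]
      exact Set.ncard_le_ncard (Set.subset_univ _)
    omega
  have h2 : ∑ G : SimpleGraph (Fin (k + 1)), (if G.Connected then w ^ G.edgeSet.ncard else 0) =
      w ^ k * ∑ l ∈ Finset.range M', (connGraphCount (k + 1) l : K) * w ^ l := by
    have hcount : ∀ l, (connGraphCount (k + 1) l : K) =
        ∑ G : SimpleGraph (Fin (k + 1)), if (G.Connected ∧ G.edgeSet.ncard = k + l) then 1 else 0 := by
      intro l
      rw [Finset.sum_boole, connGraphCount]
      congr 1
      rw [← Set.ncard_coe_finset]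
      congr 1
      ext G; simp
    simp_rw [hcount, Finset.sum_mul]
    rw [Finset.sum_comm, Finset.mul_sum]
    refine Finset.sum_congr rfl fun G _ => ?_
    by_cases hG : G.Connected
    · have h3 := hle G hG
      have h4 := hub G
      rw [if_pos hG, Finset.sum_eq_single (G.edgeSet.ncard - k)]
      · rw [if_pos ⟨hG, by omega⟩, one_mul, ← pow_add]; congr 1; omega
      · intro b _ hb
        rw [if_neg, zero_mul]
        rintro ⟨_, h5⟩; omega
      · intro h5
        simp at h5; omega
    · simp [hG]
  rw [h2] at h
  exact (mul_left_cancel₀ (pow_ne_zero k hw) h).symm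

end CAsymp

namespace CAsymp

/-- convolution with the exponential -/
noncomputable def cv (u : ℝ) (f : ℕ → ℝ) (x : ℕ) : ℝ :=
  ∑ p ∈ Finset.HasAntidiagonal.antidiagonal x, u ^ p.1 / (p.1.factorial : ℝ) * f p.2

noncomputable def fE (u : ℕ → ℝ) : ℕ → ℕ → ℝ
  | 0, x => if x = 0 then 1 else 0
  | j + 1, x => if x ≤ j then cv (u j) (fE u j) x else 0

noncomputable def fS (u : ℕ → ℝ) : ℕ → ℕ → ℝ
  | 0, x => if x = 0 then 1 else 0
  | j + 1, x => if j + 1 ≤ x then cv (u j) (fS u j) x else 0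

/-- exponential series -/
noncomputable def ES (u : ℝ) : PowerSeries ℝ := PowerSeries.mk fun c => u ^ c / (c.factorial : ℝ)

lemma cv_eq_coeff (u : ℝ) (f : ℕ → ℝ) (x : ℕ) :
    cv u f x = PowerSeries.coeff x (ES u * PowerSeries.mk f) := by
  rw [PowerSeries.coeff_mul]
  simp [cv, ES]

lemma ES_eq (u : ℝ) : ES u = PowerSeries.rescale u (PowerSeries.exp ℝ) := by
  ext n
  simp [ES, PowerSeries.coeff_exp, div_eq_mul_inv]

lemma ES_add (u v : ℝ) : ES u * ES v = ES (u + v) := by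
  rw [ES_eq, ES_eq, ES_eq]
  exact PowerSeries.exp_mul_exp_eq_exp_add u v

lemma cv_exp (u W : ℝ) (x : ℕ) :
    cv u (fun x => W ^ x / (x.factorial : ℝ)) x = (W + u) ^ x / (x.factorial : ℝ) := by
  rw [cv_eq_coeff]
  change PowerSeries.coeff x (ES u * ES W) = _
  rw [ES_add, add_comm]
  simp [ES]

/-- coefficients of `t e^{Wt}` -/
noncomputable def E1 (W : ℝ) (x : ℕ) : ℝ := PowerSeries.coeff x (ES W * PowerSeries.X)

lemma cv_E1 (u W : ℝ) (x : ℕ) : cv u (E1 W) x = E1 (W + u) x := by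
  rw [cv_eq_coeff]
  have : PowerSeries.mk (E1 W) = ES W * PowerSeries.X := by ext n; simp [E1]
  rw [this, ← mul_assoc, ES_add, add_comm]; rfl

lemma E1_succ (W : ℝ) (x : ℕ) : E1 W (x + 1) = W ^ x / (x.factorial : ℝ) := by
  rw [E1, PowerSeries.coeff_succ_mul_X]; simp [ES]

lemma E1_zero (W : ℝ) : E1 W 0 = 0 := by
  rw [E1, PowerSeries.coeff_zero_mul_X]

lemma E1_eq (W : ℝ) (hW : W ≠ 0) (x : ℕ) : E1 W x = x / W * (W ^ x / (x.factorial : ℝ)) := by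
  cases x with
  | zero => simp [E1_zero]
  | succ x =>
    rw [E1_succ, Nat.factorial_succ, pow_succ]
    have : (x.factorial : ℝ) ≠ 0 := by positivity
    push_cast
    field_simp

lemma cv_mono {u : ℝ} (hu : 0 ≤ u) {f g : ℕ → ℝ} {x : ℕ} (h : ∀ y ≤ x, f y ≤ g y) :
    cv u f x ≤ cv u g x := by
  unfold cv
  refine Finset.sum_le_sum fun p hp => ?_
  rw [Finset.HasAntidiagonal.mem_antidiagonal] at hp
  exact mul_le_mul_of_nonneg_left (h _ (by omega)) (by positivity)

lemma cv_nonneg {u : ℝ} (hu : 0 ≤ u) {f : ℕ → ℝ} (h : ∀ y, 0 ≤ f y) (x : ℕ) : 0 ≤ cv u f x := by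
  unfold cv
  exact Finset.sum_nonneg fun p _ => mul_nonneg (by positivity) (h _)

lemma cv_lin (u : ℝ) (f g : ℕ → ℝ) (a b : ℝ) (x : ℕ) :
    cv u (fun y => a * f y + b * g y) x = a * cv u f x + b * cv u g x := by
  unfold cv
  rw [Finset.mul_sum, Finset.mul_sum, ← Finset.sum_add_distrib]
  refine Finset.sum_congr rfl fun p _ => by ring

lemma cv_deriv (u : ℝ) (f : ℕ → ℝ) (x : ℕ) :
    ((x : ℝ) + 1) * cv u f (x + 1) = u * cv u f x + cv u (fun y => ((y : ℝ) + 1) * f (y + 1)) x := by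
  have hE : PowerSeries.derivative ℝ (ES u) = PowerSeries.C u * ES u := by
    ext n
    rw [PowerSeries.coeff_derivative, PowerSeries.coeff_C_mul]
    simp only [ES, PowerSeries.coeff_mk, Nat.factorial_succ, pow_succ]
    push_cast
    field_simp
  have hF : PowerSeries.derivative ℝ (PowerSeries.mk f) = PowerSeries.mk (fun y => ((y : ℝ) + 1) * f (y + 1)) := by
    ext n
    rw [PowerSeries.coeff_derivative]; simp [mul_comm]
  have h := congrArg (PowerSeries.coeff x) ((PowerSeries.derivative ℝ).leibniz (ES u) (PowerSeries.mk f))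
  rw [PowerSeries.coeff_derivative, hE, hF, ← cv_eq_coeff] at h
  rw [mul_comm, h, map_add, smul_eq_mul, smul_eq_mul, ← cv_eq_coeff, add_comm,
    mul_comm (PowerSeries.mk f), mul_assoc, PowerSeries.coeff_C_mul, ← cv_eq_coeff]

lemma fE_nonneg {u : ℕ → ℝ} (hu : ∀ j, 0 ≤ u j) (j x : ℕ) : 0 ≤ fE u j x := by
  induction j generalizing x with
  | zero => rw [fE]; split_ifs <;> norm_num
  | succ j ih => rw [fE]; split_ifs; exacts [cv_nonneg (hu j) ih x, le_rfl]

lemma fS_nonneg {u : ℕ → ℝ} (hu : ∀ j, 0 ≤ u j) (j x : ℕ) : 0 ≤ fS u j x := by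
  induction j generalizing x with
  | zero => rw [fS]; split_ifs <;> norm_num
  | succ j ih => rw [fS]; split_ifs; exacts [cv_nonneg (hu j) ih x, le_rfl]

lemma fS_zero_of_lt {u : ℕ → ℝ} {j x : ℕ} (h : x < j) : fS u j x = 0 := by
  cases j with
  | zero => omega
  | succ j => rw [fS, if_neg (by omega)]

lemma fE_zero_of_le {u : ℕ → ℝ} {j x : ℕ} (hj : 0 < j) (h : j ≤ x) : fE u j x = 0 := by
  cases j with
  | zero => omega
  | succ j => rw [fE, if_neg (by omega)]

/-- partial sums of weights -/
noncomputable def Ws (u : ℕ → ℝ) (j : ℕ) : ℝ := ∑ i ∈ Finset.range j, u i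

lemma Ws_succ (u : ℕ → ℝ) (j : ℕ) : Ws u (j + 1) = Ws u j + u j := Finset.sum_range_succ _ _
lemma Ws_zero (u : ℕ → ℝ) : Ws u 0 = 0 := Finset.sum_range_zero _

lemma pow_zero_fact (x : ℕ) : (0 : ℝ) ^ x / (x.factorial : ℝ) = if x = 0 then 1 else 0 := by
  cases x <;> simp

lemma fS_le {u : ℕ → ℝ} (hu : ∀ j, 0 ≤ u j) (j x : ℕ) :
    fS u j x ≤ Ws u j ^ x / (x.factorial : ℝ) := by
  induction j generalizing x with
  | zero => rw [fS, Ws_zero, pow_zero_fact]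
  | succ j ih =>
    rw [fS, Ws_succ, ← cv_exp]
    split_ifs
    · exact cv_mono (hu j) fun y _ => ih y
    · refine cv_nonneg (hu j) (fun y => ?_) x
      have : 0 ≤ Ws u j := Finset.sum_nonneg fun i _ => hu i
      positivity

lemma fE_le_exp {u : ℕ → ℝ} (hu : ∀ j, 0 ≤ u j) (j x : ℕ) :
    fE u j x ≤ Ws u j ^ x / (x.factorial : ℝ) := by
  induction j generalizing x with
  | zero => rw [fE, Ws_zero, pow_zero_fact]
  | succ j ih =>
    rw [fE, Ws_succ, ← cv_exp]
    split_ifs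
    · exact cv_mono (hu j) fun y _ => ih y
    · refine cv_nonneg (hu j) (fun y => ?_) x
      have : 0 ≤ Ws u j := Finset.sum_nonneg fun i _ => hu i
      positivity

lemma fS_mono {u : ℕ → ℝ} (hu : ∀ j, 0 ≤ u j) (j x : ℕ) :
    Ws u j * fS u j x ≤ ((x : ℝ) + 1) * fS u j (x + 1) := by
  induction j generalizing x with
  | zero => simp [fS, Ws_zero]
  | succ j ih =>
    rw [Ws_succ, fS, fS]
    by_cases h : j + 1 ≤ x
    · rw [if_pos h, if_pos (by omega), cv_deriv, add_mul, add_comm]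
      have h2 : Ws u j * cv (u j) (fS u j) x ≤ cv (u j) (fun y => ((y : ℝ) + 1) * fS u j (y + 1)) x := by
        have := cv_lin (u j) (fS u j) (fS u j) (Ws u j) 0 x
        rw [zero_mul, add_zero] at this
        rw [← this]
        refine cv_mono (hu j) fun y _ => ?_
        simpa using ih y
      linarith
    · rw [if_neg h, mul_zero]
      split_ifs
      · exact mul_nonneg (by positivity) (cv_nonneg (hu j) (fS_nonneg hu j) _)
      · simp

/-- scaling -/
lemma cv_scale (u c : ℝ) (f : ℕ → ℝ) (x : ℕ) :
    cv (c * u) (fun y => c ^ y * f y) x = c ^ x * cv u f x := by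
  unfold cv
  rw [Finset.mul_sum]
  refine Finset.sum_congr rfl fun p hp => ?_
  rw [Finset.HasAntidiagonal.mem_antidiagonal] at hp
  rw [← hp, mul_pow, pow_add]; ring

lemma fS_scale (u : ℕ → ℝ) (c : ℝ) (j x : ℕ) :
    fS (fun i => c * u i) j x = c ^ x * fS u j x := by
  induction j generalizing x with
  | zero => rw [fS, fS]; split_ifs with h <;> simp [h]
  | succ j ih =>
    rw [fS, fS]
    split_ifs
    · rw [← cv_scale]; congr 1; ext y; exact ih y
    · simp

lemma It_fE (q : ℝ) (n u : ℕ) :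
    It q n u * q ^ (n * u) = q ^ (n.choose 2) * (u.factorial : ℝ) * fE (fun j => q ^ j) n u := by
  induction n generalizing u with
  | zero => rw [It, fE]; split_ifs with h <;> simp [h]
  | succ n ih =>
    rw [It, fE]
    split_ifs with h
    · have h1 : (n + 1).choose 2 = n.choose 2 + n := by
        rw [Nat.choose_succ_succ' n 1]; simp [add_comm]
      rw [h1, cv, Finset.Nat.sum_antidiagonal_eq_sum_range_succ
        (fun c y => (q ^ n) ^ c / (c.factorial : ℝ) * fE (fun j => q ^ j) n y), Finset.mul_sum, Finset.sum_mul]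
      refine Finset.sum_congr rfl fun c hc => ?_
      have hc' : c ≤ u := by simpa [Nat.lt_succ_iff] using hc
      have h2 := ih (u - c)
      have h3 : (u.factorial : ℝ) = u.choose c * c.factorial * (u - c).factorial := by
        rw [← Nat.choose_mul_factorial_mul_factorial hc']; push_cast; ring
      have h4 : q ^ (n - u) * q ^ ((n + 1) * u) = q ^ n * (q ^ n) ^ c * q ^ (n * (u - c)) := by
        rw [← pow_mul, ← pow_add, ← pow_add, ← pow_add]
        congr 1
        obtain ⟨d, rfl⟩ := Nat.exists_eq_add_of_le hc'
        obtain ⟨e, rfl⟩ := Nat.exists_eq_add_of_le h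
        simp only [Nat.add_sub_cancel_left]; ring
      have h5 : (c.factorial : ℝ) ≠ 0 := by positivity
      calc (u.choose c : ℝ) * q ^ (n - u) * It q n (u - c) * q ^ ((n + 1) * u)
          = u.choose c * (q ^ (n - u) * q ^ ((n + 1) * u)) * It q n (u - c) := by ring
        _ = u.choose c * (q ^ n * (q ^ n) ^ c) * (It q n (u - c) * q ^ (n * (u - c))) := by rw [h4]; ring
        _ = _ := by rw [h2, h3, pow_add]; field_simp
    · simp

lemma fE_split (u : ℕ → ℝ) (k h : ℕ) (hk : h + 1 ≤ k) :
    fE u k (k - 1) = ∑ p ∈ Finset.HasAntidiagonal.antidiagonal (k - 1),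
      fS (fun j => u (k - 1 - j)) h p.1 * fE u (k - h) p.2 := by
  induction h with
  | zero =>
    rw [Finset.sum_eq_single (0, k - 1)]
    · simp [fS]
    · rintro ⟨x, z⟩ hp hne
      rw [Finset.HasAntidiagonal.mem_antidiagonal] at hp
      have : x ≠ 0 := by rintro rfl; apply hne; simp at hp; simp [hp]
      simp [fS, this]
    · intro hn; simp at hn
  | succ h ih =>
    rw [ih (by omega)]
    obtain ⟨j, hj⟩ : ∃ j, k - h = j + 1 := ⟨k - h - 1, by omega⟩
    have hj2 : k - (h + 1) = j := by omega
    have hj3 : k - 1 - h = j := by omega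
    rw [hj, hj2]
    set S := fS (fun j => u (k - 1 - j))
    trans ∑ p ∈ Finset.HasAntidiagonal.antidiagonal (k - 1), S h p.1 * cv (u j) (fE u j) p.2
    · refine Finset.sum_congr rfl fun p hp => ?_
      rw [Finset.HasAntidiagonal.mem_antidiagonal] at hp
      by_cases h1 : p.2 ≤ j
      · rw [fE, if_pos h1]
      · have : S h p.1 = 0 := fS_zero_of_lt (by omega)
        rw [this]; simp
    trans ∑ p ∈ Finset.HasAntidiagonal.antidiagonal (k - 1), cv (u j) (S h) p.1 * fE u j p.2
    · have e1 := PowerSeries.coeff_mul (k - 1) (PowerSeries.mk (S h)) (ES (u j) * PowerSeries.mk (fE u j))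
      have e2 := PowerSeries.coeff_mul (k - 1) (ES (u j) * PowerSeries.mk (S h)) (PowerSeries.mk (fE u j))
      simp only [← cv_eq_coeff, PowerSeries.coeff_mk] at e1 e2
      rw [← e1, ← e2]
      congr 1; ring
    · refine Finset.sum_congr rfl fun p hp => ?_
      rw [Finset.HasAntidiagonal.mem_antidiagonal] at hp
      by_cases h1 : h + 1 ≤ p.1
      · have : S (h + 1) p.1 = cv (u j) (S h) p.1 := by
          simp only [S]; rw [fS, if_pos h1, hj3]
        rw [this]
      · have : fE u j p.2 = 0 := fE_zero_of_le (by omega) (by omega)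
        rw [this]; simp

end CAsymp

namespace CAsymp

lemma Ws_nonneg {u : ℕ → ℝ} (hu : ∀ j, 0 ≤ u j) (j : ℕ) : 0 ≤ Ws u j :=
  Finset.sum_nonneg fun i _ => hu i

lemma Ws_ge {u : ℕ → ℝ} (hu : ∀ j, 1 ≤ u j) (j : ℕ) : (j : ℝ) ≤ Ws u j := by
  induction j with
  | zero => simp [Ws_zero]
  | succ j ih => rw [Ws_succ]; push_cast; linarith [hu j]

lemma end_ub {u : ℕ → ℝ} (hu : ∀ j, 1 ≤ u j) (j : ℕ) : ∀ x ≤ j,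
    fE u j x ≤ 1 * (Ws u j ^ x / (x.factorial : ℝ)) + (-1) * E1 (Ws u j) x := by
  have hu0 : ∀ j, 0 ≤ u j := fun j => by linarith [hu j]
  induction j with
  | zero =>
    intro x hx
    obtain rfl : x = 0 := by omega
    simp [fE, E1_zero]
  | succ j ih =>
    intro x hx
    rw [fE]
    split_ifs with h
    · rw [Ws_succ, ← cv_exp, ← cv_E1, ← cv_lin]
      exact cv_mono (hu0 j) fun y hy => ih y (by omega)
    · obtain rfl : x = j + 1 := by omega
      have hW := Ws_ge hu (j + 1)
      have hW0 : 0 < Ws u (j + 1) := lt_of_lt_of_le (by positivity) hW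
      rw [E1_eq _ hW0.ne']
      have h1 : ((j + 1 : ℕ) : ℝ) / Ws u (j + 1) ≤ 1 := by rw [div_le_one hW0]; exact hW
      have h2 : 0 ≤ Ws u (j + 1) ^ (j + 1) / ((j + 1).factorial : ℝ) := by positivity
      nlinarith

lemma end_lb1 {u : ℕ → ℝ} (hu : ∀ j, 0 < u j) (hm : Monotone u) (j : ℕ) : 0 < j → ∀ x,
    1 * (Ws u j ^ x / (x.factorial : ℝ)) + (-(Ws u j / j)) * E1 (Ws u j) x ≤ fE u j x := by
  have hu0 : ∀ j, 0 ≤ u j := fun j => (hu j).le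
  have hWpos : ∀ j, 0 < j → 0 < Ws u j := by
    intro j hj
    exact Finset.sum_pos (fun i _ => hu i) ⟨0, by simpa using hj⟩
  have hWle : ∀ j, Ws u j ≤ j * u j := by
    intro j
    calc Ws u j ≤ ∑ i ∈ Finset.range j, u j := Finset.sum_le_sum fun i hi => hm (by simp at hi; omega)
      _ = j * u j := by simp
  have hneg : ∀ j, 0 < j → ∀ x, j ≤ x → 1 * (Ws u j ^ x / (x.factorial : ℝ)) + (-(Ws u j / j)) * E1 (Ws u j) x ≤ 0 := by
    intro j hj x hx
    have hW0 := hWpos j hj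
    have hj' : (0 : ℝ) < j := by exact_mod_cast hj
    have hx' : (j : ℝ) ≤ x := by exact_mod_cast hx
    rw [E1_eq _ hW0.ne']
    have h2 : 0 ≤ Ws u j ^ x / (x.factorial : ℝ) := by positivity
    have h3 : Ws u j / j * (x / Ws u j * (Ws u j ^ x / (x.factorial : ℝ))) = x / j * (Ws u j ^ x / (x.factorial : ℝ)) := by
      field_simp
    have h4 : 1 ≤ (x : ℝ) / j := by rw [le_div_iff₀ hj']; linarith
    rw [neg_mul, h3]; nlinarith
  induction j with
  | zero => intro h; omega
  | succ j ih =>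
    intro _ x
    by_cases h : x ≤ j
    · rw [fE, if_pos h]
      rcases Nat.eq_zero_or_pos j with rfl | hj
      · obtain rfl : x = 0 := by omega
        simp [E1_zero, cv, fE]
      · have h1 : cv (u j) (fun y => 1 * (Ws u j ^ y / (y.factorial : ℝ)) + (-(Ws u j / j)) * E1 (Ws u j) y) x ≤
            cv (u j) (fE u j) x := cv_mono (hu0 j) fun y _ => ih hj y
        refine le_trans ?_ h1
        rw [cv_lin, cv_exp, cv_E1, ← Ws_succ]
        have hE : 0 ≤ E1 (Ws u (j + 1)) x := by
          rw [E1_eq _ (hWpos (j+1) (by omega)).ne']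
          have := hWpos (j+1) (by omega)
          positivity
        have hj' : (0 : ℝ) < j := by exact_mod_cast hj
        have h2 : Ws u j / j ≤ Ws u (j + 1) / (j + 1 : ℕ) := by
          rw [Ws_succ, div_le_div_iff₀ hj' (by positivity)]
          push_cast
          nlinarith [hWle j]
        nlinarith
    · refine (hneg (j + 1) (by omega) x (by omega)).trans (fE_nonneg hu0 _ _)

lemma end_lb2 {u : ℕ → ℝ} (hu : ∀ j, 0 < u j) (hm : Monotone u) (m H : ℕ) (hm0 : 0 < m)
    (v D : ℝ) (hv : 0 ≤ v) (hD : 0 ≤ D)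
    (hcond : ∀ j, m ≤ j → j ≤ H → 1 - j * (Ws u m / m) / Ws u j ≤ D * (1 + v / Ws u j) ^ j)
    (j : ℕ) (hmj : m ≤ j) : j ≤ H → ∀ x,
    1 * (1 * (Ws u j ^ x / (x.factorial : ℝ)) + (-(Ws u m / m)) * E1 (Ws u j) x) +
      (-D) * ((Ws u j + v) ^ x / (x.factorial : ℝ)) ≤ fE u j x := by
  have hu0 : ∀ j, 0 ≤ u j := fun j => (hu j).le
  have hWpos : ∀ j, 0 < j → 0 < Ws u j := by
    intro j hj
    exact Finset.sum_pos (fun i _ => hu i) ⟨0, by simpa using hj⟩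
  have hneg : ∀ j, m ≤ j → j ≤ H → ∀ x, j ≤ x →
     1 * (1 * (Ws u j ^ x / (x.factorial : ℝ)) + (-(Ws u m / m)) * E1 (Ws u j) x) +
      (-D) * ((Ws u j + v) ^ x / (x.factorial : ℝ)) ≤ 0 := by
    intro j hj hjH x hx
    have hW0 := hWpos j (by omega)
    have hWm := hWpos m hm0
    have hm' : (0 : ℝ) < m := by exact_mod_cast hm0
    have hx' : (j : ℝ) ≤ x := by exact_mod_cast hx
    rw [E1_eq _ hW0.ne']
    have h2 : 0 ≤ Ws u j ^ x / (x.factorial : ℝ) := by positivity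
    have h3 : (Ws u j + v) ^ x = Ws u j ^ x * (1 + v / Ws u j) ^ x := by
      rw [← mul_pow]; congr 1; field_simp
    have h4 : (1 + v / Ws u j) ^ j ≤ (1 + v / Ws u j) ^ x :=
      pow_le_pow_right₀ (by linarith [div_nonneg hv hW0.le]) hx
    have h5 := hcond j hj hjH
    have h6 : (j : ℝ) * (Ws u m / m) / Ws u j ≤ x * (Ws u m / m) / Ws u j := by gcongr
    have h7 : D * (1 + v / Ws u j) ^ j ≤ D * (1 + v / Ws u j) ^ x := mul_le_mul_of_nonneg_left h4 hD
    have h8 : 1 - (x : ℝ) * (Ws u m / m) / Ws u j - D * (1 + v / Ws u j) ^ x ≤ 0 := by linarith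
    have h9 := mul_nonpos_of_nonpos_of_nonneg h8 h2
    rw [h3]
    refine le_trans (le_of_eq ?_) h9
    ring
  induction j, hmj using Nat.le_induction with
  | base =>
    intro _ x
    have := end_lb1 hu hm m hm0 x
    have h2 : 0 ≤ D * ((Ws u m + v) ^ x / (x.factorial : ℝ)) := by
      have := hWpos m hm0
      positivity
    linarith
  | succ j hmj ih =>
    intro hjH x
    by_cases h : x ≤ j
    · rw [fE, if_pos h]
      refine le_trans ?_ (cv_mono (hu0 j) fun y _ => ih (by omega) y)
      have e : Ws u (j + 1) + v = (Ws u j + v) + u j := by rw [Ws_succ]; ring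
      rw [cv_lin (u j) (fun y => 1 * (Ws u j ^ y / (y.factorial : ℝ)) + (-(Ws u m / m)) * E1 (Ws u j) y)
        (fun y => (Ws u j + v) ^ y / (y.factorial : ℝ)), cv_lin, cv_exp, cv_E1, cv_exp, ← Ws_succ, e]
    · exact (hneg (j + 1) (by omega) hjH x (by omega)).trans (fE_nonneg hu0 _ _)

/-- normalized end probability -/
noncomputable def e2 (u : ℕ → ℝ) (H z : ℕ) : ℝ := fE u H z * (z.factorial : ℝ) / Ws u H ^ z
/-- normalized start probability -/
noncomputable def e1 (u : ℕ → ℝ) (h x : ℕ) : ℝ := fS u h x * (x.factorial : ℝ) / Ws u h ^ x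

lemma e2_nonneg {u : ℕ → ℝ} (hu : ∀ j, 0 ≤ u j) (H z : ℕ) : 0 ≤ e2 u H z := by
  have := fE_nonneg hu H z
  have := Ws_nonneg hu H
  unfold e2; positivity

lemma e1_nonneg {u : ℕ → ℝ} (hu : ∀ j, 0 ≤ u j) (H z : ℕ) : 0 ≤ e1 u H z := by
  have := fS_nonneg hu H z
  have := Ws_nonneg hu H
  unfold e1; positivity

lemma e1_le_one {u : ℕ → ℝ} (hu : ∀ j, 0 ≤ u j) (H z : ℕ) (hW : 0 < Ws u H) : e1 u H z ≤ 1 := by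
  have := fS_le hu H z
  unfold e1
  rw [div_le_one (by positivity)]
  rwa [le_div_iff₀ (by positivity)] at this

lemma e1_mono {u : ℕ → ℝ} (hu : ∀ j, 0 ≤ u j) (H : ℕ) (hW : 0 < Ws u H) : Monotone (e1 u H) := by
  refine monotone_nat_of_le_succ fun x => ?_
  have := fS_mono hu H x
  unfold e1
  rw [Nat.factorial_succ, pow_succ, div_le_div_iff₀ (by positivity) (by positivity)]
  push_cast
  have h2 : 0 ≤ (x.factorial : ℝ) * Ws u H ^ x := by positivity
  nlinarith [mul_le_mul_of_nonneg_left this h2]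

lemma e2_ub {u : ℕ → ℝ} (hu : ∀ j, 1 ≤ u j) (H z : ℕ) (hH : 0 < H) :
    e2 u H z ≤ max 0 (1 - z / Ws u H) := by
  have hW := Ws_ge hu H
  have hW0 : 0 < Ws u H := lt_of_lt_of_le (by positivity) hW
  by_cases h : z ≤ H
  · refine le_max_of_le_right ?_
    have := end_ub hu H z h
    rw [E1_eq _ hW0.ne'] at this
    unfold e2
    rw [div_le_iff₀ (by positivity)]
    calc fE u H z * (z.factorial : ℝ) ≤ _ := mul_le_mul_of_nonneg_right this (by positivity)
      _ = _ := by field_simp; ring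
  · refine le_max_of_le_left ?_
    rw [e2, fE_zero_of_le hH (by omega)]; simp

lemma e2_lb {u : ℕ → ℝ} (hu : ∀ j, 0 < u j) (hm : Monotone u) (m H : ℕ) (hm0 : 0 < m) (hmH : m ≤ H)
    (v D : ℝ) (hv : 0 ≤ v) (hD : 0 ≤ D)
    (hcond : ∀ j, m ≤ j → j ≤ H → 1 - j * (Ws u m / m) / Ws u j ≤ D * (1 + v / Ws u j) ^ j) (z : ℕ) :
    1 - z * (Ws u m / m) / Ws u H - D * (1 + v / Ws u H) ^ z ≤ e2 u H z := by
  have hW0 : 0 < Ws u H :=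
    Finset.sum_pos (fun i _ => hu i) ⟨0, by simp; omega⟩
  have := end_lb2 hu hm m H hm0 v D hv hD hcond H hmH le_rfl z
  rw [E1_eq _ hW0.ne'] at this
  unfold e2
  rw [le_div_iff₀ (by positivity)]
  refine le_trans (le_of_eq ?_) (mul_le_mul_of_nonneg_right this (by positivity))
  have h3 : (Ws u H + v) ^ z = Ws u H ^ z * (1 + v / Ws u H) ^ z := by
    rw [← mul_pow]; congr 1; field_simp
  rw [h3]
  field_simp
  ring

end CAsymp

namespace CAsymp

noncomputable def Ph (u : ℕ → ℝ) (j : ℕ) (t : ℝ) : ℝ := ∑' x, fS u j x * t ^ x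

lemma summ_exp (t : ℝ) : Summable fun x : ℕ => t ^ x / (x.factorial : ℝ) :=
  Real.summable_pow_div_factorial t

lemma fS_summable {u : ℕ → ℝ} (hu : ∀ j, 0 ≤ u j) (j : ℕ) {t : ℝ} (ht : 0 ≤ t) :
    Summable fun x => fS u j x * t ^ x := by
  refine Summable.of_nonneg_of_le (fun x => mul_nonneg (fS_nonneg hu j x) (by positivity)) (fun x => ?_)
    (summ_exp (Ws u j * t))
  calc fS u j x * t ^ x ≤ Ws u j ^ x / (x.factorial : ℝ) * t ^ x :=
        mul_le_mul_of_nonneg_right (fS_le hu j x) (by positivity)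
    _ = _ := by rw [mul_pow]; ring

lemma Ph_nonneg {u : ℕ → ℝ} (hu : ∀ j, 0 ≤ u j) (j : ℕ) {t : ℝ} (ht : 0 ≤ t) : 0 ≤ Ph u j t :=
  tsum_nonneg fun x => mul_nonneg (fS_nonneg hu j x) (by positivity)

lemma Ph_succ {u : ℕ → ℝ} (hu : ∀ j, 0 ≤ u j) (j : ℕ) {t : ℝ} (ht : 0 ≤ t) :
    Ph u (j + 1) t = exp (u j * t) * Ph u j t - cv (u j) (fS u j) j * t ^ j := by
  have h1 : Summable fun x : ℕ => ‖(u j * t) ^ x / (x.factorial : ℝ)‖ := (summ_exp _).norm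
  have h2 : Summable fun x => ‖fS u j x * t ^ x‖ := (fS_summable hu j ht).norm
  have hexp : exp (u j * t) = ∑' x : ℕ, (u j * t) ^ x / (x.factorial : ℝ) := by
    rw [Real.exp_eq_exp_ℝ, NormedSpace.exp_eq_tsum_div]
  have hc := tsum_mul_tsum_eq_tsum_sum_antidiagonal_of_summable_norm h1 h2
  have hs := (summable_norm_sum_mul_antidiagonal_of_summable_norm h1 h2).of_norm
  have hterm : ∀ x, ∑ kl ∈ Finset.HasAntidiagonal.antidiagonal x,
      (u j * t) ^ kl.1 / (kl.1.factorial : ℝ) * (fS u j kl.2 * t ^ kl.2) = cv (u j) (fS u j) x * t ^ x := by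
    intro x
    rw [cv, Finset.sum_mul]
    refine Finset.sum_congr rfl fun p hp => ?_
    rw [Finset.HasAntidiagonal.mem_antidiagonal] at hp
    rw [← hp, mul_pow, pow_add]; ring
  simp_rw [hterm] at hc hs
  rw [hexp]
  unfold Ph
  rw [hc, hs.tsum_eq_add_tsum_ite j, add_sub_cancel_left]
  refine tsum_congr fun x => ?_
  rw [fS]
  split_ifs with h3 h4 h4
  · omega
  · rfl
  · simp
  · have : cv (u j) (fS u j) x = 0 := by
      unfold cv
      refine Finset.sum_eq_zero fun p hp => ?_
      rw [Finset.HasAntidiagonal.mem_antidiagonal] at hp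
      rw [fS_zero_of_lt (by omega), mul_zero]
    rw [this]

noncomputable def AA (u : ℕ → ℝ) (j : ℕ) (t : ℝ) : ℝ := exp (-Ws u j) * t * Ph u j t / t ^ j

noncomputable def kp (u : ℕ → ℝ) (j : ℕ) : ℝ := exp (-Ws u (j + 1)) * cv (u j) (fS u j) j

lemma AA_zero (u : ℕ → ℝ) (t : ℝ) : AA u 0 t = t := by
  have : Ph u 0 t = 1 := by
    unfold Ph
    rw [tsum_eq_single 0]
    · simp [fS]
    · intro x hx; simp [fS, hx]
  simp [AA, this, Ws_zero]

lemma kp_nonneg {u : ℕ → ℝ} (hu : ∀ j, 0 ≤ u j) (j : ℕ) : 0 ≤ kp u j :=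
  mul_nonneg (exp_pos _).le (cv_nonneg (hu j) (fS_nonneg hu j) _)

lemma AA_nonneg {u : ℕ → ℝ} (hu : ∀ j, 0 ≤ u j) (j : ℕ) {t : ℝ} (ht : 0 < t) : 0 ≤ AA u j t := by
  have := Ph_nonneg hu j ht.le
  unfold AA; positivity

lemma AA_succ {u : ℕ → ℝ} (hu : ∀ j, 0 ≤ u j) (j : ℕ) {t : ℝ} (ht : 0 < t) :
    AA u (j + 1) t = exp (u j * (t - 1)) / t * AA u j t - kp u j := by
  have h : exp (u j * (t - 1)) = exp (-u j) * exp (u j * t) := by rw [← exp_add]; congr 1; ring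
  have h2 : exp (-Ws u (j + 1)) = exp (-Ws u j) * exp (-u j) := by
    rw [← exp_add, Ws_succ]; congr 1; ring
  unfold AA kp
  rw [Ph_succ hu j ht.le, h, h2]
  field_simp
  ring

lemma AA_mono {u : ℕ → ℝ} (hu : ∀ j, 0 ≤ u j) (j : ℕ) {t t' : ℝ} (ht : 0 < t) (htt : t ≤ t') :
    AA u j t ≤ AA u j t' := by
  have key : ∀ t : ℝ, 0 < t → AA u j t = exp (-Ws u j) * t * ∑' x, fS u j x * t ^ (x - j) := by
    intro t ht
    unfold AA Ph
    rw [mul_div_assoc, ← tsum_div_const]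
    congr 1
    refine tsum_congr fun x => ?_
    by_cases h : x < j
    · rw [fS_zero_of_lt h]; simp
    · rw [mul_div_assoc, pow_sub₀ _ ht.ne' (by omega)]; rfl
  have hsum : ∀ t : ℝ, 0 < t → Summable fun x => fS u j x * t ^ (x - j) := by
    intro t ht
    refine ((fS_summable hu j ht.le).div_const (t ^ j)).congr fun x => ?_
    by_cases h : x < j
    · rw [fS_zero_of_lt h]; simp
    · rw [mul_div_assoc, pow_sub₀ _ ht.ne' (by omega)]; rfl
  have ht' : 0 < t' := ht.trans_le htt
  rw [key t ht, key t' ht']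
  have h1 : ∑' x, fS u j x * t ^ (x - j) ≤ ∑' x, fS u j x * t' ^ (x - j) :=
    (hsum t ht).tsum_le_tsum (fun x => mul_le_mul_of_nonneg_left (pow_le_pow_left₀ ht.le htt _) (fS_nonneg hu j x)) (hsum t' ht')
  have h0 : 0 ≤ ∑' x, fS u j x * t ^ (x - j) :=
    tsum_nonneg fun x => mul_nonneg (fS_nonneg hu j x) (by positivity)
  gcongr

lemma ratio_y {l β : ℝ} (hβ : 0 < β) (hβ2 : β ≤ 1 / 2) (hl : 1 + β ≤ l) :
    exp (l * ((1 - β / 2) - 1)) / (1 - β / 2) ≤ exp (-(β ^ 2 / 4)) := by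
  rw [div_le_iff₀ (by linarith)]
  have h1 : exp (β / 2 + β ^ 2 / 4) * (1 - β / 2) ≥ 1 := by
    have := quadratic_le_exp_of_nonneg (show 0 ≤ β / 2 + β ^ 2 / 4 by positivity)
    have h2 : (1 + (β / 2 + β ^ 2 / 4) + (β / 2 + β ^ 2 / 4) ^ 2 / 2) * (1 - β / 2) ≥ 1 := by
      nlinarith [sq_nonneg β, pow_pos hβ 3, pow_pos hβ 4, pow_pos hβ 2, mul_pos hβ hβ]
    have h3 : 0 ≤ 1 - β / 2 := by linarith
    nlinarith
  have h2 : exp (l * ((1 - β / 2) - 1)) ≤ exp (-(β ^ 2 / 4)) * exp (-(β / 2 + β ^ 2 / 4)) := by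
    rw [← exp_add, exp_le_exp]; nlinarith
  have h3 : exp (-(β / 2 + β ^ 2 / 4)) ≤ 1 - β / 2 := by
    rw [exp_neg, inv_le_iff_one_le_mul₀ (exp_pos _)]; linarith
  exact h2.trans (mul_le_mul_of_nonneg_left h3 (exp_pos _).le)

lemma AA_y {u : ℕ → ℝ} (hu : ∀ j, 0 ≤ u j) {β : ℝ} (hβ : 0 < β) (hβ2 : β ≤ 1 / 2) (h : ℕ)
    (hl : ∀ j < h, 1 + β ≤ u j) (j : ℕ) (hj : j ≤ h) :
    AA u j (1 - β / 2) ≤ exp (-(β ^ 2 / 4)) ^ j * AA u j 1 := by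
  induction j with
  | zero => simp [AA_zero]; linarith
  | succ j ih =>
    rw [AA_succ hu j (by linarith), AA_succ hu j one_pos]
    have h1 := ih (by omega)
    have h2 := ratio_y hβ hβ2 (hl j (by omega))
    have h3 := kp_nonneg hu j
    have hρ : exp (-(β ^ 2 / 4)) ≤ 1 := by rw [exp_le_one_iff]; nlinarith
    have hρj : exp (-(β ^ 2 / 4)) ^ (j + 1) ≤ 1 := pow_le_one₀ (exp_pos _).le hρ
    have h4 : exp (u j * (1 - β / 2 - 1)) / (1 - β / 2) * AA u j (1 - β / 2) ≤
        exp (-(β ^ 2 / 4)) * (exp (-(β ^ 2 / 4)) ^ j * AA u j 1) :=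
      mul_le_mul h2 h1 (AA_nonneg hu j (by linarith)) (exp_pos _).le
    have h5 : exp (-(β ^ 2 / 4)) ^ (j + 1) * kp u j ≤ kp u j := by nlinarith
    simp only [sub_self, mul_zero, exp_zero, div_one, one_mul]
    have h6 := pow_succ (exp (-(β ^ 2 / 4))) j
    rw [h6] at h5 ⊢
    linarith

/-- survival probability with Poisson steps -/
noncomputable def SS (u : ℕ → ℝ) (h : ℕ) : ℝ := exp (-Ws u h) * Ph u h 1

lemma AA_one (u : ℕ → ℝ) (h : ℕ) : AA u h 1 = SS u h := by simp [AA, SS]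

lemma SS_le_one {u : ℕ → ℝ} (hu : ∀ j, 0 ≤ u j) (h : ℕ) : SS u h ≤ 1 := by
  rw [← AA_one]
  induction h with
  | zero => simp [AA_zero]
  | succ j ih =>
    rw [AA_succ hu j one_pos]
    have := kp_nonneg hu j
    simp; linarith

lemma SS_nonneg {u : ℕ → ℝ} (hu : ∀ j, 0 ≤ u j) (h : ℕ) : 0 ≤ SS u h := by
  rw [← AA_one]; exact AA_nonneg hu h one_pos

lemma one_sub_le {t : ℝ} (h0 : 0 ≤ t) (h1 : t < 1) : 1 - t ≤ exp (-(t + t ^ 2 / 2)) := by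
  have h := Real.hasSum_pow_div_log_of_abs_lt_one (x := t) (by rw [abs_of_nonneg h0]; exact h1)
  have h2 := sum_le_hasSum (Finset.range 2) (fun i _ => by positivity) h
  rw [Finset.sum_range_succ, Finset.sum_range_one] at h2
  norm_num at h2
  rw [← Real.log_le_iff_le_exp (by linarith)]
  linarith

lemma le_one_sub {t : ℝ} (h0 : 0 ≤ t) (h1 : t ≤ 1 / 2) : exp (-(t + t ^ 2 / 2 + 2 * t ^ 3)) ≤ 1 - t := by
  have h := Real.abs_log_sub_add_sum_range_le (x := t) (by rw [abs_of_nonneg h0]; linarith) 2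
  rw [Finset.sum_range_succ, Finset.sum_range_one, abs_of_nonneg h0] at h
  have h2 := (abs_le.1 h).1
  norm_num at h2
  rw [← Real.le_log_iff_exp_le (by linarith)]
  have h3 : t ^ 3 / (1 - t) ≤ 2 * t ^ 3 := by
    rw [div_le_iff₀ (by linarith)]; nlinarith [pow_nonneg h0 3]
  linarith

lemma start_ub {u : ℕ → ℝ} (hu : ∀ j, 0 ≤ u j) {α β : ℝ} (hβ : 0 < β) (hβ2 : β ≤ 1 / 2) (h : ℕ)
    (hl : ∀ j < h, 1 + β ≤ u j) (hα : ∀ j < h, u j ≤ 1 + α) (hαβ : β ≤ α) :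
    SS u h * (1 - exp (-(β ^ 2 / 4)) ^ h) ≤ 2 * α := by
  have hS0 := SS_nonneg hu h
  have hρ0 : 0 ≤ exp (-(β ^ 2 / 4)) ^ h := by positivity
  by_cases h2 : 2 * α < 1
  · have hd : ∀ j ≤ h, AA u j 1 - AA u j (1 - 2 * α) ≤ 2 * α := by
      intro j hj
      induction j with
      | zero => simp [AA_zero]
      | succ j ih =>
        rw [AA_succ hu j one_pos, AA_succ hu j (show 0 < 1 - 2 * α by linarith)]
        have h3 : 1 ≤ exp (u j * (1 - 2 * α - 1)) / (1 - 2 * α) := by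
          rw [le_div_iff₀ (by linarith), one_mul]
          refine (one_sub_le (by linarith) h2).trans ?_
          rw [exp_le_exp]
          nlinarith [hα j (by omega)]
        have h4 := AA_nonneg hu j (show 0 < 1 - 2 * α by linarith)
        have h5 := ih (by omega)
        simp only [sub_self, mul_zero, exp_zero, div_one, one_mul]
        nlinarith
    have h3 := hd h le_rfl
    have h4 := AA_mono hu h (show 0 < 1 - 2 * α by linarith) (show 1 - 2 * α ≤ 1 - β / 2 by linarith)
    have h5 := AA_y hu hβ hβ2 h hl h le_rfl
    rw [AA_one] at *
    linarith
  · have := SS_le_one hu h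
    nlinarith

lemma start_lb {u : ℕ → ℝ} (hu : ∀ j, 0 ≤ u j) {β1 β : ℝ} (hβ : 0 < β) (hβ2 : β ≤ 1 / 2) (m h : ℕ)
    (hmh : m ≤ h) (hl : ∀ j < h, 1 + β ≤ u j) (hl1 : ∀ j < m, 1 + β1 ≤ u j) (hb0 : 0 ≤ β1) (hb1 : β1 ≤ 1 / 8) :
    (1 - exp (-(β ^ 2 / 4)) ^ m) * (2 * β1 - 16 * β1 ^ 2) ≤ SS u h := by
  set η := 2 * β1 - 16 * β1 ^ 2 with hη
  have hη0 : 0 ≤ η := by nlinarith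
  have hη1 : η ≤ 2 * β1 := by nlinarith
  have hη2 : η / 2 + 2 * η ^ 2 ≤ β1 := by nlinarith
  have hd : ∀ j ≤ m, η ≤ AA u j 1 - AA u j (1 - η) := by
    intro j hj
    induction j with
    | zero => simp [AA_zero]
    | succ j ih =>
      rw [AA_succ hu j one_pos, AA_succ hu j (show 0 < 1 - η by linarith)]
      have h3 : exp (u j * (1 - η - 1)) / (1 - η) ≤ 1 := by
        rw [div_le_iff₀ (by linarith), one_mul]
        refine le_trans ?_ (le_one_sub hη0 (by linarith))
        rw [exp_le_exp]
        have h7 := mul_le_mul_of_nonneg_left (hl1 j (by omega)) hη0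
        have h8 := mul_le_mul_of_nonneg_left hη2 hη0
        nlinarith
      have h4 := AA_nonneg hu j (show 0 < 1 - η by linarith)
      have h5 := ih (by omega)
      simp only [sub_self, mul_zero, exp_zero, div_one, one_mul]
      nlinarith
  have hρ : exp (-(β ^ 2 / 4)) ≤ 1 := by rw [exp_le_one_iff]; nlinarith
  have hd2 : ∀ j, m ≤ j → j ≤ h → AA u m 1 - AA u m (1 - β / 2) ≤ AA u j 1 - AA u j (1 - β / 2) := by
    intro j hmj
    induction j, hmj using Nat.le_induction with
    | base => intro; exact le_rfl
    | succ j hmj ih =>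
      intro hj
      refine (ih (by omega)).trans ?_
      rw [AA_succ hu j one_pos, AA_succ hu j (show 0 < 1 - β / 2 by linarith)]
      have h3 := (ratio_y hβ hβ2 (hl j (by omega))).trans hρ
      have h4 := AA_nonneg hu j (show 0 < 1 - β / 2 by linarith)
      simp only [sub_self, mul_zero, exp_zero, div_one, one_mul]
      nlinarith
  have h1 := hd m le_rfl
  have h2 := hd2 h hmh le_rfl
  have h3 := AA_y hu hβ hβ2 h hl m hmh
  have h4 := AA_nonneg hu m (show 0 < 1 - η by linarith)
  have h5 := AA_nonneg hu h (show 0 < 1 - β / 2 by linarith)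
  have hρm : exp (-(β ^ 2 / 4)) ^ m ≤ 1 := pow_le_one₀ (exp_pos _).le hρ
  have h6 : (1 - exp (-(β ^ 2 / 4)) ^ m) * η ≤ (1 - exp (-(β ^ 2 / 4)) ^ m) * AA u m 1 :=
    mul_le_mul_of_nonneg_left (by linarith) (by linarith)
  rw [AA_one u h] at h2
  linarith

end CAsymp

namespace CAsymp

noncomputable def pois (θ : ℝ) (x : ℕ) : ℝ := exp (-θ) * (θ ^ x / (x.factorial : ℝ))

lemma pois_nonneg {θ : ℝ} (h : 0 ≤ θ) (x : ℕ) : 0 ≤ pois θ x := by unfold pois; positivity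

lemma hs_congr {f g : ℕ → ℝ} {a b : ℝ} (h : HasSum f a) (hfg : ∀ x, g x = f x) (hab : b = a) : HasSum g b := by
  rw [hab, show g = f from funext hfg]; exact h

lemma hasSum_exp' (θ : ℝ) : HasSum (fun x : ℕ => θ ^ x / (x.factorial : ℝ)) (exp θ) := by
  have := NormedSpace.expSeries_div_hasSum_exp (𝔸 := ℝ) θ
  rwa [← Real.exp_eq_exp_ℝ] at this

lemma hasSum_exp1 (θ : ℝ) : HasSum (fun x : ℕ => (x : ℝ) * (θ ^ x / (x.factorial : ℝ))) (θ * exp θ) := by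
  rw [← hasSum_nat_add_iff' 1]
  simp only [Finset.range_one, Finset.sum_singleton, Nat.cast_zero, zero_mul, sub_zero]
  refine hs_congr ((hasSum_exp' θ).mul_left θ) (fun x => ?_) rfl
  rw [Nat.factorial_succ, pow_succ]
  push_cast
  field_simp

lemma hasSum_exp2 (θ : ℝ) : HasSum (fun x : ℕ => (x : ℝ) ^ 2 * (θ ^ x / (x.factorial : ℝ))) ((θ ^ 2 + θ) * exp θ) := by
  rw [← hasSum_nat_add_iff' 1]
  have h := ((hasSum_exp1 θ).add (hasSum_exp' θ)).mul_left θ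
  refine hs_congr h (fun x => ?_) ?_
  · rw [Nat.factorial_succ, pow_succ θ]
    push_cast
    field_simp
  · simp; ring

lemma pois_sum (θ : ℝ) : HasSum (pois θ) 1 := by
  have := (hasSum_exp' θ).mul_left (exp (-θ))
  rwa [← exp_add, neg_add_cancel, exp_zero] at this

lemma pois_var (θ : ℝ) : HasSum (fun x => pois θ x * ((x : ℝ) - θ) ^ 2) θ := by
  have h := (((hasSum_exp2 θ).sub ((hasSum_exp1 θ).mul_left (2 * θ))).add ((hasSum_exp' θ).mul_left (θ ^ 2))).mul_left (exp (-θ))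
  have h2 : exp (-θ) * exp θ = 1 := by rw [← exp_add, neg_add_cancel, exp_zero]
  refine hs_congr h (fun x => ?_) ?_
  · unfold pois; ring
  · linear_combination (-θ) * h2

lemma SS_eq {u : ℕ → ℝ} (hW : 0 < Ws u h) (θ : ℝ) :
    SS (fun j => θ / Ws u h * u j) h = ∑' x, pois θ x * e1 u h x := by
  have h1 : Ws (fun j => θ / Ws u h * u j) h = θ := by
    unfold Ws at *
    rw [← Finset.mul_sum]; field_simp
  rw [SS, h1, Ph, ← tsum_mul_left]
  refine tsum_congr fun x => ?_
  rw [fS_scale, pois, e1, div_pow, one_pow]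
  field_simp

lemma pe_summable {u : ℕ → ℝ} (hu : ∀ j, 0 ≤ u j) {h : ℕ} (hW : 0 < Ws u h) {θ : ℝ} (hθ : 0 ≤ θ) :
    Summable fun x => pois θ x * e1 u h x :=
  Summable.of_nonneg_of_le (fun x => mul_nonneg (pois_nonneg hθ x) (e1_nonneg hu h x))
    (fun x => mul_le_of_le_one_right (pois_nonneg hθ x) (e1_le_one hu h x hW)) (pois_sum θ).summable

lemma taub_ub {u : ℕ → ℝ} (hu : ∀ j, 0 ≤ u j) {h : ℕ} (hW : 0 < Ws u h) {θ r : ℝ} (hθ : 0 ≤ θ)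
    (hr : 0 < r) (x : ℕ) (hx : (x : ℝ) + r ≤ θ) :
    e1 u h x * (1 - θ / r ^ 2) ≤ SS (fun j => θ / Ws u h * u j) h := by
  rw [SS_eq hW]
  have hs : HasSum (fun y => pois θ y * (e1 u h x * (1 - ((y : ℝ) - θ) ^ 2 / r ^ 2))) (e1 u h x * (1 - θ / r ^ 2)) := by
    have := ((pois_sum θ).sub ((pois_var θ).div_const (r ^ 2))).mul_left (e1 u h x)
    refine hs_congr this (fun y => ?_) rfl
    ring
  refine hasSum_le (fun y => ?_) hs (pe_summable hu hW hθ).hasSum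
  refine mul_le_mul_of_nonneg_left ?_ (pois_nonneg hθ y)
  by_cases hy : x ≤ y
  · refine le_trans ?_ (e1_mono hu h hW hy)
    refine mul_le_of_le_one_right (e1_nonneg hu h x) ?_
    have : 0 ≤ ((y : ℝ) - θ) ^ 2 / r ^ 2 := by positivity
    linarith
  · refine le_trans ?_ (e1_nonneg hu h y)
    refine mul_nonpos_of_nonneg_of_nonpos (e1_nonneg hu h x) ?_
    have h1 : (y : ℝ) ≤ x := by exact_mod_cast (by omega : y ≤ x)
    have : 1 ≤ ((y : ℝ) - θ) ^ 2 / r ^ 2 := by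
      rw [one_le_div (by positivity)]; nlinarith
    linarith

lemma taub_lb {u : ℕ → ℝ} (hu : ∀ j, 0 ≤ u j) {h : ℕ} (hW : 0 < Ws u h) {θ κ : ℝ} (hθ : 0 ≤ θ)
    (hκ : 0 ≤ κ) (x : ℕ) (hx : ∀ y, x < y → e1 u h y ≤ κ * ((y : ℝ) - θ) ^ 2) :
    SS (fun j => θ / Ws u h * u j) h ≤ e1 u h x + κ * θ := by
  rw [SS_eq hW]
  have hs : HasSum (fun y => pois θ y * (e1 u h x + κ * ((y : ℝ) - θ) ^ 2)) (e1 u h x + κ * θ) := by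
    have := ((pois_sum θ).mul_left (e1 u h x)).add ((pois_var θ).mul_left κ)
    rw [mul_one] at this
    refine hs_congr this (fun y => ?_) rfl
    ring
  refine hasSum_le (fun y => ?_) (pe_summable hu hW hθ).hasSum hs
  refine mul_le_mul_of_nonneg_left ?_ (pois_nonneg hθ y)
  by_cases hy : y ≤ x
  · have := e1_mono hu h hW hy
    have : 0 ≤ κ * ((y : ℝ) - θ) ^ 2 := by positivity
    linarith
  · have := hx y (by omega)
    have := e1_nonneg hu h x
    linarith

noncomputable def psi (q : ℝ) (k h : ℕ) : ℝ :=
  ∑ x ∈ Finset.range (k - 1 + 1), (k - 1).choose x *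
    (Ws (fun j => q ^ (k - 1 - j)) h / Ws (fun j => q ^ j) k) ^ x *
    (1 - Ws (fun j => q ^ (k - 1 - j)) h / Ws (fun j => q ^ j) k) ^ (k - 1 - x) *
    (e1 (fun j => q ^ (k - 1 - j)) h x * e2 (fun j => q ^ j) (k - h) (k - 1 - x))

lemma Ws_split (q : ℝ) (k h : ℕ) (hk : h ≤ k) :
    Ws (fun j => q ^ (k - 1 - j)) h + Ws (fun j => q ^ j) (k - h) = Ws (fun j => q ^ j) k := by
  induction h with
  | zero => simp [Ws_zero]
  | succ h ih =>
    rw [← ih (by omega), Ws_succ, show k - h = (k - (h + 1)) + 1 by omega, Ws_succ,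
      show k - 1 - h = k - (h + 1) by omega]
    ring

lemma It_psi (q : ℝ) (hq : 0 < q) (k h : ℕ) (h0 : 0 < h) (hk : h + 1 ≤ k) :
    It q k (k - 1) * q ^ (k.choose 2) = Ws (fun j => q ^ j) k ^ (k - 1) * psi q k h := by
  have h1 := It_fE q k (k - 1)
  have h2 : k * (k - 1) = k.choose 2 + k.choose 2 := by
    have := Nat.choose_two_right k
    have h3 : 2 ∣ k * (k - 1) := (Nat.even_mul_pred_self k).two_dvd
    omega
  rw [h2, pow_add] at h1
  have hqp : q ^ k.choose 2 ≠ 0 := by positivity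
  have h3 : It q k (k - 1) * q ^ k.choose 2 = ((k - 1).factorial : ℝ) * fE (fun j => q ^ j) k (k - 1) := by
    apply mul_right_cancel₀ hqp
    linear_combination h1
  rw [h3, fE_split _ k h hk]
  set G := Ws (fun j => q ^ j) k with hG
  set L := Ws (fun j => q ^ (k - 1 - j)) h with hL
  set R := Ws (fun j => q ^ j) (k - h) with hR
  have hLR : L + R = G := Ws_split q k h (by omega)
  have hpos : ∀ (f : ℕ → ℕ) (j : ℕ), 0 < j → 0 < Ws (fun j => q ^ (f j)) j := by
    intro f j hj
    exact Finset.sum_pos (fun i _ => by positivity) ⟨0, by simpa using hj⟩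
  have hLp : 0 < L := hpos (fun j => k - 1 - j) h h0
  have hRp : 0 < R := hpos (fun j => j) (k - h) (by omega)
  have hGp : 0 < G := by linarith
  have hπ : 1 - L / G = R / G := by field_simp; linarith
  rw [psi, Finset.Nat.sum_antidiagonal_eq_sum_range_succ
    (fun x z => fS (fun j => q ^ (k - 1 - j)) h x * fE (fun j => q ^ j) (k - h) z), Finset.mul_sum, Finset.mul_sum]
  refine Finset.sum_congr rfl fun x hx => ?_
  have hx' : x ≤ k - 1 := by simp at hx; omega
  rw [← hL, ← hG, hπ, e1, e2, ← hL, ← hR, div_pow, div_pow]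
  have hGG : G ^ (k - 1) = G ^ x * G ^ (k - 1 - x) := by rw [← pow_add]; congr 1; omega
  have hf : ((k - 1).factorial : ℝ) = (k - 1).choose x * x.factorial * (k - 1 - x).factorial := by
    rw [← Nat.choose_mul_factorial_mul_factorial hx']; push_cast; ring
  rw [hGG, hf]
  field_simp

lemma bin_sum (n : ℕ) (p : ℝ) :
    ∑ x ∈ Finset.range (n + 1), (n.choose x : ℝ) * p ^ x * (1 - p) ^ (n - x) = 1 := by
  have := (add_pow p (1 - p) n).symm
  rw [add_sub_cancel, one_pow] at this
  refine Eq.trans ?_ this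
  refine Finset.sum_congr rfl fun x _ => by ring

lemma bin_var (n : ℕ) (p : ℝ) :
    ∑ x ∈ Finset.range (n + 1), (n.choose x : ℝ) * p ^ x * (1 - p) ^ (n - x) * ((x : ℝ) - n * p) ^ 2 = n * p * (1 - p) := by
  have := congrArg (Polynomial.eval p) (bernsteinPolynomial.variance ℝ n)
  simp only [Polynomial.eval_finset_sum, bernsteinPolynomial, Polynomial.eval_mul, Polynomial.eval_pow,
    Polynomial.eval_sub, Polynomial.eval_X, Polynomial.eval_one, Polynomial.eval_natCast,
    nsmul_eq_mul] at this
  rw [← this]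
  refine Finset.sum_congr rfl fun x _ => by ring

end CAsymp

namespace CAsymp

structure Par (k : ℕ) (w ε δ t : ℝ) : Prop where
  hw : 0 < w
  he : 0 < ε
  he1 : ε ≤ 1 / 100
  hδ : δ = w * k / 2
  ht : t = Real.sqrt k
  hδ1 : δ ≤ ε ^ 2
  hs : 1 ≤ ε ^ 4 * δ * t

namespace Par
variable {k : ℕ} {w ε δ t : ℝ}

lemma t_nonneg (P : Par k w ε δ t) : 0 ≤ t := by rw [P.ht]; exact Real.sqrt_nonneg _
lemma t_sq (P : Par k w ε δ t) : t ^ 2 = k := by rw [P.ht]; exact Real.sq_sqrt (by positivity)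
lemma δ_nonneg (P : Par k w ε δ t) : 0 ≤ δ := by rw [P.hδ]; have := P.hw; positivity
lemma δ_pos (P : Par k w ε δ t) : 0 < δ := by
  rcases P.δ_nonneg.eq_or_lt with h | h
  · have := P.hs; rw [← h] at this; norm_num at this
  · exact h
lemma t_pos (P : Par k w ε δ t) : 0 < t := by
  rcases P.t_nonneg.eq_or_lt with h | h
  · have := P.hs; rw [← h] at this; norm_num at this
  · exact h
lemma inv_t (P : Par k w ε δ t) : 1 / t ≤ ε ^ 4 * δ := by
  rw [div_le_iff₀ P.t_pos]; exact P.hs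
lemma e2le (P : Par k w ε δ t) : ε ^ 2 ≤ ε / 100 := by nlinarith [P.he, P.he1]
lemma e4le (P : Par k w ε δ t) : ε ^ 4 ≤ ε / 1000000 := by
  have := P.e2le; have := P.he; have := P.he1
  have h3 : ε ^ 4 = ε ^ 2 * ε ^ 2 := by ring
  rw [h3]; nlinarith [sq_nonneg ε]
lemma δle (P : Par k w ε δ t) : δ ≤ ε / 100 := P.hδ1.trans P.e2le
lemma δle' (P : Par k w ε δ t) : δ ≤ 1 / 10000 := by have := P.δle; have := P.he1; linarith
lemma t_big (P : Par k w ε δ t) : 1000000 ≤ t := by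
  have h1 := P.hs
  have h2 := P.e4le
  have h3 := P.he1
  have h4 := P.δle'
  have h5 : ε ^ 4 * δ ≤ 1 / 1000000 := by
    have : 0 ≤ ε ^ 4 := by positivity
    nlinarith [P.δ_pos]
  by_contra h
  push Not at h
  have := P.t_pos
  have := P.δ_pos
  have : 0 < ε ^ 4 * δ := by have := P.he; positivity
  nlinarith
lemma k_big (P : Par k w ε δ t) : (1000000 : ℝ) ≤ k := by
  rw [← P.t_sq]; nlinarith [P.t_big]
lemma k_pos (P : Par k w ε δ t) : (0 : ℝ) < k := by linarith [P.k_big]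
lemma inv_k (P : Par k w ε δ t) : 1 / (k : ℝ) ≤ (ε ^ 4 * δ) ^ 2 := by
  have h := P.inv_t
  have h0 : 0 ≤ 1 / t := by have := P.t_pos; positivity
  have : 1 / (k : ℝ) = (1 / t) ^ 2 := by rw [← P.t_sq]; ring
  rw [this]; gcongr
lemma inv_k' (P : Par k w ε δ t) : 1 / (k : ℝ) ≤ ε * δ / 1000000 := by
  have h := P.inv_k
  have h1 := P.e4le
  have h2 := P.δle'
  have h3 := P.he
  have h4 := P.δ_pos
  have h5 : ε ^ 4 * δ ≤ 1 := by nlinarith [P.he1, show 0 ≤ ε ^ 4 by positivity]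
  have h6 : 0 ≤ ε ^ 4 * δ := by positivity
  nlinarith
lemma wk (P : Par k w ε δ t) : w * k = 2 * δ := by rw [P.hδ]; ring

/-- number of start boxes -/
lemma h_lo (P : Par k w ε δ t) : (k : ℝ) / 4 ≤ ((k / 3 : ℕ) : ℝ) := by
  have h := P.k_big
  have h1 : k < 3 * (k / 3) + 3 := by omega
  have h2 : (k : ℝ) < 3 * ((k / 3 : ℕ) : ℝ) + 3 := by exact_mod_cast h1
  linarith
lemma h_hi (k : ℕ) : ((k / 3 : ℕ) : ℝ) ≤ (k : ℝ) / 3 := Nat.cast_div_le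
lemma k_ge (P : Par k w ε δ t) : 1000000 ≤ k := by exact_mod_cast P.k_big

lemma pow_lo (hw : 0 < w) (j : ℕ) : 1 + j * w ≤ (1 + w) ^ j := one_add_mul_le_pow (by linarith) j

lemma pow_hi (P : Par k w ε δ t) (j : ℕ) (hj : j ≤ k) : (1 + w) ^ j ≤ 1 + j * w + (j * w) ^ 2 := by
  have hw := P.hw
  have h1 : (1 + w) ^ j ≤ exp (j * w) := by
    rw [exp_nat_mul]
    exact pow_le_pow_left₀ (by linarith) (by linarith [add_one_le_exp w]) j
  have hj' : (j : ℝ) ≤ k := by exact_mod_cast hj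
  have h2 : (j : ℝ) * w ≤ 1 := by nlinarith [P.wk, P.δle']
  have h3 := Real.abs_exp_sub_one_sub_id_le (x := j * w) (by rw [abs_of_nonneg (by positivity)]; exact h2)
  have := (abs_le.1 h3).2
  linarith

lemma W_lo (hw : 0 < w) (j : ℕ) : j + w * (j * (j - 1)) / 2 ≤ Ws (fun i => (1 + w) ^ i) j := by
  induction j with
  | zero => simp [Ws_zero]
  | succ j ih =>
    rw [Ws_succ]
    have := pow_lo hw j
    push_cast
    nlinarith

lemma W_hi (P : Par k w ε δ t) (j : ℕ) (hj : j ≤ k) :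
    Ws (fun i => (1 + w) ^ i) j ≤ j + w * (j * j) / 2 + w ^ 2 * j ^ 3 := by
  have hw := P.hw
  induction j with
  | zero => simp [Ws_zero]
  | succ j ih =>
    rw [Ws_succ]
    have := P.pow_hi j (by omega)
    have := ih (by omega)
    push_cast
    have hj0 : (0 : ℝ) ≤ j := by positivity
    nlinarith [mul_nonneg (sq_nonneg w) hj0, mul_nonneg (sq_nonneg w) (mul_nonneg hj0 hj0)]

noncomputable def g (k : ℕ) (w : ℝ) : ℝ := ((k : ℝ) - 1) / Ws (fun i => (1 + w) ^ i) k

lemma G_lo (P : Par k w ε δ t) : k + δ * (k - 1) ≤ Ws (fun i => (1 + w) ^ i) k := by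
  have := W_lo P.hw k
  rw [P.hδ]; nlinarith

lemma G_hi (P : Par k w ε δ t) : Ws (fun i => (1 + w) ^ i) k ≤ k * (1 + δ + 4 * δ ^ 2) := by
  have := P.W_hi k le_rfl
  rw [P.hδ]; nlinarith

lemma G_pos (P : Par k w ε δ t) : 0 < Ws (fun i => (1 + w) ^ i) k := by
  have := P.G_lo; have := P.k_big; have := P.δ_pos; nlinarith

lemma g_hi (P : Par k w ε δ t) : g k w ≤ 1 - (1 - ε) * δ := by
  have h1 := P.G_lo
  have h2 := P.G_hi
  have h3 := P.δ_pos
  have h4 := P.δle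
  have h5 := P.k_big
  have h6 := P.he1
  have h7 := P.he
  have h8 := P.δle'
  unfold g
  rw [div_le_iff₀ P.G_pos]
  set G := Ws (fun i => (1 + w) ^ i) k
  -- G - (k-1) ≥ δ k ≥ (1-ε) δ G
  have a1 : (1 - ε) * (1 + δ + 4 * δ ^ 2) ≤ 1 := by nlinarith
  have a2 : (1 - ε) * G ≤ k := by
    have : (1 - ε) * G ≤ (1 - ε) * (k * (1 + δ + 4 * δ ^ 2)) := mul_le_mul_of_nonneg_left h2 (by linarith)
    nlinarith
  nlinarith [mul_le_mul_of_nonneg_left a2 h3.le]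

lemma g_lo (P : Par k w ε δ t) : 1 - (1 + ε) * δ ≤ g k w := by
  have h1 := P.G_lo
  have h2 := P.G_hi
  have h3 := P.δ_pos
  have h4 := P.δle
  have h5 := P.k_big
  have h6 := P.he1
  have h7 := P.he
  have h8 := P.δle'
  have h9 := P.inv_k'
  rw [div_le_iff₀ P.k_pos] at h9
  unfold g
  rw [le_div_iff₀ P.G_pos]
  set G := Ws (fun i => (1 + w) ^ i) k
  -- G - (k-1) ≤ 1 + δ k + 4 δ² k ≤ (1+ε)δ k
  have a2 : (k : ℝ) ≤ G := by nlinarith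
  have a3 : (1 + ε) * δ * k ≤ (1 + ε) * δ * G := mul_le_mul_of_nonneg_left a2 (by positivity)
  have a4 : δ * (δ * k) ≤ ε / 100 * (δ * k) := mul_le_mul_of_nonneg_right h4 (by positivity)
  nlinarith [mul_pos h7 (mul_pos h3 P.k_pos)]

end Par
end CAsymp

namespace CAsymp
namespace Par
variable {k : ℕ} {w ε δ t : ℝ}

noncomputable def U (k : ℕ) (w : ℝ) : ℕ → ℝ := fun j => (1 + w) ^ (k - 1 - j)
noncomputable def L (k : ℕ) (w : ℝ) : ℝ := Ws (U k w) (k / 3)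
noncomputable def R (k : ℕ) (w : ℝ) : ℝ := Ws (fun j => (1 + w) ^ j) (k - k / 3)
noncomputable def xb (k : ℕ) (w : ℝ) : ℝ := g k w * L k w

lemma U_one (P : Par k w ε δ t) (j : ℕ) : 1 ≤ U k w j := one_le_pow₀ (by linarith [P.hw])
lemma U_nonneg (P : Par k w ε δ t) (j : ℕ) : 0 ≤ U k w j := by linarith [P.U_one j]
lemma w_small (P : Par k w ε δ t) : w ≤ ε * δ / 100000 := by
  have h := P.inv_k'
  have h2 : w = 2 * δ * (1 / k) := by have := P.k_pos; rw [P.hδ]; field_simp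
  rw [h2]
  have := P.δ_pos; have := P.he; have := P.δle'
  have h3 : 2 * δ * (1 / k) ≤ 2 * δ * (ε * δ / 1000000) := by gcongr
  nlinarith [mul_pos (mul_pos P.he P.δ_pos) P.δ_pos]

lemma U_hi (P : Par k w ε δ t) (j : ℕ) : U k w j ≤ 1 + 2 * δ + 4 * δ ^ 2 := by
  have h1 : U k w j ≤ (1 + w) ^ k := pow_le_pow_right₀ (by linarith [P.hw]) (by omega)
  have h2 := P.pow_hi k le_rfl
  have h3 := P.wk
  have h4 : (k : ℝ) * w = 2 * δ := by linarith
  rw [h4] at h2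
  nlinarith

lemma U_lo (P : Par k w ε δ t) (m j : ℕ) (hj : j < m) (hm : m ≤ k) : 1 + ((k : ℝ) - m) * w ≤ U k w j := by
  have h1 : (1 + w) ^ (k - m) ≤ U k w j := pow_le_pow_right₀ (by linarith [P.hw]) (by omega)
  have h2 := pow_lo P.hw (k - m)
  rw [Nat.cast_sub hm] at h2
  linarith

lemma U_lo' (P : Par k w ε δ t) (j : ℕ) (hj : j < k / 3) : 1 + 13 / 10 * δ ≤ U k w j := by
  have h1 := P.U_lo (k / 3) j hj (by omega)
  have h2 := h_hi k
  have h3 := P.wk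
  have h4 := P.hw
  have h5 := P.δ_pos
  nlinarith

lemma L_lo (P : Par k w ε δ t) : (k : ℝ) / 4 ≤ L k w :=
  P.h_lo.trans (Ws_ge P.U_one _)

lemma L_hi (P : Par k w ε δ t) : L k w ≤ (k : ℝ) * 34 / 100 := by
  have h1 : L k w ≤ ∑ i ∈ Finset.range (k / 3), (1 + 2 * δ + 4 * δ ^ 2) :=
    by unfold L Ws; exact Finset.sum_le_sum fun i _ => P.U_hi i
  rw [Finset.sum_const, Finset.card_range, nsmul_eq_mul] at h1
  have h2 := h_hi k
  have h3 := P.δle'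
  have h4 := P.δ_pos
  have h5 : 1 + 2 * δ + 4 * δ ^ 2 ≤ 101 / 100 := by nlinarith
  have : ((k / 3 : ℕ) : ℝ) * (1 + 2 * δ + 4 * δ ^ 2) ≤ (k / 3 : ℝ) * (101 / 100) := by
    have := P.k_pos
    gcongr
  nlinarith [P.k_pos]

lemma L_pos (P : Par k w ε δ t) : 0 < L k w := by have := P.L_lo; have := P.k_pos; linarith

lemma R_eq (k : ℕ) (w : ℝ) : L k w + R k w = Ws (fun i => (1 + w) ^ i) k := Ws_split (1 + w) k (k / 3) (by omega)

lemma R_lo (P : Par k w ε δ t) : (k : ℝ) / 2 ≤ R k w := by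
  have h1 := R_eq k w
  have h2 := P.G_lo
  have h3 := P.L_hi
  have h4 := P.k_big
  have h5 := P.δ_pos
  nlinarith
lemma R_hi (P : Par k w ε δ t) : R k w ≤ k := by
  have h1 := R_eq k w
  have h2 := P.G_hi
  have h3 := P.L_lo
  have h4 := P.k_pos
  have h5 := P.δle'
  have h6 := P.δ_pos
  have : (k : ℝ) * (1 + δ + 4 * δ ^ 2) ≤ k * (1 + 1 / 4) := by
    apply mul_le_mul_of_nonneg_left _ h4.le; nlinarith
  nlinarith
lemma R_pos (P : Par k w ε δ t) : 0 < R k w := by have := P.R_lo; have := P.k_pos; linarith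
lemma g_le_one (P : Par k w ε δ t) : g k w ≤ 1 := by
  have := P.g_hi; have := P.δ_pos; have := P.he1; nlinarith
lemma g_lo' (P : Par k w ε δ t) : 99 / 100 ≤ g k w := by
  have := P.g_lo; have := P.δ_pos; have := P.he1; have := P.δle'; nlinarith
lemma xb_hi (P : Par k w ε δ t) : xb k w ≤ (k : ℝ) * 34 / 100 := by
  unfold xb
  have := P.g_le_one; have := P.g_lo'; have := P.L_hi; have := P.L_pos
  nlinarith
lemma xb_lo (P : Par k w ε δ t) : (k : ℝ) / 5 ≤ xb k w := by
  unfold xb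
  have := P.g_le_one; have := P.g_lo'; have := P.L_lo; have := P.L_pos
  nlinarith

lemma xb_div (P : Par k w ε δ t) (σ : ℝ) : (xb k w + σ) / L k w = g k w + σ / L k w := by
  unfold xb; have := P.L_pos; field_simp

/-- t/ε is much smaller than k -/
lemma tK (P : Par k w ε δ t) : t / ε ≤ ε ^ 3 * δ * k := by
  have h := P.hs
  have := P.he; have := P.t_pos; have := P.δ_pos
  rw [← P.t_sq, div_le_iff₀ P.he]
  nlinarith

lemma tK' (P : Par k w ε δ t) : t / ε ≤ ε * δ / 10000 * k := by
  have h := P.tK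
  have h1 := P.e2le; have h2 := P.he1; have h3 := P.he
  have : ε ^ 3 * δ * k ≤ ε / 10000 * δ * k := by
    have := P.δ_pos; have := P.k_pos
    gcongr
    nlinarith
  linarith
lemma tK'' (P : Par k w ε δ t) : t / ε ≤ k / 100000000 := by
  have h := P.tK'
  have h1 := P.δle'; have h2 := P.he1; have h3 := P.he; have := P.δ_pos; have := P.k_pos
  have : ε * δ / 10000 * k ≤ 1 * (1 / 10000) / 10000 * k := by gcongr; linarith
  linarith

lemma exp_small {m : ℕ} {c : ℝ} (hm : 0 < (m : ℝ)) (hc : 0 < c) : exp (-c) ^ m ≤ 1 / (m * c) := by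
  rw [← exp_nat_mul, show (m : ℝ) * -c = -(m * c) by ring, exp_neg, ← one_div]
  apply one_div_le_one_div_of_le (by positivity)
  linarith [add_one_le_exp ((m : ℝ) * c)]

lemma kd2 (P : Par k w ε δ t) : 1 ≤ ε ^ 8 * (δ ^ 2 * k) := by
  have h := P.inv_k
  rw [div_le_iff₀ P.k_pos] at h
  nlinarith

lemma rho (P : Par k w ε δ t) (m : ℕ) (hm : ε * k / 2 ≤ m) : exp (-((δ / 4) ^ 2 / 4)) ^ m ≤ ε / 100 := by
  have := P.he; have := P.k_pos; have := P.δ_pos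
  have hm0 : 0 < (m : ℝ) := lt_of_lt_of_le (by positivity) hm
  refine (exp_small hm0 (by positivity)).trans ?_
  rw [div_le_iff₀ (by positivity)]
  have h1 := P.kd2
  have h2 : ε / 100 * (m * ((δ / 4) ^ 2 / 4)) ≥ ε / 100 * ((ε * k / 2) * ((δ / 4) ^ 2 / 4)) := by gcongr
  have h3 : ε / 100 * ((ε * k / 2) * ((δ / 4) ^ 2 / 4)) = ε ^ 2 * (δ ^ 2 * k) / 12800 := by ring
  have h4 : ε ^ 8 ≤ ε ^ 2 / 12800 := by
    have h5 := P.e4le; have h6 := P.he1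
    have h7 : ε ^ 8 = ε ^ 4 * (ε ^ 2 * ε ^ 2) := by ring
    rw [h7]
    have h8 := P.e2le
    have : ε ^ 4 * (ε ^ 2 * ε ^ 2) ≤ (1 / 100 / 1000000) * (ε ^ 2 * 1) := by
      gcongr <;> nlinarith
    nlinarith [sq_nonneg ε]
  have h5 : ε ^ 8 * (δ ^ 2 * k) ≤ ε ^ 2 / 12800 * (δ ^ 2 * k) := by gcongr
  linarith

lemma rho_h (P : Par k w ε δ t) : exp (-((δ / 4) ^ 2 / 4)) ^ (k / 3) ≤ ε / 100 := by
  refine P.rho _ ?_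
  have := P.h_lo; have := P.he1; have := P.k_pos
  nlinarith

lemma S_ub (P : Par k w ε δ t) (σ : ℝ) (hσ : 0 ≤ σ) (α : ℝ) (hα : ∀ j < k / 3, (g k w + σ / L k w) * U k w j ≤ 1 + α) :
    SS (fun j => (xb k w + σ) / Ws (U k w) (k / 3) * U k w j) (k / 3) * (1 - ε / 100) ≤ 2 * α := by
  have hL := P.L_pos
  have hg := P.g_lo'
  have hsL : 0 ≤ σ / L k w := by positivity
  have hlow : ∀ j < k / 3, 1 + δ / 4 ≤ (g k w + σ / L k w) * U k w j := by
    intro j hj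
    have h1 := P.U_lo' j hj
    have h2 := P.g_lo
    have h3 := P.δ_pos; have := P.δle'; have := P.he1; have := P.he
    have : (1 - (101 / 100) * δ) * (1 + 13 / 10 * δ) ≤ (g k w + σ / L k w) * U k w j := by
      have : 1 - (101 / 100) * δ ≤ g k w + σ / L k w := by nlinarith
      gcongr
    nlinarith
  have e : (fun j => (xb k w + σ) / Ws (U k w) (k / 3) * U k w j) = fun j => (g k w + σ / L k w) * U k w j := by
    funext j; rw [← P.xb_div]; rfl
  rw [e]
  have hnn : ∀ j, 0 ≤ (g k w + σ / L k w) * U k w j := fun j => mul_nonneg (by linarith) (P.U_nonneg j)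
  have hd := P.δ_pos
  have hk3 : 0 < k / 3 := by have := P.k_ge; omega
  have hβα : δ / 4 ≤ α := by linarith [hlow 0 hk3, hα 0 hk3]
  have key := start_ub hnn (by linarith : 0 < δ / 4) (by linarith [P.δle']) (k / 3) hlow hα hβα
  refine le_trans ?_ key
  apply mul_le_mul_of_nonneg_left _ (SS_nonneg hnn _)
  linarith [P.rho_h]

noncomputable def E1f (k : ℕ) (w : ℝ) (x : ℕ) : ℝ := e1 (U k w) (k / 3) x

lemma gU (P : Par k w ε δ t) (j : ℕ) (s : ℝ) (hs : 0 ≤ s) (hs1 : s ≤ 1) :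
   (g k w + s) * U k w j ≤ 1 + (1 + 2 * ε) * δ + s * (101 / 100) := by
  have h1 := P.U_hi j
  have h2 := P.g_hi
  have h3 := P.δ_pos; have h4 := P.δle'; have h5 := P.he1; have h6 := P.he; have h7 := P.δle
  have h8 := P.g_lo'
  have h9 : g k w * U k w j ≤ (1 - (1 - ε) * δ) * (1 + 2 * δ + 4 * δ ^ 2) := by
    gcongr
    · exact P.U_nonneg j
    · linarith
  have h10 : s * U k w j ≤ s * (101 / 100) := by gcongr; nlinarith
  have h11 : (1 - (1 - ε) * δ) * (1 + 2 * δ + 4 * δ ^ 2) ≤ 1 + (1 + 2 * ε) * δ := by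
    have h12 : δ * δ ≤ ε / 100 * δ := by gcongr
    have h13 : 0 ≤ (1 - ε) * δ := by nlinarith
    nlinarith [mul_pos h6 h3, mul_nonneg h13 h3.le, mul_nonneg h13 (sq_nonneg δ)]
  nlinarith

lemma E1_hi (P : Par k w ε δ t) (x : ℕ) (hx : (x : ℝ) ≤ xb k w + t / ε) : E1f k w x ≤ 2 * δ * (1 + 6 * ε) := by
  have hL := P.L_pos
  have he := P.he; have ht := P.t_pos; have hd := P.δ_pos; have hk := P.k_pos; have he1 := P.he1
  have hs0 : 0 ≤ 2 * (t / ε) := by positivity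
  have hsL : 2 * (t / ε) / L k w ≤ ε * δ := by
    rw [div_le_iff₀ hL]
    have := P.tK'; have := P.L_lo
    have : ε * δ * (k / 4) ≤ ε * δ * L k w := by gcongr
    linarith [mul_pos (mul_pos he hd) hk]
  have hb := P.S_ub (2 * (t / ε)) hs0 ((1 + 4 * ε) * δ) (by
    intro j hj
    have := P.gU j (2 * (t / ε) / L k w) (by positivity) (by nlinarith [P.δle'])
    nlinarith [mul_pos he hd])
  have hxb := P.xb_lo; have hxb2 := P.xb_hi
  have key := taub_ub (P.U_nonneg) (h := k / 3) hL (θ := xb k w + 2 * (t / ε)) (r := t / ε)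
    (by linarith) (by positivity) x (by linarith)
  have hθr : (xb k w + 2 * (t / ε)) / (t / ε) ^ 2 ≤ ε / 100 := by
    rw [div_le_iff₀ (by positivity), div_pow, P.t_sq]
    have := P.tK''
    have h2 := P.e2le
    have : ε / 100 * (k / ε ^ 2) = k / (100 * ε) := by field_simp
    rw [this, le_div_iff₀ (by positivity)]
    nlinarith
  have h0 : 0 ≤ E1f k w x := e1_nonneg P.U_nonneg _ _
  have h1 : E1f k w x * (1 - ε / 100) ≤ SS (fun j => (xb k w + 2 * (t / ε)) / Ws (U k w) (k / 3) * U k w j) (k / 3) := by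
    refine le_trans ?_ key
    apply mul_le_mul_of_nonneg_left _ h0
    linarith
  have h2 : E1f k w x * (1 - ε / 100) * (1 - ε / 100) ≤ 2 * ((1 + 4 * ε) * δ) :=
    le_trans (mul_le_mul_of_nonneg_right h1 (by linarith)) hb
  have h3 : E1f k w x * (1 - ε / 50) ≤ 2 * ((1 + 4 * ε) * δ) := by nlinarith [mul_nonneg h0 (sq_nonneg ε)]
  by_contra hcon
  push Not at hcon
  have : 2 * δ * (1 + 6 * ε) * (1 - ε / 50) < E1f k w x * (1 - ε / 50) := by
    apply mul_lt_mul_of_pos_right hcon; linarith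
  nlinarith [mul_pos he hd]

/-- coarse bound -/
lemma E1_coarse (P : Par k w ε δ t) (x : ℕ) : E1f k w x ≤ 17 * δ + 64 * (max 0 ((x : ℝ) - xb k w)) / k := by
  have hL := P.L_pos
  have he := P.he; have ht := P.t_pos; have hd := P.δ_pos; have hk := P.k_pos; have he1 := P.he1
  set y := max 0 ((x : ℝ) - xb k w) with hy
  have hy0 : 0 ≤ y := le_max_left _ _
  have hyx : (x : ℝ) ≤ xb k w + y := by have := le_max_right 0 ((x : ℝ) - xb k w); linarith
  have hle1 : E1f k w x ≤ 1 := e1_le_one P.U_nonneg _ _ hL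
  by_cases hbig : (k : ℝ) ≤ 64 * y
  · refine hle1.trans ?_
    have : 1 ≤ 64 * y / k := by rw [le_div_iff₀ hk]; linarith
    linarith
  push Not at hbig
  have htk : t ≤ ε * δ / 10000 * k := by
    have := P.tK'
    have : t ≤ t / ε := by rw [le_div_iff₀ he]; nlinarith
    linarith
  have hs0 : 0 ≤ y + 2 * t := by positivity
  have hsL : (y + 2 * t) / L k w ≤ 4 * y / k + δ / 100 := by
    rw [div_le_iff₀ hL]
    have h1 : (4 * y / k + δ / 100) * (k / 4) ≤ (4 * y / k + δ / 100) * L k w := by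
      have := P.L_lo
      gcongr
    have h2 : (4 * y / k + δ / 100) * (k / 4) = y + δ * k / 400 := by field_simp; ring
    have h3 : 2 * t ≤ δ * k / 400 := by nlinarith [mul_pos hd hk]
    linarith
  have hyk : y / k ≤ 1 / 64 := by rw [div_le_iff₀ hk]; linarith
  have hyk0 : 0 ≤ y / k := by positivity
  have e1 : 4 * y / k = 4 * (y / k) := by ring
  have e2 : 64 * y / k = 64 * (y / k) := by ring
  rw [e1] at hsL
  rw [e2]
  have hb := P.S_ub (y + 2 * t) hs0 (2 * δ + 5 * (y / k)) (by
    intro j hj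
    have := P.gU j ((y + 2 * t) / L k w) (by positivity) (by nlinarith [P.δle'])
    nlinarith [mul_pos he hd])
  have hxb := P.xb_lo; have hxb2 := P.xb_hi
  have key := taub_ub (P.U_nonneg) (h := k / 3) hL (θ := xb k w + (y + 2 * t)) (r := 2 * t)
    (by linarith) (by positivity) x (by linarith)
  have hθr : (xb k w + (y + 2 * t)) / (2 * t) ^ 2 ≤ 1 / 4 := by
    rw [div_le_iff₀ (by positivity), mul_pow, P.t_sq]
    have : ε * δ / 10000 * k ≤ 1 / 100 * k := by
      apply mul_le_mul_of_nonneg_right _ hk.le; nlinarith [P.δle']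
    nlinarith
  have h0 : 0 ≤ E1f k w x := e1_nonneg P.U_nonneg _ _
  have h1 : E1f k w x * (3 / 4) ≤ SS (fun j => (xb k w + (y + 2 * t)) / Ws (U k w) (k / 3) * U k w j) (k / 3) := by
    refine le_trans ?_ key
    apply mul_le_mul_of_nonneg_left _ h0
    linarith
  have h2 : E1f k w x * (3 / 4) * (1 - ε / 100) ≤ 2 * (2 * δ + 5 * (y / k)) :=
    le_trans (mul_le_mul_of_nonneg_right h1 (by linarith)) hb
  nlinarith

end Par
end CAsymp

namespace CAsymp
namespace Par
variable {k : ℕ} {w ε δ t : ℝ}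

noncomputable def mm (k : ℕ) (ε : ℝ) : ℕ := ⌊ε * k⌋₊

lemma mm_hi (P : Par k w ε δ t) : (mm k ε : ℝ) ≤ ε * k := Nat.floor_le (by have := P.he; have := P.k_pos; positivity)
lemma ek_big (P : Par k w ε δ t) : 2 ≤ ε * k := by
  have h := P.inv_k'
  rw [div_le_iff₀ P.k_pos] at h
  have := P.δle'
  have := P.δ_pos
  nlinarith [mul_pos P.he P.k_pos]
lemma mm_lo (P : Par k w ε δ t) : ε * k / 2 ≤ mm k ε := by
  have h := Nat.lt_floor_add_one (ε * k)
  have := P.ek_big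
  unfold mm; linarith
lemma mm_pos (P : Par k w ε δ t) : 0 < mm k ε := by
  have := P.mm_lo; have := P.ek_big
  have : (0 : ℝ) < mm k ε := by linarith
  exact_mod_cast this
lemma mm_le (P : Par k w ε δ t) : mm k ε ≤ k / 3 := by
  have h1 := P.mm_hi; have h2 := P.h_lo; have := P.he1; have := P.k_pos
  have : (mm k ε : ℝ) ≤ ((k / 3 : ℕ) : ℝ) := by nlinarith
  exact_mod_cast this

set_option maxHeartbeats 1000000 in
lemma E1_lo (P : Par k w ε δ t) (x : ℕ) (hx : xb k w - t / ε ≤ (x : ℝ)) : 2 * δ * (1 - 8 * ε) ≤ E1f k w x := by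
  have hL := P.L_pos
  have he := P.he; have ht := P.t_pos; have hd := P.δ_pos; have hk := P.k_pos; have he1 := P.he1
  have hdl := P.δle'; have hdle := P.δle
  have hs0 : 0 < t / ε := by positivity
  have hsL : 2 * (t / ε) / L k w ≤ ε * δ := by
    rw [div_le_iff₀ hL]
    have := P.tK'; have := P.L_lo
    have : ε * δ * (k / 4) ≤ ε * δ * L k w := by gcongr
    linarith [mul_pos (mul_pos he hd) hk]
  set gg := g k w - 2 * (t / ε) / L k w with hgg
  have hg1 : 1 - (1 + 2 * ε) * δ ≤ gg := by have := P.g_lo; linarith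
  have hgg0 : 0 ≤ gg := by nlinarith
  have e : (fun j => (xb k w - 2 * (t / ε)) / Ws (U k w) (k / 3) * U k w j) = fun j => gg * U k w j := by
    funext j
    have := P.xb_div (-(2 * (t / ε)))
    rw [neg_div, ← sub_eq_add_neg, ← sub_eq_add_neg] at this
    rw [hgg, ← this]; rfl
  have hnn : ∀ j, 0 ≤ gg * U k w j := fun j => mul_nonneg hgg0 (P.U_nonneg j)
  have hlow : ∀ j < k / 3, 1 + δ / 4 ≤ gg * U k w j := by
    intro j hj
    have h1 := P.U_lo' j hj
    have : (1 - (102 / 100) * δ) * (1 + 13 / 10 * δ) ≤ gg * U k w j := by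
      have : 1 - (102 / 100) * δ ≤ gg := by nlinarith
      gcongr
    nlinarith
  have hlow1 : ∀ j < mm k ε, 1 + δ * (1 - 5 * ε) ≤ gg * U k w j := by
    intro j hj
    have h1 := P.U_lo (mm k ε) j hj (by have := P.mm_le; omega)
    have h2 := P.mm_hi
    have h3 := P.wk
    have h4 : 1 + 2 * (1 - ε) * δ ≤ U k w j := by nlinarith [P.hw]
    have : (1 - (1 + 2 * ε) * δ) * (1 + 2 * (1 - ε) * δ) ≤ gg * U k w j := by
      have h5 : 0 ≤ 1 + 2 * (1 - ε) * δ := by nlinarith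
      exact mul_le_mul hg1 h4 h5 hgg0
    have h6 : δ * δ ≤ ε / 100 * δ := by gcongr
    have h7 : (1 + 2 * ε) * (2 * (1 - ε)) ≤ 3 := by nlinarith
    have h8 : (1 + 2 * ε) * (2 * (1 - ε)) * (δ * δ) ≤ 3 * (ε / 100 * δ) := by
      apply mul_le_mul h7 h6 <;> positivity
    nlinarith [mul_pos he hd]
  have hSS := start_lb hnn (by linarith : 0 < δ / 4) (by linarith) (mm k ε) (k / 3) P.mm_le hlow hlow1
    (by nlinarith) (by nlinarith)
  have hrho := P.rho (mm k ε) P.mm_lo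
  have hS2 : 2 * δ * (1 - 6 * ε) ≤ SS (fun j => gg * U k w j) (k / 3) := by
    refine le_trans ?_ hSS
    have h1 : 2 * δ * (1 - 5.9 * ε) ≤ 2 * (δ * (1 - 5 * ε)) - 16 * (δ * (1 - 5 * ε)) ^ 2 := by
      have h6 : δ * δ ≤ ε / 100 * δ := by gcongr
      have h7 : (δ * (1 - 5 * ε)) ^ 2 ≤ δ * δ := by
        rw [← sq]; apply pow_le_pow_left₀ (by nlinarith); nlinarith
      nlinarith
    have h2 : 0 ≤ 2 * δ * (1 - 5.9 * ε) := by nlinarith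
    have : (1 - ε / 100) * (2 * δ * (1 - 5.9 * ε)) ≤ (1 - exp (-((δ / 4) ^ 2 / 4)) ^ mm k ε) * (2 * (δ * (1 - 5 * ε)) - 16 * (δ * (1 - 5 * ε)) ^ 2) := by
      apply mul_le_mul (by linarith) h1 h2 (by linarith)
    nlinarith [mul_pos he hd, mul_pos he (mul_pos he hd)]
  have hxb := P.xb_lo; have hxb2 := P.xb_hi
  have htk := P.tK''
  set r := t / ε with hr
  have key := taub_lb (P.U_nonneg) (h := k / 3) hL (θ := xb k w - 2 * r) (κ := 17 * δ / r ^ 2 + 64 / (k * r))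
    (by linarith) (by positivity) x (by
      intro y hy
      have hy' : (x : ℝ) < y := by exact_mod_cast hy
      refine (P.E1_coarse y).trans ?_
      set D := (y : ℝ) - (xb k w - 2 * r) with hD
      have hDr : r ≤ D := by linarith
      have h1 : max 0 ((y : ℝ) - xb k w) ≤ D := max_le (by linarith) (by linarith)
      have h2 : 17 * δ ≤ 17 * δ / r ^ 2 * D ^ 2 := by
        rw [div_mul_eq_mul_div, le_div_iff₀ (by positivity)]
        gcongr
      have h3 : 64 * max 0 ((y : ℝ) - xb k w) / k ≤ 64 / (k * r) * D ^ 2 := by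
        rw [div_mul_eq_mul_div, div_le_div_iff₀ hk (by positivity)]
        have : max 0 ((y : ℝ) - xb k w) * r ≤ D * D := by gcongr; linarith
        nlinarith
      linarith)
  rw [e] at key
  have hκ : (17 * δ / r ^ 2 + 64 / (k * r)) * (xb k w - 2 * r) ≤ ε * δ := by
    have h1 : (17 * δ / r ^ 2 + 64 / (k * r)) * (xb k w - 2 * r) ≤ (17 * δ / r ^ 2 + 64 / (k * r)) * k := by
      gcongr; linarith
    have h2 : 17 * δ / r ^ 2 * k = 17 * δ * ε ^ 2 := by
      rw [hr, div_pow, P.t_sq]; field_simp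
    have h3 : 64 / (k * r) * k = 64 * ε * (1 / t) := by
      rw [hr]; field_simp
    have h4 : 64 * ε * (1 / t) ≤ 64 * ε * (ε ^ 4 * δ) := by have := P.inv_t; gcongr
    have h5 := P.e4le
    have h6 := P.e2le
    have h7 : 17 * δ * ε ^ 2 ≤ 17 * δ * (ε / 100) := by gcongr
    have h8 : 64 * ε * (ε ^ 4 * δ) ≤ 64 * ε * (1 / 1000000 * δ) := by gcongr; linarith
    rw [add_mul _ _ (k : ℝ), h2, h3] at h1
    nlinarith [mul_pos he hd]
  change _ ≤ E1f k w x + _ at key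
  nlinarith [mul_pos he hd]

noncomputable def E2f (k : ℕ) (w : ℝ) (x : ℕ) : ℝ := e2 (fun j => (1 + w) ^ j) (k - k / 3) (k - 1 - x)

lemma one_sub_R (P : Par k w ε δ t) (x : ℕ) (hx : x ≤ k - 1) :
    1 - ((k - 1 - x : ℕ) : ℝ) / R k w = 1 - g k w + ((x : ℝ) - xb k w) / R k w := by
  have hR := P.R_pos
  have hG := P.G_pos
  have h1 := R_eq k w
  have hk1 := P.k_ge
  have hgG : g k w * (L k w + R k w) = (k : ℝ) - 1 := by
    rw [h1]; unfold g; field_simp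
  rw [Nat.cast_sub hx, Nat.cast_sub (by omega)]
  unfold xb
  field_simp
  push_cast
  linarith

lemma E2_hi (P : Par k w ε δ t) (x : ℕ) (hx : x ≤ k - 1) :
    E2f k w x ≤ (1 + ε) * δ + 2 * |(x : ℝ) - xb k w| / k := by
  have hk := P.k_pos; have hR := P.R_pos; have hR2 := P.R_lo
  have h := e2_ub (u := fun j => (1 + w) ^ j) (fun j => one_le_pow₀ (by linarith [P.hw])) (k - k / 3) (k - 1 - x)
    (by have := P.k_ge; omega)
  refine h.trans ?_
  have hd := P.δ_pos; have he := P.he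
  apply max_le
  · positivity
  change 1 - ((k - 1 - x : ℕ) : ℝ) / R k w ≤ _
  rw [P.one_sub_R x hx]
  have h1 := P.g_lo
  have h2 : ((x : ℝ) - xb k w) / R k w ≤ 2 * |(x : ℝ) - xb k w| / k := by
    calc ((x : ℝ) - xb k w) / R k w ≤ |(x : ℝ) - xb k w| / R k w := by gcongr; exact le_abs_self _
      _ ≤ |(x : ℝ) - xb k w| / (k / 2) := by gcongr
      _ = _ := by field_simp
  linarith

end Par
end CAsymp

namespace CAsymp

lemma Ws_avg {u : ℕ → ℝ} (hm : Monotone u) (j H : ℕ) (hjH : j ≤ H) : Ws u j * H ≤ Ws u H * j := by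
  induction H, hjH using Nat.le_induction with
  | base => rfl
  | succ H hH ih =>
    have h1 : Ws u j ≤ j * u H := by
      have : Ws u j ≤ ∑ i ∈ Finset.range j, u H := by
        unfold Ws
        exact Finset.sum_le_sum fun i hi => hm (by have := Finset.mem_range.1 hi; omega)
      simpa using this
    rw [Ws_succ]; push_cast; linarith

lemma log_lb {a : ℝ} (ha : 0 ≤ a) : exp (a - a ^ 2 / 2) ≤ 1 + a := by
  rw [← le_log_iff_exp_le (by linarith)]
  have h := Real.le_log_one_add_of_nonneg ha
  refine le_trans ?_ h
  rw [le_div_iff₀ (by linarith)]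
  nlinarith [pow_nonneg ha 3]

namespace Par
variable {k : ℕ} {w ε δ t : ℝ}

lemma W_rat (P : Par k w ε δ t) (j : ℕ) (hj : j ≤ k) (s : ℝ) (hs : (j : ℝ) * w ≤ s) (hs1 : s ≤ 1) :
    Ws (fun i => (1 + w) ^ i) j ≤ j * (1 + s / 2 + s ^ 2) := by
  have h := P.W_hi j hj
  have hj0 : (0 : ℝ) ≤ j := by positivity
  have hw := P.hw
  have h0 : 0 ≤ (j : ℝ) * w := by positivity
  have h2 : ((j : ℝ) * w) ^ 2 ≤ s ^ 2 := by gcongr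
  have : (j : ℝ) + w * (j * j) / 2 + w ^ 2 * j ^ 3 = j * (1 + (j * w) / 2 + (j * w) ^ 2) := by ring
  rw [this] at h
  refine h.trans ?_
  gcongr

set_option maxHeartbeats 1000000 in
lemma E2_lo (P : Par k w ε δ t) (x : ℕ) (hx : x ≤ k - 1) (hxx : |(x : ℝ) - xb k w| ≤ t / ε) :
    δ * (1 - 6 * ε) ≤ E2f k w x := by
  have hL := P.L_pos
  have he := P.he; have ht := P.t_pos; have hd := P.δ_pos; have hk := P.k_pos; have he1 := P.he1
  have hdl := P.δle'; have hdle := P.δle; have hwk := P.wk; have hw := P.hw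
  have hR := P.R_pos; have hR2 := P.R_lo
  have hm0 := P.mm_pos
  have hm0' : (0 : ℝ) < mm k ε := by exact_mod_cast hm0
  have hmle := P.mm_le
  have hkge := P.k_ge
  set u : ℕ → ℝ := fun j => (1 + w) ^ j with hu
  have hu1 : ∀ j, 1 ≤ u j := fun j => one_le_pow₀ (by linarith)
  have hmono : Monotone u := pow_right_mono₀ (by linarith)
  set m := mm k ε with hm
  set H := k - k / 3 with hH
  have hHcast : (H : ℝ) = k - ((k / 3 : ℕ) : ℝ) := by rw [hH, Nat.cast_sub (by omega)]
  have hHhi : (H : ℝ) ≤ k * (67 / 100) := by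
    have : 3 * H ≤ 2 * k + 3 := by omega
    have : 3 * (H : ℝ) ≤ 2 * k + 3 := by exact_mod_cast this
    have := P.k_big; linarith
  have hHpos : 0 < (H : ℝ) := by rw [hHcast]; have := h_hi k; linarith
  set v := δ * m / 10 with hv
  have hv0 : 0 ≤ v := by positivity
  set D := 2 * δ * exp (-(v * (H / R k w)) + v ^ 2 / (2 * m)) with hD
  -- the average of the first m
  have hc1 : 1 ≤ Ws u m / m := by rw [le_div_iff₀ hm0', one_mul]; exact Ws_ge hu1 m
  have hc2 : Ws u m / m ≤ 1 + 2 * ε * δ := by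
    rw [div_le_iff₀ hm0']
    have h1 : (m : ℝ) * w ≤ 2 * ε * δ := by have := P.mm_hi; nlinarith
    have h2 := P.W_rat m (by omega) (2 * ε * δ) h1 (by nlinarith)
    refine h2.trans ?_
    rw [mul_comm]
    apply mul_le_mul_of_nonneg_right _ hm0'.le
    have := mul_pos he hd
    have h9 : ε * δ ≤ 1 / 100 := by nlinarith
    nlinarith
  -- z / R
  have hz : 1 - (1 - 2 * ε) * δ ≥ ((k - 1 - x : ℕ) : ℝ) / R k w := by
    have h1 := P.one_sub_R x hx
    have h2 := P.g_hi
    have h3 : -(ε * δ) ≤ ((x : ℝ) - xb k w) / R k w := by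
      rw [le_div_iff₀ hR]
      have h4 := (abs_le.1 hxx).1
      have h5 := P.tK'
      have : ε * δ * (k / 2) ≤ ε * δ * R k w := by gcongr
      nlinarith [mul_pos (mul_pos he hd) hk]
    linarith
  have hHR : 1 - 68 / 100 * δ ≤ H / R k w := by
    rw [le_div_iff₀ hR]
    have h2 : R k w ≤ H * (1 + (134 / 100 * δ) / 2 + (134 / 100 * δ) ^ 2) := P.W_rat H (by omega) (134 / 100 * δ) (by nlinarith) (by nlinarith)
    have h3 : (1 - 68 / 100 * δ) * R k w ≤ (1 - 68 / 100 * δ) * (H * (1 + (134 / 100 * δ) / 2 + (134 / 100 * δ) ^ 2)) := by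
      gcongr; nlinarith
    have h4 : (1 - 68 / 100 * δ) * (1 + (134 / 100 * δ) / 2 + (134 / 100 * δ) ^ 2) ≤ 1 := by nlinarith
    nlinarith
  have hcond : ∀ j, m ≤ j → j ≤ H → 1 - j * (Ws u m / m) / Ws u j ≤ D * (1 + v / Ws u j) ^ j := by
    intro j hmj hjH
    have hj0 : 0 < j := by omega
    have hj0' : (0 : ℝ) < j := by exact_mod_cast hj0
    have hmj' : (m : ℝ) ≤ j := by exact_mod_cast hmj
    have hWj : (j : ℝ) ≤ Ws u j := Ws_ge hu1 j
    have hW0 : 0 < Ws u j := by linarith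
    have h1 : 1 - j * (Ws u m / m) / Ws u j ≤ 2 * δ := by
      have h2 : Ws u j ≤ j * (1 + (2 * δ) / 2 + (2 * δ) ^ 2) := P.W_rat j (by omega) (2 * δ) (by
        have : (j : ℝ) ≤ k := by exact_mod_cast (by omega : j ≤ k)
        nlinarith) (by nlinarith)
      have h3 : 1 - 2 * δ ≤ j * (Ws u m / m) / Ws u j := by
        rw [le_div_iff₀ hW0]
        have h4 : (1 - 2 * δ) * Ws u j ≤ (1 - 2 * δ) * (j * (1 + (2 * δ) / 2 + (2 * δ) ^ 2)) := by
          apply mul_le_mul_of_nonneg_left h2; nlinarith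
        have h5 : (1 - 2 * δ) * (1 + (2 * δ) / 2 + (2 * δ) ^ 2) ≤ 1 := by nlinarith
        nlinarith
      linarith
    refine h1.trans ?_
    have h6 : exp (v * (H / R k w) - v ^ 2 / (2 * m)) ≤ (1 + v / Ws u j) ^ j := by
      have ha : 0 ≤ v / Ws u j := by positivity
      have h7 := pow_le_pow_left₀ (exp_pos _).le (log_lb ha) j
      refine le_trans ?_ h7
      rw [← exp_nat_mul]
      apply exp_le_exp.2
      have h8 : v * (H / R k w) ≤ j * (v / Ws u j) := by
        have h9 := Ws_avg hmono j H hjH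
        change _ ≤ R k w * j at h9
        have : (H : ℝ) / R k w ≤ j / Ws u j := by
          rw [div_le_div_iff₀ hR hW0]; linarith
        calc v * (H / R k w) ≤ v * (j / Ws u j) := by gcongr
          _ = _ := by ring
      have h10 : j * ((v / Ws u j) ^ 2 / 2) ≤ v ^ 2 / (2 * m) := by
        have : j * ((v / Ws u j) ^ 2 / 2) ≤ j * ((v / j) ^ 2 / 2) := by gcongr
        have e : j * ((v / j) ^ 2 / 2) = v ^ 2 / (2 * j) := by field_simp
        have : v ^ 2 / (2 * (j : ℝ)) ≤ v ^ 2 / (2 * m) := by gcongr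
        linarith
      linarith
    have h11 : D * exp (v * (H / R k w) - v ^ 2 / (2 * m)) = 2 * δ := by
      rw [hD, mul_assoc, ← exp_add]
      rw [show -(v * (↑H / R k w)) + v ^ 2 / (2 * ↑m) + (v * (↑H / R k w) - v ^ 2 / (2 * ↑m)) = 0 by ring, exp_zero, mul_one]
    have : 0 ≤ D := by positivity
    calc 2 * δ = D * exp (v * (H / R k w) - v ^ 2 / (2 * m)) := h11.symm
      _ ≤ _ := by gcongr
  have key := e2_lb (fun j => by linarith [hu1 j] : ∀ j, 0 < u j) hmono m H hm0 (by omega) v D hv0 (by positivity) hcond (k - 1 - x)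
  change _ ≤ E2f k w x at key
  refine le_trans ?_ key
  change δ * (1 - 6 * ε) ≤ 1 - ((k - 1 - x : ℕ) : ℝ) * (Ws u m / m) / R k w - D * (1 + v / R k w) ^ (k - 1 - x)
  set z := k - 1 - x with hzdef
  have hz0 : 0 ≤ (z : ℝ) / R k w := by positivity
  have k1 : (z : ℝ) * (Ws u m / m) / R k w ≤ 1 - (1 - 4 * ε) * δ := by
    have : (z : ℝ) * (Ws u m / m) / R k w = (z / R k w) * (Ws u m / m) := by ring
    rw [this]
    have h1 : (z / R k w) * (Ws u m / m) ≤ (1 - (1 - 2 * ε) * δ) * (1 + 2 * ε * δ) := by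
      apply mul_le_mul hz hc2 (by linarith) (by nlinarith)
    have : 0 ≤ (1 - 2 * ε) * δ * (2 * ε * δ) := by
      have : 0 ≤ 1 - 2 * ε := by linarith
      positivity
    nlinarith
  have k2 : D * (1 + v / R k w) ^ z ≤ ε * δ := by
    have h1 : (1 + v / R k w) ^ z ≤ exp (z * (v / R k w)) := by
      rw [exp_nat_mul]
      apply pow_le_pow_left₀ (by positivity)
      linarith [add_one_le_exp (v / R k w)]
    have h2 : D * (1 + v / R k w) ^ z ≤ 2 * δ * exp (-(v * (H / R k w)) + v ^ 2 / (2 * m) + z * (v / R k w)) := by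
      rw [exp_add _ ((z : ℝ) * _), ← mul_assoc, ← hD]
      have : 0 ≤ D := by positivity
      gcongr
    have h3 : -(v * (H / R k w)) + v ^ 2 / (2 * m) + z * (v / R k w) ≤ m * -((δ / 4) ^ 2 / 4) := by
      have e1 : z * (v / R k w) = v * (z / R k w) := by ring
      have e2 : v ^ 2 / (2 * m) = v * (δ / 20) := by rw [hv]; field_simp; ring
      rw [e1, e2]
      have h4 : v * (δ * (3 / 10)) ≤ v * (H / R k w - z / R k w) := by
        gcongr
        nlinarith
      have h5 : v * δ = δ ^ 2 * m / 10 := by rw [hv]; ring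
      nlinarith [mul_pos (mul_pos hd hd) hm0']
    have h4 := P.rho m P.mm_lo
    rw [← exp_nat_mul] at h4
    have h5 := exp_le_exp.2 h3
    have h6 : 2 * δ * exp (-(v * (H / R k w)) + v ^ 2 / (2 * m) + z * (v / R k w)) ≤ 2 * δ * (ε / 100) := by
      gcongr; linarith
    nlinarith [mul_pos he hd]
  nlinarith [mul_pos he hd]

end Par
end CAsymp

namespace CAsymp
namespace Par
variable {k : ℕ} {w ε δ t : ℝ}

noncomputable def bb (k : ℕ) (w : ℝ) (x : ℕ) : ℝ := (k - 1).choose x *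
    (L k w / Ws (fun j => (1 + w) ^ j) k) ^ x * (1 - L k w / Ws (fun j => (1 + w) ^ j) k) ^ (k - 1 - x)

lemma psi_eq (k : ℕ) (w : ℝ) : psi (1 + w) k (k / 3) = ∑ x ∈ Finset.range (k - 1 + 1), bb k w x * (E1f k w x * E2f k w x) := rfl

lemma p_nonneg (P : Par k w ε δ t) : 0 ≤ L k w / Ws (fun j => (1 + w) ^ j) k := by
  have := P.L_pos; have := P.G_pos; positivity
lemma p_le (P : Par k w ε δ t) : L k w / Ws (fun j => (1 + w) ^ j) k ≤ 1 := by
  rw [div_le_one P.G_pos]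
  have := R_eq k w; have := P.R_pos; linarith
lemma bb_nonneg (P : Par k w ε δ t) (x : ℕ) : 0 ≤ bb k w x := by
  have h1 := P.p_nonneg
  have h2 : 0 ≤ 1 - L k w / Ws (fun j => (1 + w) ^ j) k := by linarith [P.p_le]
  unfold bb; positivity
lemma bb_sum (k : ℕ) (w : ℝ) : ∑ x ∈ Finset.range (k - 1 + 1), bb k w x = 1 := bin_sum _ _
lemma np (P : Par k w ε δ t) : ((k - 1 : ℕ) : ℝ) * (L k w / Ws (fun j => (1 + w) ^ j) k) = xb k w := by
  rw [Nat.cast_sub (by have := P.k_ge; omega)]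
  unfold xb g; push_cast; ring
lemma bb_var (P : Par k w ε δ t) : ∑ x ∈ Finset.range (k - 1 + 1), bb k w x * ((x : ℝ) - xb k w) ^ 2 ≤ k * (34 / 100) := by
  have h := bin_var (k - 1) (L k w / Ws (fun j => (1 + w) ^ j) k)
  rw [P.np] at h
  have h1 : ∑ x ∈ Finset.range (k - 1 + 1), bb k w x * ((x : ℝ) - xb k w) ^ 2 = xb k w * (1 - L k w / Ws (fun j => (1 + w) ^ j) k) := by
    rw [← h]; rfl
  rw [h1]
  have := P.xb_hi; have := P.xb_lo; have := P.k_pos; have := P.p_nonneg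
  nlinarith

lemma E1f_nonneg (P : Par k w ε δ t) (x : ℕ) : 0 ≤ E1f k w x := e1_nonneg P.U_nonneg _ _
lemma E2f_nonneg (P : Par k w ε δ t) (x : ℕ) : 0 ≤ E2f k w x :=
  e2_nonneg (fun j => pow_nonneg (by linarith [P.hw]) _) _ _

lemma psi_lo (P : Par k w ε δ t) : 2 * δ ^ 2 * (1 - 15 * ε) ≤ psi (1 + w) k (k / 3) := by
  rw [psi_eq]
  have he := P.he; have ht := P.t_pos; have hd := P.δ_pos; have hk := P.k_pos; have he1 := P.he1
  set B := 2 * δ * (1 - 8 * ε) * (δ * (1 - 6 * ε)) with hB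
  have hB1 : 0 ≤ 2 * δ * (1 - 8 * ε) := by
    have : 0 ≤ 1 - 8 * ε := by linarith
    positivity
  have hB2 : 0 ≤ δ * (1 - 6 * ε) := by
    have : 0 ≤ 1 - 6 * ε := by linarith
    positivity
  have hB0 : 0 ≤ B := mul_nonneg hB1 hB2
  have hpt : ∀ x ∈ Finset.range (k - 1 + 1), bb k w x * B - (B * ε ^ 2 / k) * (bb k w x * ((x : ℝ) - xb k w) ^ 2) ≤
      bb k w x * (E1f k w x * E2f k w x) := by
    intro x hx
    have hx1 : x ≤ k - 1 := by have := Finset.mem_range.1 hx; omega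
    have hb := P.bb_nonneg x
    have : bb k w x * B - (B * ε ^ 2 / k) * (bb k w x * ((x : ℝ) - xb k w) ^ 2)
      = bb k w x * (B * (1 - ε ^ 2 * ((x : ℝ) - xb k w) ^ 2 / k)) := by ring
    rw [this]
    apply mul_le_mul_of_nonneg_left _ hb
    by_cases hc : |(x : ℝ) - xb k w| ≤ t / ε
    · have h1 := P.E1_lo x (by have := (abs_le.1 hc).1; linarith)
      have h2 := P.E2_lo x hx1 hc
      have h3 : B ≤ E1f k w x * E2f k w x := mul_le_mul h1 h2 hB2 (P.E1f_nonneg x)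
      refine le_trans ?_ h3
      have : 0 ≤ ε ^ 2 * ((x : ℝ) - xb k w) ^ 2 / k := by positivity
      nlinarith
    · push Not at hc
      have h1 : 0 ≤ E1f k w x * E2f k w x := mul_nonneg (P.E1f_nonneg x) (P.E2f_nonneg x)
      have h2 : (t / ε) ^ 2 ≤ ((x : ℝ) - xb k w) ^ 2 := by
        rw [← sq_abs ((x : ℝ) - xb k w)]; gcongr
      have h3 : 1 ≤ ε ^ 2 * ((x : ℝ) - xb k w) ^ 2 / k := by
        rw [le_div_iff₀ hk]
        rw [div_pow, P.t_sq, div_le_iff₀ (by positivity)] at h2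
        linarith
      nlinarith
  have h1 := Finset.sum_le_sum hpt
  rw [Finset.sum_sub_distrib, ← Finset.sum_mul, ← Finset.mul_sum, bb_sum] at h1
  refine le_trans ?_ h1
  have h2 : B * ε ^ 2 / k * ∑ x ∈ Finset.range (k - 1 + 1), bb k w x * ((x : ℝ) - xb k w) ^ 2 ≤ B * ε ^ 2 / k * (k * (34 / 100)) := by
    apply mul_le_mul_of_nonneg_left P.bb_var; positivity
  have h3 : B * ε ^ 2 / k * (k * (34 / 100)) = B * ε ^ 2 * (34 / 100) := by field_simp
  have h4 : B * ε ^ 2 ≤ B * (ε / 100) := by have := P.e2le; gcongr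
  have h5 : B ≤ 2 * δ ^ 2 := by rw [hB]; nlinarith [mul_pos he (mul_pos hd hd), mul_pos he (mul_pos he (mul_pos hd hd))]
  have h6 : 2 * δ ^ 2 * (1 - 14 * ε) ≤ B := by rw [hB]; nlinarith [mul_pos he (mul_pos he (mul_pos hd hd))]
  nlinarith

set_option maxHeartbeats 2000000 in
lemma psi_hi (P : Par k w ε δ t) : psi (1 + w) k (k / 3) ≤ 2 * δ ^ 2 * (1 + 15 * ε) := by
  rw [psi_eq]
  have he := P.he; have ht := P.t_pos; have hd := P.δ_pos; have hk := P.k_pos; have he1 := P.he1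
  have hit := P.inv_t
  have e2 := P.e2le; have e4 := P.e4le
  have htk : t / k = 1 / t := by rw [← P.t_sq]; field_simp
  set A := 2 * δ * (1 + 6 * ε) with hA
  have hA0 : 0 ≤ A := by positivity
  set c := A / t + ε * δ ^ 2 / 5 with hc
  have hpt : ∀ x ∈ Finset.range (k - 1 + 1), bb k w x * (E1f k w x * E2f k w x) ≤
      bb k w x * (A * ((1 + ε) * δ + 1 / t)) + (c / k) * (bb k w x * ((x : ℝ) - xb k w) ^ 2) := by
    intro x hx
    have hx1 : x ≤ k - 1 := by have := Finset.mem_range.1 hx; omega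
    have hb := P.bb_nonneg x
    have : bb k w x * (A * ((1 + ε) * δ + 1 / t)) + (c / k) * (bb k w x * ((x : ℝ) - xb k w) ^ 2)
      = bb k w x * (A * ((1 + ε) * δ + 1 / t) + c / k * ((x : ℝ) - xb k w) ^ 2) := by ring
    rw [this]
    apply mul_le_mul_of_nonneg_left _ hb
    have h2 := P.E2_hi x hx1
    rw [← sq_abs ((x : ℝ) - xb k w)]
    by_cases hcc : (x : ℝ) ≤ xb k w + t / ε
    · have h1 := P.E1_hi x hcc
      set y := |(x : ℝ) - xb k w| with hy
      have hy0 : 0 ≤ y := abs_nonneg _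
      have h3 : E1f k w x * E2f k w x ≤ A * ((1 + ε) * δ + 2 * y / k) :=
        mul_le_mul h1 h2 (P.E2f_nonneg x) hA0
      refine h3.trans ?_
      have h4 : 2 * y / k ≤ 1 / t + y ^ 2 / t / k := by
        rw [← htk, ← add_div]
        gcongr
        have : t + y ^ 2 / t - 2 * y = (t - y) ^ 2 / t := by field_simp; ring
        have : 0 ≤ (t - y) ^ 2 / t := by positivity
        linarith
      have h5 : A * ((1 + ε) * δ + 2 * y / k) ≤ A * ((1 + ε) * δ + (1 / t + y ^ 2 / t / k)) := by gcongr
      have h6 : c / k * y ^ 2 = A * (y ^ 2 / t / k) + ε * δ ^ 2 / 5 / k * y ^ 2 := by rw [hc]; ring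
      have h7 : 0 ≤ ε * δ ^ 2 / 5 / k * y ^ 2 := by positivity
      rw [h6]; nlinarith
    · push Not at hcc
      have h1 := P.E1_coarse x
      have hr0 : 0 < t / ε := by positivity
      have habs : |(x : ℝ) - xb k w| = (x : ℝ) - xb k w := abs_of_pos (by linarith)
      rw [max_eq_right (by linarith)] at h1
      rw [habs] at h2 ⊢
      set y := (x : ℝ) - xb k w with hy
      have hyr : t / ε ≤ y := by linarith
      have hy0 : 0 ≤ y := by linarith
      have h3 : E1f k w x * E2f k w x ≤ (17 * δ + 64 * y / k) * ((1 + ε) * δ + 2 * y / k) :=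
        mul_le_mul h1 h2 (P.E2f_nonneg x) (by positivity)
      refine h3.trans ?_
      have q1 : 1 ≤ ε ^ 2 * (y ^ 2 / k) := by
        have h2 : (t / ε) ^ 2 ≤ y ^ 2 := by gcongr
        rw [div_pow, P.t_sq, div_le_iff₀ (by positivity)] at h2
        rw [← mul_div_assoc, le_div_iff₀ hk]
        linarith
      have q2 : y / k ≤ ε * (ε ^ 4 * δ) * (y ^ 2 / k) := by
        have h3 : y ≤ ε * (1 / t) * y ^ 2 := by
          rw [div_le_iff₀ he] at hyr
          have : ε * (1 / t) * y ^ 2 = (y * ε / t) * y := by ring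
          rw [this]
          have : 1 ≤ y * ε / t := by rw [le_div_iff₀ ht]; linarith
          nlinarith
        have h4 : ε * (1 / t) * y ^ 2 ≤ ε * (ε ^ 4 * δ) * y ^ 2 := by gcongr
        calc y / k ≤ (ε * (ε ^ 4 * δ) * y ^ 2) / k := by gcongr; linarith
          _ = _ := by ring
      have q3 : (y / k) ^ 2 ≤ (ε ^ 4 * δ) ^ 2 * (y ^ 2 / k) := by
        have := P.inv_k
        calc (y / k) ^ 2 = (1 / k) * (y ^ 2 / k) := by ring
          _ ≤ _ := by gcongr
      set s := y / k with hs
      have hs0 : 0 ≤ s := by positivity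
      set Y := y ^ 2 / k with hY
      have hY0 : 0 ≤ Y := by positivity
      have e : (17 * δ + 64 * y / k) * ((1 + ε) * δ + 2 * y / k) = 17 * (1 + ε) * δ ^ 2 + (34 + 64 * (1 + ε)) * δ * s + 128 * s ^ 2 := by rw [hs]; ring
      have ec : c / k * y ^ 2 = A / t * Y + ε * δ ^ 2 / 5 * Y := by rw [hc, hY]; ring
      rw [e, ec]
      have p1 : 17 * (1 + ε) * δ ^ 2 * 1 ≤ 18 * δ ^ 2 * (ε / 100 * Y) := by
        have : 1 ≤ ε / 100 * Y := q1.trans (by gcongr)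
        gcongr; linarith
      have p2 : (34 + 64 * (1 + ε)) * δ * s ≤ 100 * δ * (ε * (1 / 1000000 * δ) * Y) := by
        have : s ≤ ε * (1 / 1000000 * δ) * Y := q2.trans (by gcongr; linarith)
        gcongr; linarith
      have p3 : 128 * s ^ 2 ≤ 128 * (ε / 1000000 * δ ^ 2 * Y) := by
        have : (ε ^ 4 * δ) ^ 2 ≤ ε / 1000000 * δ ^ 2 := by
          rw [mul_pow]; gcongr; nlinarith [show 0 ≤ ε ^ 4 by positivity]
        have : s ^ 2 ≤ ε / 1000000 * δ ^ 2 * Y := q3.trans (by gcongr)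
        gcongr
      have p4 : 0 ≤ A * ((1 + ε) * δ + 1 / t) := by positivity
      have p5 : 0 ≤ A / t * Y := by positivity
      have p6 : 0 ≤ ε * δ ^ 2 * Y := by positivity
      nlinarith
  have h1 := Finset.sum_le_sum hpt
  rw [Finset.sum_add_distrib, ← Finset.sum_mul, ← Finset.mul_sum, bb_sum] at h1
  refine h1.trans ?_
  have h2 : c / k * ∑ x ∈ Finset.range (k - 1 + 1), bb k w x * ((x : ℝ) - xb k w) ^ 2 ≤ c / k * (k * (34 / 100)) := by
    apply mul_le_mul_of_nonneg_left P.bb_var; positivity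
  have h3 : c / k * (k * (34 / 100)) = c * (34 / 100) := by field_simp
  have hit2 : 1 / t ≤ ε / 1000000 * δ := hit.trans (by gcongr)
  have h4 : A * ((1 + ε) * δ + 1 / t) ≤ A * ((1 + ε) * δ + ε / 1000000 * δ) := by gcongr
  have h5 : c ≤ A * (ε / 1000000 * δ) + ε * δ ^ 2 / 5 := by
    rw [hc, div_eq_mul_one_div A t]; gcongr
  have h6 : A ≤ 3 * δ := by rw [hA]; nlinarith
  have h7 : A * (ε / 1000000 * δ) ≤ 3 * δ * (ε / 1000000 * δ) := by gcongr
  have h8 : A * ((1 + ε) * δ) ≤ 2 * δ ^ 2 * (1 + 8 * ε) := by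
    rw [hA]; nlinarith [mul_pos he (mul_pos hd hd)]
  nlinarith [mul_pos he (mul_pos hd hd)]

end Par
end CAsymp

namespace CAsymp

lemma sinh_bd {b : ℝ} (h0 : 0 < b) (h1 : b ≤ 1) : |sinh b / b - 1 - b ^ 2 / 6| ≤ b ^ 4 / 50 := by
  have e1 := Real.exp_bound (x := b) (by rw [abs_of_pos h0]; exact h1) (n := 5) (by norm_num)
  have e2 := Real.exp_bound (x := -b) (by rw [abs_neg, abs_of_pos h0]; exact h1) (n := 5) (by norm_num)
  rw [abs_neg] at e2
  rw [abs_of_pos h0] at e1 e2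
  norm_num [Finset.sum_range_succ, Nat.factorial] at e1 e2
  rw [abs_le] at e1 e2
  have hs : sinh b / b - 1 - b ^ 2 / 6 = (sinh b - b - b ^ 3 / 6) / b := by field_simp
  rw [hs, abs_div, abs_of_pos h0, div_le_iff₀ h0, Real.sinh_eq]
  have h5 : 0 ≤ b ^ 5 := by positivity
  rw [abs_le]
  constructor <;> nlinarith

lemma log_bd {y : ℝ} (h : |y| ≤ 1 / 2) : |log (1 + y) - y| ≤ y ^ 2 := by
  have h' := abs_le.1 h
  rw [abs_le]
  constructor
  · have h1 : 1 - (1 + y)⁻¹ ≤ log (1 + y) := Real.one_sub_inv_le_log_of_pos (by linarith)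
    rcases le_total 0 y with hy | hy
    · have h2 : 1 - (1 + y)⁻¹ = y / (1 + y) := by field_simp; ring
      have h3 : y - y ^ 2 ≤ y / (1 + y) := by
        rw [le_div_iff₀ (by linarith)]; nlinarith [pow_nonneg hy 3]
      linarith
    · -- exp (y - y^2) ≤ 1 + y
      have h2 : y - y ^ 2 ≤ log (1 + y) := by
        rw [Real.le_log_iff_exp_le (by linarith)]
        have h3 := Real.exp_bound' (x := y ^ 2 - y) (by nlinarith) (by nlinarith) (n := 2) (by norm_num)
        have h4 : exp (y - y ^ 2) = (exp (y ^ 2 - y))⁻¹ := by rw [← exp_neg]; congr 1; ring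
        rw [h4, inv_le_comm₀ (exp_pos _) (by linarith)]
        have h5 : 1 + (y ^ 2 - y) + (y ^ 2 - y) ^ 2 / 2 ≤ exp (y ^ 2 - y) := by
          exact Real.quadratic_le_exp_of_nonneg (by nlinarith)
        refine le_trans ?_ h5
        rw [inv_le_iff_one_le_mul₀ (by linarith)]
        have : (1 + (y ^ 2 - y) + (y ^ 2 - y) ^ 2 / 2) * (1 + y) = 1 + y ^ 2 / 2 * (1 + y) + y^4 * (1+y)/2 - y^3 * (1+y) + y^2 * y + y - y^2 + y^2 - y  := by ring
        have y3 : y ^ 3 ≤ 0 := by nlinarith [sq_nonneg y]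
        nlinarith [sq_nonneg y, mul_nonneg (sq_nonneg y) (by linarith : 0 ≤ 1 + y), mul_nonneg (sq_nonneg (y^2)) (by linarith : 0 ≤ 1 + y)]
      linarith
  · have := Real.log_le_sub_one_of_pos (by linarith : 0 < 1 + y)
    nlinarith [sq_nonneg y]

lemma logsinh {b : ℝ} (h0 : 0 < b) (h1 : b ≤ 1) : |log (sinh b / b) - b ^ 2 / 6| ≤ b ^ 4 := by
  have h := sinh_bd h0 h1
  set y := sinh b / b - 1 with hy
  have h2 := abs_le.1 h
  have hb2 : b ^ 2 ≤ 1 := by nlinarith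
  have hb4 : b ^ 4 = b ^ 2 * b ^ 2 := by ring
  have hb5 : b ^ 4 ≤ b ^ 2 := by nlinarith [sq_nonneg b]
  have hy0 : 0 ≤ y := by nlinarith
  have hy1 : y ≤ b ^ 2 / 5 := by nlinarith
  have h3 := log_bd (y := y) (by rw [abs_of_nonneg hy0]; nlinarith)
  rw [show sinh b / b = 1 + y by rw [hy]; ring]
  have h4 := abs_le.1 h3
  have : y ^ 2 ≤ b ^ 4 / 25 := by nlinarith
  rw [abs_le]; constructor <;> nlinarith

set_option maxHeartbeats 1000000 in
/-- the log of the prefactor -/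
lemma pref_bd {k : ℕ} {w : ℝ} (hk : 1 ≤ k) (hw : 0 < w) (ha : w * k ≤ 1) :
    |((k : ℝ) - 1) * log (2 * sinh (k * log (1 + w) / 2) / (w * k)) - w ^ 2 * k ^ 3 / 24| ≤
      w * k + (w * k) ^ 2 + (w * k) ^ 3 + (w * k) ^ 4 * k := by
  have hk' : (1 : ℝ) ≤ k := by exact_mod_cast hk
  have hw1 : w ≤ 1 := by nlinarith
  set τ := log (1 + w) with hτ
  have t1 : τ ≤ w := by have := Real.log_le_sub_one_of_pos (by linarith : 0 < 1 + w); linarith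
  have t2 : 2 * w / (w + 2) ≤ τ := Real.le_log_one_add_of_nonneg hw.le
  have t3 : w - w ^ 2 / 2 ≤ τ := by
    refine le_trans ?_ t2
    rw [le_div_iff₀ (by linarith)]; nlinarith [pow_pos hw 3]
  have t0 : 0 < τ := by nlinarith
  set b := k * τ / 2 with hb
  have hb0 : 0 < b := by positivity
  have hb1 : b ≤ w * k / 2 := by rw [hb]; nlinarith
  have e : 2 * sinh b / (w * k) = (sinh b / b) * (τ / w) := by
    rw [hb]; field_simp
  have hsb : 0 < sinh b / b := div_pos (Real.sinh_pos_iff.2 hb0) hb0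
  rw [e, log_mul hsb.ne' (by positivity)]
  have l1 := abs_le.1 (logsinh hb0 (by linarith))
  have l2 : log (τ / w) ≤ 0 := Real.log_nonpos (by positivity) (by rw [div_le_one hw]; exact t1)
  have l3 : -(w / 2) ≤ log (τ / w) := by
    have h1 : (1 + w / 2)⁻¹ ≤ τ / w := by
      rw [le_div_iff₀ hw]
      refine le_trans (le_of_eq ?_) t2
      field_simp; ring
    have h2 := Real.log_le_log (by positivity) h1
    rw [Real.log_inv] at h2
    have := Real.log_le_sub_one_of_pos (by linarith : 0 < 1 + w / 2)
    linarith
  set a := w * k with ha'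
  have ha0 : 0 < a := by positivity
  have hk1 : 0 ≤ (k : ℝ) - 1 := by linarith
  have b4 : b ^ 4 ≤ a ^ 4 / 16 := by
    calc b ^ 4 ≤ (a / 2) ^ 4 := by gcongr
      _ = _ := by ring
  have b2 : b ^ 2 ≤ a ^ 2 / 4 := by
    calc b ^ 2 ≤ (a / 2) ^ 2 := by gcongr
      _ = _ := by ring
  have main1 : ((k : ℝ) - 1) * (b ^ 2 / 6) ≤ w ^ 2 * k ^ 3 / 24 := by
    have h1 : w ^ 2 * (k : ℝ) ^ 3 / 24 = k * (a ^ 2 / 4 / 6) := by rw [ha']; ring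
    rw [h1]
    gcongr
    linarith
  have main2 : w ^ 2 * k ^ 3 / 24 - a ^ 3 / 24 - a ^ 2 / 24 ≤ ((k : ℝ) - 1) * (b ^ 2 / 6) := by
    have h1 : w ^ 2 - w ^ 3 ≤ τ ^ 2 := by
      have h2 : (w - w ^ 2 / 2) ^ 2 ≤ τ ^ 2 := by
        apply pow_le_pow_left₀ _ t3
        nlinarith
      nlinarith [sq_nonneg (w ^ 2)]
    have h3 : k * (b ^ 2 / 6) = k ^ 3 * τ ^ 2 / 24 := by rw [hb]; ring
    have h4 : (k : ℝ) ^ 3 * (w ^ 2 - w ^ 3) ≤ k ^ 3 * τ ^ 2 := by gcongr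
    have h5 : a ^ 3 = k ^ 3 * w ^ 3 := by rw [ha']; ring
    nlinarith
  have c1 : ((k : ℝ) - 1) * (log (sinh b / b) - b ^ 2 / 6) ≤ k * (a ^ 4 / 16) := by
    calc ((k : ℝ) - 1) * (log (sinh b / b) - b ^ 2 / 6) ≤ (k - 1) * (a ^ 4 / 16) := by gcongr; linarith
      _ ≤ _ := by gcongr; linarith
  have c2 : -(k * (a ^ 4 / 16)) ≤ ((k : ℝ) - 1) * (log (sinh b / b) - b ^ 2 / 6) := by
    have : ((k : ℝ) - 1) * (-(a ^ 4 / 16)) ≤ ((k : ℝ) - 1) * (log (sinh b / b) - b ^ 2 / 6) := by gcongr; linarith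
    have : 0 ≤ a ^ 4 := by positivity
    nlinarith
  have c3 : ((k : ℝ) - 1) * log (τ / w) ≤ 0 := mul_nonpos_of_nonneg_of_nonpos hk1 l2
  have c4 : -a ≤ ((k : ℝ) - 1) * log (τ / w) := by
    have : ((k : ℝ) - 1) * (-(w / 2)) ≤ ((k : ℝ) - 1) * log (τ / w) := by gcongr
    rw [ha']; nlinarith
  have a4 : 0 ≤ a ^ 4 * k := by positivity
  have a3 : 0 ≤ a ^ 3 := by positivity
  have a2 : 0 ≤ a ^ 2 := by positivity
  rw [abs_le]
  constructor <;> nlinarith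

/-- factorised form of the iterated sum -/
lemma It_pref {k : ℕ} {w : ℝ} (hk : 3 ≤ k) (hw : 0 < w) :
    It (1 + w) k (k - 1) = (k : ℝ) ^ (k - 1) * exp (((k : ℝ) - 1) * log (2 * sinh (k * log (1 + w) / 2) / (w * k))) * psi (1 + w) k (k / 3) := by
  have h := It_psi (1 + w) (by linarith) k (k / 3) (by omega) (by omega)
  have hq : (1 : ℝ) < 1 + w := by linarith
  have hk0 : (0 : ℝ) < k := by exact_mod_cast (by omega : 0 < k)
  have hG : Ws (fun j => (1 + w) ^ j) k = ((1 + w) ^ k - 1) / w := by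
    unfold Ws; rw [geom_sum_eq (by linarith)]; simp
  set τ := log (1 + w) with hτ
  have hτ0 : 0 < τ := Real.log_pos hq
  have hqe : 1 + w = exp τ := (Real.exp_log (by linarith)).symm
  set S := 2 * sinh (k * τ / 2) / (w * k) with hS
  have hsinh : 0 < sinh (k * τ / 2) := Real.sinh_pos_iff.2 (by positivity)
  have hS0 : 0 < S := by positivity
  have hcast : ((k - 1 : ℕ) : ℝ) = (k : ℝ) - 1 := by rw [Nat.cast_sub (by omega)]; simp
  have h1 : exp (((k : ℝ) - 1) * log S) = S ^ (k - 1) := by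
    rw [← hcast, exp_nat_mul, exp_log hS0]
  have h2 : (1 + w) ^ k.choose 2 = exp (k * τ / 2) ^ (k - 1) := by
    rw [hqe, ← exp_nat_mul, ← exp_nat_mul, Nat.cast_choose_two, hcast]
    congr 1; ring
  have h3 : Ws (fun j => (1 + w) ^ j) k = k * S * exp (k * τ / 2) := by
    rw [hG, hS, Real.sinh_eq, hqe, ← exp_nat_mul]
    have : exp (k * τ) = exp (k * τ / 2) * exp (k * τ / 2) := by rw [← exp_add]; ring_nf
    have e2 : exp (-(k * τ / 2)) * exp (k * τ / 2) = 1 := by rw [← exp_add]; simp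
    rw [this]
    field_simp
    linear_combination e2
  rw [h3, h2, mul_pow] at h
  have hne : exp (k * τ / 2) ^ (k - 1) ≠ 0 := by positivity
  have : It (1 + w) k (k - 1) = (k * S) ^ (k - 1) * psi (1 + w) k (k / 3) := by
    apply mul_right_cancel₀ hne
    rw [h]; ring
  rw [this, h1, mul_pow]

/-- main asymptotics for the generating polynomial -/
noncomputable def TT (k : ℕ) (w : ℝ) : ℝ := (k : ℝ) ^ (k - 1) * exp (w ^ 2 * k ^ 3 / 24) * ((w * k) ^ 2 / 2)

lemma It_asymp {ι : Type*} (F : Filter ι) (k : ι → ℕ) (w : ι → ℝ) (hk : Tendsto k F atTop) (hw : ∀ᶠ i in F, 0 < w i)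
    (h1 : Tendsto (fun i => w i * k i) F (𝓝 0)) (h2 : Tendsto (fun i => w i * k i * √(k i)) F atTop)
    (h3 : Tendsto (fun i => (w i * k i) ^ 4 * k i) F (𝓝 0)) :
    Tendsto (fun i => It (1 + w i) (k i) (k i - 1) / TT (k i) (w i)) F (𝓝 1) := by
  have hpsi : Tendsto (fun i => psi (1 + w i) (k i) (k i / 3) / ((w i * k i) ^ 2 / 2)) F (𝓝 1) := by
    rw [Metric.tendsto_nhds]
    intro η hη
    set ε := min (1 / 100) (η / 30) with hε
    have he : 0 < ε := by positivity
    filter_upwards [hw, h1.eventually (gt_mem_nhds (by positivity : 0 < 2 * ε ^ 2)),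
      h2.eventually_ge_atTop (2 / ε ^ 4)] with i i1 i2 i3
    have P : Par (k i) (w i) ε (w i * k i / 2) (√(k i)) := by
      refine ⟨i1, he, min_le_left _ _, rfl, rfl, by linarith, ?_⟩
      rw [div_le_iff₀ (by positivity)] at i3
      linarith
    have p1 := P.psi_lo
    have p2 := P.psi_hi
    have hd := P.δ_pos
    have e : 2 * (w i * k i / 2) ^ 2 = (w i * k i) ^ 2 / 2 := by ring
    rw [e] at p1 p2
    have hpos : 0 < (w i * k i) ^ 2 / 2 := by rw [← e]; positivity
    rw [Real.dist_eq, abs_lt]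
    have hε2 : ε ≤ η / 30 := min_le_right _ _
    constructor
    · have : 1 - 15 * ε ≤ psi (1 + w i) (k i) (k i / 3) / ((w i * k i) ^ 2 / 2) := by
        rw [le_div_iff₀ hpos]; linarith
      linarith
    · have : psi (1 + w i) (k i) (k i / 3) / ((w i * k i) ^ 2 / 2) ≤ 1 + 15 * ε := by
        rw [div_le_iff₀ hpos]; linarith
      linarith
  have hpre : Tendsto (fun i => exp (((k i : ℝ) - 1) * log (2 * sinh (k i * log (1 + w i) / 2) / (w i * k i)) - w i ^ 2 * k i ^ 3 / 24)) F (𝓝 1) := by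
    suffices hz : Tendsto (fun i => ((k i : ℝ) - 1) * log (2 * sinh (k i * log (1 + w i) / 2) / (w i * k i)) - w i ^ 2 * k i ^ 3 / 24) F (𝓝 0) by
      have := (continuous_exp.tendsto 0).comp hz
      rw [exp_zero] at this
      exact this
    have hb : Tendsto (fun i => w i * k i + (w i * k i) ^ 2 + (w i * k i) ^ 3 + (w i * k i) ^ 4 * k i) F (𝓝 0) := by
      have := ((h1.add (h1.pow 2)).add (h1.pow 3)).add h3
      simpa using this
    apply squeeze_zero_norm' _ hb
    filter_upwards [hw, hk.eventually_ge_atTop 1, h1.eventually (gt_mem_nhds (one_pos))] with i i1 i2 i3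
    exact pref_bd i2 i1 i3.le
  have := hpre.mul hpsi
  rw [one_mul] at this
  refine this.congr' ?_
  filter_upwards [hw, hk.eventually_ge_atTop 3] with i i1 i2
  rw [It_pref i2 i1, TT, exp_sub]
  have : (0 : ℝ) < k i := by exact_mod_cast (by omega : 0 < k i)
  field_simp

end CAsymp

namespace CAsymp

lemma tail_id (c : ℕ → ℝ) (hc : ∀ n, 0 ≤ c n) (hs : ∀ v, 0 ≤ v → Summable fun n => c n * v ^ n) (n : ℕ) (v : ℝ)
    (hv : 0 < v) (hv1 : v ≤ 1) : ∃ T, 0 ≤ T ∧ T ≤ v ^ (n + 1) * ∑' i, c i * (1 : ℝ) ^ i ∧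
      ∑' i, c i * v ^ i = ∑ i ∈ Finset.range n, c i * v ^ i + c n * v ^ n + T := by
  refine ⟨∑' i, c (i + (n + 1)) * v ^ (i + (n + 1)), ?_, ?_, ?_⟩
  · exact tsum_nonneg fun i => mul_nonneg (hc _) (by positivity)
  · have s1 := hs 1 zero_le_one
    have s2 := (summable_nat_add_iff (n + 1)).2 s1
    have s3 := (summable_nat_add_iff (n + 1)).2 (hs v hv.le)
    calc ∑' i, c (i + (n + 1)) * v ^ (i + (n + 1)) ≤ ∑' i, v ^ (n + 1) * (c (i + (n + 1)) * 1 ^ (i + (n + 1))) := by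
          refine Summable.tsum_le_tsum (fun i => ?_) s3 (s2.mul_left _)
          rw [one_pow, mul_one, pow_add, mul_comm (v ^ (n + 1))]
          have : v ^ i ≤ 1 := pow_le_one₀ hv.le hv1
          have h1 : v ^ i * v ^ (n + 1) ≤ 1 * v ^ (n + 1) := by gcongr
          calc c (i + (n + 1)) * (v ^ i * v ^ (n + 1)) ≤ c (i + (n + 1)) * (1 * v ^ (n + 1)) :=
                mul_le_mul_of_nonneg_left h1 (hc _)
            _ = _ := by ring
      _ = v ^ (n + 1) * ∑' i, (c (i + (n + 1)) * 1 ^ (i + (n + 1))) := tsum_mul_left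
      _ ≤ _ := by
          apply mul_le_mul_of_nonneg_left _ (by positivity)
          rw [← s1.sum_add_tsum_nat_add (n + 1)]
          have : 0 ≤ ∑ i ∈ Finset.range (n + 1), c i * (1 : ℝ) ^ i :=
            Finset.sum_nonneg fun i _ => mul_nonneg (hc _) (by positivity)
          linarith
  · rw [← (hs v hv.le).sum_add_tsum_nat_add (n + 1), Finset.sum_range_succ]

lemma exp_tsum (v : ℝ) : HasSum (fun n : ℕ => 1 / (n.factorial : ℝ) * v ^ n) (exp v) := by
  refine hs_congr (hasSum_exp' v) (fun x => by ring) rfl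

lemma coef_conv (c : ℕ → ℕ → ℝ) (hc : ∀ k n, 0 ≤ c k n) (hs : ∀ k v, 0 ≤ v → Summable fun n => c k n * v ^ n)
    (hF : ∀ v, 0 ≤ v → Tendsto (fun k => ∑' n, c k n * v ^ n) atTop (𝓝 (exp v))) (n : ℕ) :
    Tendsto (fun k => c k n) atTop (𝓝 (1 / (n.factorial : ℝ))) := by
  induction n using Nat.strong_induction_on with
  | _ n ih =>
    rw [Metric.tendsto_nhds]
    intro η hη
    set B := 2 * exp 1 + 1 with hB
    have hB0 : 0 < B := by positivity
    set v := min 1 (η / (2 * B)) with hv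
    have hv0 : 0 < v := by positivity
    have hv1 : v ≤ 1 := min_le_left _ _
    have hvB : v * B ≤ η / 2 := by
      have : v ≤ η / (2 * B) := min_le_right _ _
      calc v * B ≤ η / (2 * B) * B := by gcongr
        _ = _ := by field_simp
    have hlim : Tendsto (fun k => |(∑' i, c k i * v ^ i) - exp v| + |∑ i ∈ Finset.range n, (c k i - 1 / (i.factorial : ℝ)) * v ^ i|) atTop (𝓝 0) := by
      have h1 : Tendsto (fun k => |(∑' i, c k i * v ^ i) - exp v|) atTop (𝓝 0) := by
        have := ((hF v hv0.le).sub_const (exp v)).abs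
        simpa using this
      have h2 : Tendsto (fun k => |∑ i ∈ Finset.range n, (c k i - 1 / (i.factorial : ℝ)) * v ^ i|) atTop (𝓝 0) := by
        have : Tendsto (fun k => ∑ i ∈ Finset.range n, (c k i - 1 / (i.factorial : ℝ)) * v ^ i) atTop (𝓝 (∑ i ∈ Finset.range n, 0)) := by
          refine tendsto_finset_sum _ fun i hi => ?_
          have := ((ih i (Finset.mem_range.1 hi)).sub_const (1 / (i.factorial : ℝ))).mul_const (v ^ i)
          simpa using this
        simpa using this.abs
      simpa using h1.add h2
    filter_upwards [hlim.eventually (gt_mem_nhds (by positivity : 0 < η / 2 * v ^ n)),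
      (hF 1 zero_le_one).eventually (gt_mem_nhds (by linarith : exp 1 < exp 1 + 1))] with k k1 k2
    obtain ⟨T, T0, T1, T2⟩ := tail_id (c k) (hc k) (hs k) n v hv0 hv1
    obtain ⟨T', T0', T1', T2'⟩ := tail_id (fun n => 1 / (n.factorial : ℝ)) (fun n => by positivity)
      (fun v _ => (exp_tsum v).summable) n v hv0 hv1
    rw [(exp_tsum v).tsum_eq] at T2'
    rw [(exp_tsum 1).tsum_eq] at T1'
    have hT : T + T' ≤ v ^ n * (v * B) := by
      have h1 : T ≤ v ^ (n + 1) * (exp 1 + 1) := T1.trans (by gcongr)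
      calc T + T' ≤ v ^ (n + 1) * (exp 1 + 1) + v ^ (n + 1) * exp 1 := by linarith
        _ = _ := by rw [hB]; ring
    have hkey : (c k n - 1 / (n.factorial : ℝ)) * v ^ n = ((∑' i, c k i * v ^ i) - exp v)
        - (∑ i ∈ Finset.range n, (c k i - 1 / (i.factorial : ℝ)) * v ^ i) - (T - T') := by
      simp_rw [sub_mul]
      rw [Finset.sum_sub_distrib, T2, T2']; ring
    have hvn : 0 < v ^ n := by positivity
    have habs : |c k n - 1 / (n.factorial : ℝ)| * v ^ n ≤ |(∑' i, c k i * v ^ i) - exp v|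
        + |∑ i ∈ Finset.range n, (c k i - 1 / (i.factorial : ℝ)) * v ^ i| + (T + T') := by
      have e : |c k n - 1 / (n.factorial : ℝ)| * v ^ n = |(c k n - 1 / (n.factorial : ℝ)) * v ^ n| := by
        rw [abs_mul, abs_of_pos hvn]
      rw [e, hkey]
      have h1 := abs_sub ((∑' i, c k i * v ^ i) - exp v - (∑ i ∈ Finset.range n, (c k i - 1 / (i.factorial : ℝ)) * v ^ i)) (T - T')
      have h2 := abs_sub ((∑' i, c k i * v ^ i) - exp v) (∑ i ∈ Finset.range n, (c k i - 1 / (i.factorial : ℝ)) * v ^ i)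
      have h3 : |T - T'| ≤ T + T' := by rw [abs_le]; constructor <;> linarith
      linarith
    rw [Real.dist_eq]
    have : v ^ n * (v * B) ≤ v ^ n * (η / 2) := by gcongr
    have : |c k n - 1 / (n.factorial : ℝ)| * v ^ n < η * v ^ n := by linarith
    exact lt_of_mul_lt_mul_right this hvn.le

lemma coef_neg (c : ℕ → ℕ → ℝ) (hc : ∀ k n, 0 ≤ c k n) (hs : ∀ k v, 0 ≤ v → Summable fun n => c k n * v ^ n)
    (hF : ∀ v, 0 ≤ v → Tendsto (fun k => ∑' n, c k n * v ^ n) atTop (𝓝 (exp v))) (v : ℝ) (hv : 0 ≤ v) :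
    Tendsto (fun k => ∑' n, c k n * (-v) ^ n) atTop (𝓝 (exp (-v))) := by
  rw [← (exp_tsum (-v)).tsum_eq]
  refine tendsto_tsum_of_dominated_convergence (bound := fun n => (exp (2 * v) + 1) * (1 / 2) ^ n) ?_ ?_ ?_
  · exact (summable_geometric_two).mul_left _
  · intro n
    exact (coef_conv c hc hs hF n).mul_const _
  · filter_upwards [(hF (2 * v) (by positivity)).eventually (gt_mem_nhds (by linarith : exp (2 * v) < exp (2 * v) + 1))] with k hk n
    rw [norm_mul, norm_pow, norm_neg, Real.norm_of_nonneg (hc k n), Real.norm_of_nonneg hv]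
    have h1 : c k n * (2 * v) ^ n ≤ ∑' n, c k n * (2 * v) ^ n :=
      (hs k (2 * v) (by positivity)).le_tsum n fun j _ => mul_nonneg (hc k j) (by positivity)
    have h2 : c k n * v ^ n = c k n * (2 * v) ^ n * (1 / 2) ^ n := by
      rw [mul_assoc, ← mul_pow]; congr 2; ring
    rw [h2]
    gcongr
    linarith

end CAsymp

namespace CAsymp

noncomputable def PP (k : ℕ) (w : ℝ) : ℝ := It (1 + w) k (k - 1)

noncomputable def rr (l : ℕ → ℕ) (k : ℕ) : ℝ := √(12 * l k) / (k * √k)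

def MM (l : ℕ → ℕ) (k : ℕ) : ℕ := Fintype.card (Sym2 (Fin k)) + 1 + (l k + 1)

lemma It_sum' {K : Type*} [Field K] (l : ℕ → ℕ) (w : K) (hw : w ≠ 0) (k : ℕ) (hk : 1 ≤ k) :
    It (1 + w) k (k - 1) = ∑ j ∈ Finset.range (MM l k), (connGraphCount k j : K) * w ^ j := by
  obtain ⟨k, rfl⟩ : ∃ k', k = k' + 1 := ⟨k - 1, by omega⟩
  exact It_eq_sum w hw k _ (by unfold MM; omega)

lemma rr_pos (l : ℕ → ℕ) (hpos : ∀ k, 0 < l k) (k : ℕ) (hk : 1 ≤ k) : 0 < rr l k := by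
  have := hpos k
  unfold rr
  have : (0 : ℝ) < k := by exact_mod_cast hk
  have : (0 : ℝ) < l k := by exact_mod_cast hpos k
  positivity

lemma rr_sq (l : ℕ → ℕ) (k : ℕ) : rr l k ^ 2 = 12 * l k / k ^ 3 := by
  unfold rr
  rw [div_pow, mul_pow, Real.sq_sqrt (by positivity), Real.sq_sqrt (by positivity)]
  ring

lemma rr_k (l : ℕ → ℕ) (k : ℕ) (hk : 1 ≤ k) : rr l k * k = √(12 * l k / k) := by
  have : (0 : ℝ) < k := by exact_mod_cast hk
  unfold rr
  rw [Real.sqrt_div (by positivity)]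
  field_simp

lemma rr_k2 (l : ℕ → ℕ) (k : ℕ) (hk : 1 ≤ k) : rr l k * k * √k = √(12 * l k) := by
  have : (0 : ℝ) < k := by exact_mod_cast hk
  unfold rr
  field_simp

lemma lsq_lim {l : ℕ → ℕ} 
    (hsmall : Tendsto (fun k : ℕ => (l k : ℝ) / Real.sqrt k) atTop (𝓝 0)) :
    Tendsto (fun k : ℕ => (l k : ℝ) ^ 2 / k) atTop (𝓝 0) := by
  have := hsmall.pow 2
  simp only [div_pow] at this
  refine (this.congr fun k => ?_).trans (by simp)
  rw [Real.sq_sqrt (by positivity)]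

lemma l_lim {l : ℕ → ℕ} (hpos : ∀ k, 0 < l k)
    (hsmall : Tendsto (fun k : ℕ => (l k : ℝ) / Real.sqrt k) atTop (𝓝 0)) :
    Tendsto (fun k : ℕ => (l k : ℝ) / k) atTop (𝓝 0) := by
  refine squeeze_zero (fun k => by positivity) (fun k => ?_) (lsq_lim hsmall)
  have : (1 : ℝ) ≤ l k := by exact_mod_cast hpos k
  gcongr
  nlinarith

lemma TT_rr (l : ℕ → ℕ) (k : ℕ) (hk : 1 ≤ k) (t : ℝ) :
    TT k (rr l k * t) = (k : ℝ) ^ (k - 1) * exp (l k * t ^ 2 / 2) * (6 * l k / k * t ^ 2) := by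
  have : (0 : ℝ) < k := by exact_mod_cast hk
  unfold TT
  simp only [mul_pow, rr_sq]
  congr 1
  · congr 2; field_simp; ring
  · field_simp; ring

lemma P_asymp {l : ℕ → ℕ} (hpos : ∀ k, 0 < l k) (hinf : Tendsto l atTop atTop)
    (hsmall : Tendsto (fun k : ℕ => (l k : ℝ) / Real.sqrt k) atTop (𝓝 0))
    {ι : Type*} (F : Filter ι) (k : ι → ℕ) (t : ι → ℝ) (hk : Tendsto k F atTop)
    (ht : ∀ᶠ i in F, 1 / 3 ≤ t i) (ht' : ∀ᶠ i in F, t i ≤ 3) :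
    Tendsto (fun i => PP (k i) (rr l (k i) * t i) / TT (k i) (rr l (k i) * t i)) F (𝓝 1) := by
  have hk1 : ∀ᶠ i in F, 1 ≤ k i := hk.eventually (eventually_ge_atTop 1)
  refine It_asymp F k (fun i => rr l (k i) * t i) hk ?_ ?_ ?_ ?_
  · filter_upwards [hk1, ht] with i h1 h2
    have := rr_pos l hpos (k i) h1
    have : 0 < t i := by linarith
    positivity
  · have h0 : Tendsto (fun k : ℕ => 3 * √(12 * (l k / k : ℝ))) atTop (𝓝 0) := by
      have := (((l_lim hpos hsmall).const_mul 12).sqrt).const_mul 3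
      simpa using this
    refine squeeze_zero' ?_ ?_ (h0.comp hk)
    · filter_upwards [hk1, ht] with i h1 h2
      have := rr_pos l hpos (k i) h1
      have : 0 < t i := by linarith
      positivity
    · filter_upwards [hk1, ht, ht'] with i h1 h2 h3
      have := rr_k l (k i) h1
      have e : rr l (k i) * t i * k i = t i * √(12 * l (k i) / k i) := by rw [← this]; ring
      rw [e, Function.comp, ← mul_div_assoc]
      gcongr
  · have h0 : Tendsto (fun k : ℕ => 1 / 3 * √(12 * (l k : ℝ))) atTop atTop := by
      refine Tendsto.const_mul_atTop (by norm_num) ?_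
      refine Real.tendsto_sqrt_atTop.comp ?_
      refine Tendsto.const_mul_atTop (by norm_num) ?_
      exact tendsto_natCast_atTop_atTop.comp hinf
    refine tendsto_atTop_mono' _ ?_ (h0.comp hk)
    filter_upwards [hk1, ht, ht'] with i h1 h2 h3
    have := rr_k2 l (k i) h1
    have e : rr l (k i) * t i * k i * √(k i) = t i * √(12 * l (k i)) := by rw [← this]; ring
    rw [e, Function.comp]
    gcongr
  · have h0 : Tendsto (fun k : ℕ => 81 * 144 * ((l k : ℝ) ^ 2 / k)) atTop (𝓝 0) := by
      have := (lsq_lim hsmall).const_mul (81 * 144)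
      simpa using this
    refine squeeze_zero' (Eventually.of_forall fun i => by positivity) ?_ (h0.comp hk)
    filter_upwards [hk1, ht, ht'] with i h1 h2 h3
    have hkp : (0 : ℝ) < k i := by exact_mod_cast h1
    have e : (rr l (k i) * t i * k i) ^ 4 * k i = (rr l (k i) ^ 2) ^ 2 * t i ^ 4 * k i ^ 5 := by ring
    rw [e, rr_sq, Function.comp]
    have : t i ^ 4 ≤ 3 ^ 4 := by gcongr
    calc (12 * (l (k i) : ℝ) / k i ^ 3) ^ 2 * t i ^ 4 * k i ^ 5 = t i ^ 4 * 144 * ((l (k i) : ℝ) ^ 2 / k i) := by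
          field_simp; ring
      _ ≤ 3 ^ 4 * 144 * ((l (k i) : ℝ) ^ 2 / k i) := by gcongr
      _ = _ := by norm_num

lemma P_ratio {l : ℕ → ℕ} (hpos : ∀ k, 0 < l k) (hinf : Tendsto l atTop atTop)
    (hsmall : Tendsto (fun k : ℕ => (l k : ℝ) / Real.sqrt k) atTop (𝓝 0))
    {ι : Type*} (F : Filter ι) (k : ι → ℕ) (t : ι → ℝ) (hk : Tendsto k F atTop)
    (ht : ∀ᶠ i in F, 1 / 3 ≤ t i) (ht' : ∀ᶠ i in F, t i ≤ 3) :
    Tendsto (fun i => PP (k i) (rr l (k i) * t i) / PP (k i) (rr l (k i)) /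
      (exp (l (k i) / 2 * (t i ^ 2 - 1)) * t i ^ 2)) F (𝓝 1) := by
  have hk1 : ∀ᶠ i in F, 1 ≤ k i := hk.eventually (eventually_ge_atTop 1)
  have h1 := P_asymp hpos hinf hsmall F k t hk ht ht'
  have h2 := P_asymp hpos hinf hsmall F k (fun _ => 1) hk (Eventually.of_forall fun _ => by norm_num)
    (Eventually.of_forall fun _ => by norm_num)
  have h3 := h1.div h2 one_ne_zero
  rw [div_one] at h3
  refine h3.congr' ?_
  filter_upwards [hk1, ht] with i h1 h2
  simp only [Pi.div_apply]
  rw [TT_rr l _ h1, TT_rr l _ h1, mul_one]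
  have hkp : (0 : ℝ) < k i := by exact_mod_cast h1
  have hlp : (0 : ℝ) < l (k i) := by exact_mod_cast hpos _
  have : t i ≠ 0 := by intro h; rw [h] at h2; norm_num at h2
  have e : exp (l (k i) * t i ^ 2 / 2) = exp (l (k i) / 2 * (t i ^ 2 - 1)) * exp (l (k i) * 1 ^ 2 / 2) := by
    rw [← exp_add]; congr 1; ring
  rw [e]
  by_cases hP : PP (k i) (rr l (k i)) = 0
  · simp [hP]
  field_simp
  

end CAsymp

namespace CAsymp

lemma It_mono {a b : ℝ} (h0 : 0 ≤ a) (hab : a ≤ b) (n : ℕ) : ∀ u, 0 ≤ It a n u ∧ It a n u ≤ It b n u := by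
  induction n with
  | zero => intro u; simp only [It]; split_ifs <;> norm_num
  | succ n ih =>
    intro u
    simp only [It]
    split_ifs
    · constructor
      · exact Finset.sum_nonneg fun c _ => mul_nonneg (by positivity) (ih _).1
      · refine Finset.sum_le_sum fun c _ => ?_
        have := ih (u - c)
        refine mul_le_mul ?_ this.2 this.1 (mul_nonneg (by positivity) (pow_nonneg (h0.trans hab) _))
        gcongr
    · norm_num

lemma It_norm (q : ℂ) (n : ℕ) : ∀ u, ‖It q n u‖ ≤ It ‖q‖ n u := by
  induction n with
  | zero => intro u; simp only [It]; split_ifs <;> simp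
  | succ n ih =>
    intro u
    simp only [It]
    split_ifs
    · refine (norm_sum_le _ _).trans (Finset.sum_le_sum fun c _ => ?_)
      rw [norm_mul, norm_mul, norm_pow, Complex.norm_natCast]
      gcongr
      exact ih _
    · simp

lemma PP_nonneg {k : ℕ} {w : ℝ} (hw : 0 ≤ w) : 0 ≤ PP k w := (It_mono (by linarith : 0 ≤ 1 + w) le_rfl _ _).1

lemma rr_nonneg (l : ℕ → ℕ) (k : ℕ) : 0 ≤ rr l k := by unfold rr; positivity

noncomputable def pp (l : ℕ → ℕ) (k j : ℕ) : ℝ := (connGraphCount k j : ℝ) * rr l k ^ j / PP k (rr l k)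

noncomputable def xx (l : ℕ → ℕ) (k j : ℕ) : ℝ := ((j : ℝ) - l k) / √(l k)

lemma pp_nonneg (l : ℕ → ℕ) (k j : ℕ) : 0 ≤ pp l k j := by
  have := rr_nonneg l k
  have := PP_nonneg (k := k) this
  unfold pp; positivity

lemma mgf_eq {l : ℕ → ℕ} (hpos : ∀ k, 0 < l k) (k : ℕ) (hk : 1 ≤ k) (u : ℝ) :
    ∑ j ∈ Finset.range (MM l k), pp l k j * exp (u * xx l k j) =
      PP k (rr l k * exp (u / √(l k))) / PP k (rr l k) * exp (- (u * √(l k))) := by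
  have hr := rr_pos l hpos k hk
  have hl : (0 : ℝ) < l k := by exact_mod_cast hpos k
  have hs : √(l k : ℝ) ≠ 0 := by positivity
  rw [PP, It_sum' l _ (by positivity) k hk, Finset.sum_div, Finset.sum_mul]
  refine Finset.sum_congr rfl fun j _ => ?_
  have : exp (u * xx l k j) = exp (u / √(l k)) ^ j * exp (- (u * √(l k))) := by
    rw [← exp_nat_mul, ← exp_add]
    congr 1
    unfold xx
    field_simp
    rw [Real.sq_sqrt hl.le]; ring
  rw [this, pp, mul_pow]; ring

lemma exp3 {z : ℝ} (hz : |z| ≤ 1) : |exp z - 1 - z - z ^ 2 / 2| ≤ |z| ^ 3 := by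
  have := Real.exp_bound hz (n := 3) (by norm_num)
  simp [Finset.sum_range_succ, Nat.factorial] at this
  have h3 : 0 ≤ |z| ^ 3 := by positivity
  calc |exp z - 1 - z - z ^ 2 / 2| = |exp z - (1 + z + z ^ 2 / 2)| := by congr 1; ring
    _ ≤ _ := this
    _ ≤ |z| ^ 3 := by nlinarith

lemma sqrt_lim {l : ℕ → ℕ} (hinf : Tendsto l atTop atTop) : Tendsto (fun k => √(l k : ℝ)) atTop atTop :=
  Real.tendsto_sqrt_atTop.comp (tendsto_natCast_atTop_atTop.comp hinf)

lemma mgf_lim {l : ℕ → ℕ} (hpos : ∀ k, 0 < l k) (hinf : Tendsto l atTop atTop)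
    (hsmall : Tendsto (fun k : ℕ => (l k : ℝ) / Real.sqrt k) atTop (𝓝 0)) (u : ℝ) :
    Tendsto (fun k => ∑ j ∈ Finset.range (MM l k), pp l k j * exp (u * xx l k j)) atTop (𝓝 (exp (u ^ 2))) := by
  have hy : Tendsto (fun k => u / √(l k : ℝ)) atTop (𝓝 0) := (sqrt_lim hinf).const_div_atTop u
  have ht : Tendsto (fun k => exp (u / √(l k : ℝ))) atTop (𝓝 1) := by
    have := (Real.continuous_exp.tendsto 0).comp hy
    rw [exp_zero] at this
    exact this
  have h1 := P_ratio hpos hinf hsmall atTop id (fun k => exp (u / √(l k : ℝ))) tendsto_id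
    ((ht.eventually (lt_mem_nhds (by norm_num : (1 / 3 : ℝ) < 1))).mono fun _ h => h.le)
    ((ht.eventually (gt_mem_nhds (by norm_num : (1 : ℝ) < 3))).mono fun _ h => h.le)
  have h2 : Tendsto (fun k => (l k : ℝ) / 2 * (exp (u / √(l k : ℝ)) ^ 2 - 1) - u * √(l k)) atTop (𝓝 (u ^ 2)) := by
    rw [tendsto_iff_dist_tendsto_zero]
    have hz : Tendsto (fun k => 4 * |u| ^ 3 / √(l k : ℝ)) atTop (𝓝 0) := (sqrt_lim hinf).const_div_atTop _
    refine squeeze_zero' (Eventually.of_forall fun _ => dist_nonneg) ?_ hz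
    have hy2 : Tendsto (fun k => |2 * (u / √(l k : ℝ))|) atTop (𝓝 0) := by
      have := (hy.const_mul 2).abs
      simpa using this
    filter_upwards [hy2.eventually (gt_mem_nhds (by norm_num : (0 : ℝ) < 1))] with k hk
    have := exp3 hk.le
    have hl : (0 : ℝ) < l k := by exact_mod_cast hpos k
    have hs : 0 < √(l k : ℝ) := by positivity
    have hss : √(l k : ℝ) ^ 2 = l k := Real.sq_sqrt hl.le
    rw [Real.dist_eq]
    have e1 : (l k : ℝ) / 2 * (exp (u / √(l k : ℝ)) ^ 2 - 1) - u * √(l k) - u ^ 2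
      = l k / 2 * (exp (2 * (u / √(l k : ℝ))) - 1 - 2 * (u / √(l k : ℝ)) - (2 * (u / √(l k : ℝ))) ^ 2 / 2) := by
      rw [← exp_nat_mul]
      push_cast
      have a1 : (l k : ℝ) / 2 * (2 * (u / √(l k : ℝ))) = u * √(l k) := by
        rw [← hss, Real.sqrt_sq hs.le]; field_simp
      have a2 : (l k : ℝ) / 2 * ((2 * (u / √(l k : ℝ))) ^ 2 / 2) = u ^ 2 := by
        rw [mul_pow, div_pow, hss]; field_simp
      linarith
    rw [e1, abs_mul, abs_of_pos (by positivity : 0 < (l k : ℝ) / 2)]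
    calc (l k : ℝ) / 2 * _ ≤ l k / 2 * |2 * (u / √(l k : ℝ))| ^ 3 := by gcongr
      _ = _ := by
        rw [abs_mul, abs_div, abs_of_pos hs, mul_pow, div_pow, abs_of_pos (by norm_num : (0 : ℝ) < 2)]
        have : √(l k : ℝ) ^ 3 = l k * √(l k) := by rw [← hss, Real.sqrt_sq hs.le]; ring
        rw [this]; field_simp; ring
  have h3 := (h1.mul ((Real.continuous_exp.tendsto _).comp h2)).mul (ht.pow 2)
  rw [one_mul, one_pow, mul_one] at h3
  refine h3.congr' ?_
  filter_upwards [eventually_ge_atTop 1] with k hk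
  rw [mgf_eq hpos k hk]
  simp only [id, Function.comp]
  rw [sub_eq_add_neg _ (u * √(l k : ℝ)), exp_add]
  have := (exp_pos ((l k : ℝ) / 2 * (exp (u / √(l k : ℝ)) ^ 2 - 1))).ne'
  have := (exp_pos (u / √(l k : ℝ))).ne'
  field_simp

noncomputable def ff (l : ℕ → ℕ) (k : ℕ) (x : ℝ) : ℝ :=
  ∑ j ∈ Finset.range (MM l k), pp l k j * cos (x * xx l k j)

lemma cos_lim {l : ℕ → ℕ} (hpos : ∀ k, 0 < l k) (hinf : Tendsto l atTop atTop)
    (hsmall : Tendsto (fun k : ℕ => (l k : ℝ) / Real.sqrt k) atTop (𝓝 0)) (x : ℝ) :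
    Tendsto (fun k => ff l k x) atTop (𝓝 (exp (- x ^ 2))) := by
  set c : ℕ → ℕ → ℝ := fun k n => ∑ j ∈ Finset.range (MM l k), pp l k j * (xx l k j ^ (2 * n) / (2 * n).factorial) with hcd
  have hcosh : ∀ k u, HasSum (fun n => c k n * (u ^ 2) ^ n) (∑ j ∈ Finset.range (MM l k), pp l k j * cosh (u * xx l k j)) := by
    intro k u
    have := hasSum_sum (s := Finset.range (MM l k)) (fun j _ => (Real.hasSum_cosh (u * xx l k j)).mul_left (pp l k j))
    refine hs_congr this (fun n => ?_) rfl
    rw [hcd]; dsimp only; rw [Finset.sum_mul]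
    refine Finset.sum_congr rfl fun j _ => ?_
    rw [mul_pow, ← pow_mul]; ring
  have hcos : ∀ k, HasSum (fun n => c k n * (-(x ^ 2)) ^ n) (ff l k x) := by
    intro k
    have := hasSum_sum (s := Finset.range (MM l k)) (fun j _ => (Real.hasSum_cos (x * xx l k j)).mul_left (pp l k j))
    refine hs_congr this (fun n => ?_) rfl
    rw [hcd]; dsimp only; rw [Finset.sum_mul]
    refine Finset.sum_congr rfl fun j _ => ?_
    rw [mul_pow, neg_pow, ← pow_mul]; ring
  have key := coef_neg c (fun k n => ?_) (fun k v hv => ?_) (fun v hv => ?_) (x ^ 2) (by positivity)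
  · refine key.congr fun k => ?_
    exact (hcos k).tsum_eq
  · refine Finset.sum_nonneg fun j _ => mul_nonneg (pp_nonneg l k j) (div_nonneg ?_ (by positivity))
    rw [pow_mul]; positivity
  · have := (hcosh k (√v)).summable
    rwa [Real.sq_sqrt hv] at this
  · have h1 := mgf_lim hpos hinf hsmall (√v)
    have h2 := mgf_lim hpos hinf hsmall (-√v)
    have h3 := (h1.add h2).div_const 2
    rw [neg_sq, Real.sq_sqrt hv, add_self_div_two] at h3
    refine h3.congr fun k => ?_
    have := (hcosh k (√v)).tsum_eq
    rw [Real.sq_sqrt hv] at this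
    rw [this, ← Finset.sum_add_distrib, Finset.sum_div]
    refine Finset.sum_congr rfl fun j _ => ?_
    rw [Real.cosh_eq]
    rw [neg_mul]; ring

end CAsymp

namespace CAsymp

lemma ff_bound {l : ℕ → ℕ} (hpos : ∀ k, 0 < l k) (k : ℕ) (hk : 1 ≤ k) (φ ρ : ℝ) (hρ0 : 0 ≤ ρ)
    (hρ : cos φ + rr l k / 2 ≤ ρ) :
    |ff l k (√(l k) * φ)| ≤ PP k (rr l k * ρ) / PP k (rr l k) := by
  have hr := rr_pos l hpos k hk
  have hP := PP_nonneg (k := k) hr.le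
  have hl : (0 : ℝ) < l k := by exact_mod_cast hpos k
  have hs : √(l k : ℝ) ≠ 0 := by positivity
  set z : ℂ := rr l k * Complex.exp (φ * Complex.I) with hz
  have hz0 : z ≠ 0 := mul_ne_zero (by exact_mod_cast hr.ne') (Complex.exp_ne_zero _)
  have h1 := It_sum' l z hz0 k hk
  have hnorm : ‖1 + z‖ ≤ 1 + rr l k * ρ := by
    refine abs_le_of_sq_le_sq' ?_ (by positivity) |>.2
    rw [← Complex.normSq_eq_norm_sq, Complex.normSq_apply]
    have hre : (1 + z).re = 1 + rr l k * cos φ := by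
      simp [hz, Complex.exp_ofReal_mul_I_re]
    have him : (1 + z).im = rr l k * sin φ := by
      simp [hz, Complex.exp_ofReal_mul_I_im]
    rw [hre, him]
    have := sin_sq_add_cos_sq φ
    have e : (1 + rr l k * cos φ) * (1 + rr l k * cos φ) + rr l k * sin φ * (rr l k * sin φ)
      = 1 + 2 * rr l k * (cos φ + rr l k / 2) + rr l k ^ 2 * (sin φ ^ 2 + cos φ ^ 2 - 1) := by ring
    rw [e, this]
    have h2 : 2 * rr l k * (cos φ + rr l k / 2) ≤ 2 * rr l k * ρ := by gcongr
    have : 0 ≤ (rr l k * ρ) ^ 2 := by positivity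
    nlinarith
  have h2 : ‖It (1 + z) k (k - 1)‖ ≤ PP k (rr l k * ρ) :=
    (It_norm _ _ _).trans (It_mono (norm_nonneg _) hnorm _ _).2
  have h3 : ff l k (√(l k) * φ) =
      (It (1 + z) k (k - 1) * Complex.exp (((-(l k * φ) : ℝ) : ℂ) * Complex.I)).re / PP k (rr l k) := by
    rw [h1, Finset.sum_mul, Complex.re_sum, Finset.sum_div, ff]
    refine Finset.sum_congr rfl fun j _ => ?_
    have : (connGraphCount k j : ℂ) * z ^ j * Complex.exp (((-(l k * φ) : ℝ) : ℂ) * Complex.I)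
      = ((connGraphCount k j * rr l k ^ j : ℝ) : ℂ) * Complex.exp (((√(l k) * φ * xx l k j : ℝ) : ℂ) * Complex.I) := by
      have e : √(l k) * φ * xx l k j = j * φ - l k * φ := by
        unfold xx; field_simp
      rw [e, hz, mul_pow, ← Complex.exp_nat_mul, mul_assoc, mul_assoc, ← Complex.exp_add]
      push_cast
      rw [mul_assoc]
      congr 4
      ring
    rw [this, Complex.re_ofReal_mul, Complex.exp_ofReal_mul_I_re, pp]
    ring
  rw [h3, abs_div, abs_of_nonneg hP]
  gcongr
  refine (Complex.abs_re_le_norm _).trans ?_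
  rw [norm_mul, Complex.norm_exp_ofReal_mul_I, mul_one]
  exact h2

lemma lr_lim {l : ℕ → ℕ} (hpos : ∀ k, 0 < l k) 
    (hsmall : Tendsto (fun k : ℕ => (l k : ℝ) / Real.sqrt k) atTop (𝓝 0)) :
    Tendsto (fun k => l k * rr l k) atTop (𝓝 0) := by
  have h := (((l_lim hpos hsmall).pow 3).const_mul 12).sqrt
  simp only [ne_eq, OfNat.ofNat_ne_zero, not_false_eq_true, zero_pow, mul_zero, sqrt_zero] at h
  refine h.congr fun k => ?_
  have := rr_nonneg l k
  rw [Real.sqrt_eq_iff_mul_self_eq (by positivity) (by positivity)]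
  have := rr_sq l k
  symm
  calc (l k * rr l k) * (l k * rr l k) = l k ^ 2 * rr l k ^ 2 := by ring
    _ = _ := by rw [this]; ring

lemma ff_dom {l : ℕ → ℕ} (hpos : ∀ k, 0 < l k) (hinf : Tendsto l atTop atTop)
    (hsmall : Tendsto (fun k : ℕ => (l k : ℝ) / Real.sqrt k) atTop (𝓝 0)) :
    ∀ᶠ k in atTop, ∀ x, |x| ≤ √(l k) * π → |ff l k x| ≤ 8 * exp 1 * exp (- (1 / 40) * x ^ 2) := by
  have h1 := P_ratio hpos hinf hsmall (atTop ×ˢ 𝓟 (Set.Icc (1 / 2 : ℝ) 2)) Prod.fst Prod.snd tendsto_fst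
    (by rw [eventually_prod_principal_iff]; exact Eventually.of_forall fun _ t ht => by linarith [ht.1])
    (by rw [eventually_prod_principal_iff]; exact Eventually.of_forall fun _ t ht => by linarith [ht.2])
  have h2 := h1.eventually (gt_mem_nhds (by norm_num : (1 : ℝ) < 2))
  rw [eventually_prod_principal_iff] at h2
  filter_upwards [h2, eventually_ge_atTop 1, (lr_lim hpos hsmall).eventually (gt_mem_nhds (by norm_num : (0 : ℝ) < 1))]
    with k k1 k2 k3 x hx
  have hr := rr_pos l hpos k k2
  have hl1 : (1 : ℝ) ≤ l k := by exact_mod_cast hpos k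
  have hs : 0 < √(l k : ℝ) := by positivity
  have hr1 : rr l k ≤ 1 := by nlinarith
  set φ := x / √(l k) with hφ
  have hxφ : x = √(l k) * φ := by rw [hφ]; field_simp
  have hφπ : |φ| ≤ π := by
    rw [hxφ, abs_mul, abs_of_pos hs] at hx
    exact le_of_mul_le_mul_left hx hs
  have hπ : π ^ 2 ≤ 10 := by nlinarith [pi_lt_d2, pi_pos]
  have hφ2 : φ ^ 2 ≤ 10 := by
    have : φ ^ 2 ≤ π ^ 2 := sq_le_sq' (by linarith [abs_le.1 hφπ]) (abs_le.1 hφπ).2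
    linarith
  have hcos := Real.cos_le_one_sub_mul_cos_sq hφπ
  have hc2 : 1 / 20 ≤ 2 / π ^ 2 := by rw [div_le_div_iff₀ (by norm_num) (by positivity)]; linarith
  have hc3 : 1 / 20 * φ ^ 2 ≤ 2 / π ^ 2 * φ ^ 2 := by gcongr
  set ρ := 1 - 1 / 20 * φ ^ 2 + rr l k / 2 with hρ
  have hρm : ρ ∈ Set.Icc (1 / 2 : ℝ) 2 := ⟨by linarith, by linarith [sq_nonneg φ]⟩
  have hb := ff_bound hpos k k2 φ ρ (by linarith [hρm.1]) (by linarith)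
  have hb2 := k1 ρ hρm
  have hρp : 0 < ρ := by linarith [hρm.1]
  rw [div_lt_iff₀ (by positivity)] at hb2
  rw [hxφ]
  refine hb.trans (hb2.le.trans ?_)
  have hρ2 : ρ ^ 2 ≤ 4 := by nlinarith [hρm.2]
  have he : exp ((l k : ℝ) / 2 * (ρ ^ 2 - 1)) ≤ exp 1 * exp (- (1 / 40) * (√(l k) * φ) ^ 2) := by
    rw [← exp_add]
    gcongr
    rw [mul_pow, Real.sq_sqrt (by positivity)]
    have ha : 0 ≤ φ ^ 2 := sq_nonneg _
    have : ρ ^ 2 - 1 ≤ - (1 / 20) * φ ^ 2 + 2 * rr l k := by rw [hρ]; nlinarith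
    calc (l k : ℝ) / 2 * (ρ ^ 2 - 1) ≤ l k / 2 * (- (1 / 20) * φ ^ 2 + 2 * rr l k) := by gcongr
      _ = l k * rr l k + - (1 / 40) * (l k * φ ^ 2) := by ring
      _ ≤ _ := by linarith
  calc 2 * (exp ((l k : ℝ) / 2 * (ρ ^ 2 - 1)) * ρ ^ 2) ≤ 2 * ((exp 1 * exp (- (1 / 40) * (√(l k) * φ) ^ 2)) * 4) := by gcongr
    _ = _ := by ring

lemma int_cos (n : ℤ) : ∫ φ in (-π)..π, cos ((n : ℝ) * φ) = if n = 0 then 2 * π else 0 := by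
  split_ifs with h
  · subst h; simp; ring
  · have hn : (n : ℝ) ≠ 0 := by exact_mod_cast h
    rw [intervalIntegral.integral_comp_mul_left _ hn, integral_cos]
    simp [Real.sin_int_mul_pi]

lemma ff_int {l : ℕ → ℕ} (hpos : ∀ k, 0 < l k) (k : ℕ) :
    ∫ x in (-(√(l k) * π))..(√(l k) * π), ff l k x = 2 * π * √(l k) * pp l k (l k) := by
  have hl : (0 : ℝ) < l k := by exact_mod_cast hpos k
  have hs : √(l k : ℝ) ≠ 0 := by positivity
  have h1 := intervalIntegral.integral_comp_mul_left (a := -π) (b := π) (ff l k) hs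
  have h2 : ∫ φ in (-π)..π, ff l k (√(l k) * φ) = 2 * π * pp l k (l k) := by
    have e : ∀ φ, ff l k (√(l k) * φ) = ∑ j ∈ Finset.range (MM l k), pp l k j * cos ((((j : ℤ) - (l k : ℤ) : ℤ) : ℝ) * φ) := by
      intro φ
      unfold ff
      refine Finset.sum_congr rfl fun j _ => ?_
      congr 2
      unfold xx
      push_cast
      field_simp
    simp_rw [e]
    rw [intervalIntegral.integral_finset_sum]
    · simp_rw [intervalIntegral.integral_const_mul, int_cos]
      rw [Finset.sum_eq_single (l k)]
      · simp; ring
      · intro j _ hj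
        rw [if_neg (by omega), mul_zero]
      · intro h
        exact absurd (Finset.mem_range.2 (by unfold MM; omega)) h
    · intro j _
      apply Continuous.intervalIntegrable
      fun_prop
  rw [h2, smul_eq_mul, mul_neg] at h1
  rw [eq_inv_mul_iff_mul_eq₀ hs] at h1
  rw [← h1]; ring

lemma pp_lim {l : ℕ → ℕ} (hpos : ∀ k, 0 < l k) (hinf : Tendsto l atTop atTop)
    (hsmall : Tendsto (fun k : ℕ => (l k : ℝ) / Real.sqrt k) atTop (𝓝 0)) :
    Tendsto (fun k => 2 * π * √(l k) * pp l k (l k)) atTop (𝓝 (√π)) := by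
  have hg := integral_gaussian 1
  rw [div_one] at hg
  rw [← hg]
  have : ∀ k, 2 * π * √(l k) * pp l k (l k) = ∫ x, Set.indicator (Set.Ioc (-(√(l k) * π)) (√(l k) * π)) (ff l k) x := by
    intro k
    rw [MeasureTheory.integral_indicator measurableSet_Ioc, ← ff_int hpos, intervalIntegral.integral_of_le]
    have : 0 ≤ √(l k) * π := by positivity
    linarith
  simp_rw [this]
  refine MeasureTheory.tendsto_integral_filter_of_dominated_convergence (fun x => 8 * exp 1 * exp (- (1 / 40) * x ^ 2)) ?_ ?_ ?_ ?_
  · refine Eventually.of_forall fun k => ?_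
    have : Continuous (ff l k) := by unfold ff; fun_prop
    exact (this.measurable.indicator measurableSet_Ioc).aestronglyMeasurable
  · filter_upwards [ff_dom hpos hinf hsmall] with k hk
    refine Eventually.of_forall fun x => ?_
    by_cases hx : x ∈ Set.Ioc (-(√(l k) * π)) (√(l k) * π)
    · rw [Set.indicator_of_mem hx]
      exact hk x (abs_le.2 ⟨hx.1.le, hx.2⟩)
    · rw [Set.indicator_of_notMem hx, norm_zero]
      positivity
  · exact (integrable_exp_neg_mul_sq (by norm_num)).const_mul _
  · refine Eventually.of_forall fun x => ?_
    have h := cos_lim hpos hinf hsmall x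
    have e : exp (-1 * x ^ 2) = exp (- x ^ 2) := by congr 1; ring
    rw [e]
    refine h.congr' ?_
    have hi : Tendsto (fun k => √(l k : ℝ) * π) atTop atTop := (sqrt_lim hinf).atTop_mul_const pi_pos
    filter_upwards [hi.eventually (eventually_gt_atTop |x|)] with k hk
    rw [Set.indicator_of_mem]
    have := abs_lt.1 hk
    exact ⟨this.1, this.2.le⟩

theorem main (l : ℕ → ℕ) (hpos : ∀ k, 0 < l k)
    (hinf : Tendsto l atTop atTop)
    (hsmall : Tendsto (fun k : ℕ => (l k : ℝ) / Real.sqrt k) atTop (𝓝 0)) :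
    Tendsto (fun k : ℕ =>
        (connGraphCount k (l k) : ℝ) /
          ((k : ℝ) ^ ((k : ℝ) - 2) * (k : ℝ) ^ (3 * (l k : ℝ) / 2) *
            (Real.exp 1 / (12 * (l k : ℝ))) ^ ((l k : ℝ) / 2) *
            (3 / Real.sqrt Real.pi) * Real.sqrt (l k)))
      atTop (𝓝 1) := by
  have h1 := pp_lim hpos hinf hsmall
  have h2 := P_asymp hpos hinf hsmall atTop id (fun _ => 1) tendsto_id (Eventually.of_forall fun _ => by norm_num)
    (Eventually.of_forall fun _ => by norm_num)
  have h3 := (h1.mul h2).div_const (√π)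
  rw [mul_one, div_self (by positivity)] at h3
  refine h3.congr' ?_
  filter_upwards [eventually_ge_atTop 2, h2.eventually (lt_mem_nhds (by norm_num : (0 : ℝ) < 1))] with k hk hPk
  have hkp : (0 : ℝ) < k := by exact_mod_cast (by omega : 0 < k)
  have hl : (0 : ℝ) < l k := by exact_mod_cast hpos k
  have hr := rr_pos l hpos k (by omega)
  simp only [id, mul_one] at hPk ⊢
  have hP : PP k (rr l k) ≠ 0 := by
    intro h; rw [h] at hPk; simp at hPk
  have hT := TT_rr l k (by omega) 1
  rw [mul_one] at hT
  have hrl : rr l k ^ l k = (12 * (l k : ℝ)) ^ ((l k : ℝ) / 2) / (k : ℝ) ^ (3 * (l k : ℝ) / 2) := by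
    have e : rr l k = (12 * (l k : ℝ)) ^ (1 / 2 : ℝ) / (k : ℝ) ^ (3 / 2 : ℝ) := by
      unfold rr
      rw [Real.sqrt_eq_rpow, Real.sqrt_eq_rpow]
      congr 1
      rw [show (3 / 2 : ℝ) = 1 + 1 / 2 by norm_num, Real.rpow_add hkp, Real.rpow_one]
    rw [e, ← Real.rpow_natCast, Real.div_rpow (by positivity) (by positivity), ← Real.rpow_mul (by positivity),
      ← Real.rpow_mul (by positivity)]
    congr 2 <;> ring
  have hE : (Real.exp 1 / (12 * (l k : ℝ))) ^ ((l k : ℝ) / 2) = exp (l k / 2) / (12 * (l k : ℝ)) ^ ((l k : ℝ) / 2) := by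
    rw [Real.div_rpow (by positivity) (by positivity), ← Real.exp_mul, one_mul]
  have hkk : (k : ℝ) ^ (k - 1) = (k : ℝ) ^ ((k : ℝ) - 2) * k := by
    rw [← Real.rpow_natCast, ← Real.rpow_add_one hkp.ne']
    congr 1
    rw [Nat.cast_sub (by omega)]
    push_cast; ring
  rw [pp, hT, hrl, hE, hkk]
  have hss : √(l k : ℝ) ^ 2 = l k := Real.sq_sqrt hl.le
  have hpi : √π ^ 2 = π := Real.sq_sqrt pi_pos.le
  have a1 : (12 * (l k : ℝ)) ^ ((l k : ℝ) / 2) ≠ 0 := by positivity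
  have a2 : (k : ℝ) ^ (3 * (l k : ℝ) / 2) ≠ 0 := by positivity
  have a3 : (k : ℝ) ^ ((k : ℝ) - 2) ≠ 0 := by positivity
  have a4 : √(l k : ℝ) ≠ 0 := by positivity
  have a5 : √π ≠ 0 := by positivity
  rw [one_pow, mul_one, mul_one]
  generalize (12 * (l k : ℝ)) ^ ((l k : ℝ) / 2) = A at *
  generalize (k : ℝ) ^ (3 * (l k : ℝ) / 2) = B at *
  generalize (k : ℝ) ^ ((k : ℝ) - 2) = D at *
  have a6 : exp ((l k : ℝ) / 2) ≠ 0 := (exp_pos _).ne'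
  generalize exp ((l k : ℝ) / 2) = E at *
  field_simp
  rw [hpi, hss]
  ring

end CAsymp

/-- `l` small: if `l = l(k)` is a sequence of positive integers with
`l → ∞` and `l = o(k^{1/2})`, then, as `k → ∞`,
`C(k,l) ∼ k^{k-2} k^{3l/2} (e/(12l))^{l/2} (3/√π) l^{1/2}`. -/
theorem C_asymp_small (l : ℕ → ℕ) (hpos : ∀ k, 0 < l k)
    (hinf : Tendsto l atTop atTop)
    (hsmall : Tendsto (fun k : ℕ => (l k : ℝ) / Real.sqrt k) atTop (𝓝 0)) :
    Tendsto (fun k : ℕ =>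
        (connGraphCount k (l k) : ℝ) /
          ((k : ℝ) ^ ((k : ℝ) - 2) * (k : ℝ) ^ (3 * (l k : ℝ) / 2) *
            (Real.exp 1 / (12 * (l k : ℝ))) ^ ((l k : ℝ) / 2) *
            (3 / Real.sqrt Real.pi) * Real.sqrt (l k)))
      atTop (𝓝 1) :=
  CAsymp.main l hpos hinf hsmall
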